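/- arXiv:0705.2871 — 6 statements merged into one kernel-verified Lean document; each statement's English description precedes it below -/
import Mathlib

section
/- Let a : (0,∞) → ℝ satisfy ∫₀^R a(r)² r dr < ∞ for every R > 0 and a(r) → +∞ as r → ∞, and suppose a is continuously differentiable for all sufficiently large r with b(r) := a'(r) → 0 as r → ∞. Then for every n ≥ 1 and every integer m, lim_{k → +∞} μ_{n,m}(−k) = 0. -/
open MeasureTheory Set Filter

noncomputable section

/-- A radial test function: smooth, compactly supported, with support in `(0,∞)`. -/
def IsTestR (g : ℝ → ℝ) : Prop :=
  ContDiff ℝ (⊤ : ℕ∞) g ∧ HasCompactSupport g ∧ tsupport g ⊆ Set.Ioi 0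

/-- The quadratic form
`l_m[g;p] = ∫₀^∞ (|g'|² + (m² - 1/4) r⁻² |g|² + (a(r)+p)² |g|²) dr`
of the fiber operator `L_m(p)` in `L²((0,∞))`. -/
def lForm (a : ℝ → ℝ) (m : ℤ) (p : ℝ) (g : ℝ → ℝ) : ℝ :=
  ∫ r in Set.Ioi (0:ℝ),
    ((deriv g r) ^ 2 + ((m : ℝ) ^ 2 - 1/4) * r⁻¹ ^ 2 * (g r) ^ 2
      + (a r + p) ^ 2 * (g r) ^ 2)

/-- The `n`-th min-max value `μ_{n,m}(p)`: the infimum, over `n`-dimensional subspaces `V` of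
`C_c^∞((0,∞))`, of the supremum of the Rayleigh quotient `l_m[g;p]/‖g‖²` over nonzero `g ∈ V`. -/
def muRadial (a : ℝ → ℝ) (m : ℤ) (n : ℕ) (p : ℝ) : ℝ :=
  sInf {S : ℝ | ∃ f : Fin n → (ℝ → ℝ), (∀ i, IsTestR (f i)) ∧ LinearIndependent ℝ f ∧
    S = sSup {R : ℝ | ∃ g : ℝ → ℝ, g ∈ Submodule.span ℝ (Set.range f) ∧ g ≠ 0 ∧
      R = lForm a m p g / ∫ r in Set.Ioi (0:ℝ), (g r) ^ 2}}

lemma isTestR_of_mem_span {n : ℕ} {f : Fin n → (ℝ → ℝ)} (hf : ∀ i, IsTestR (f i)) {g : ℝ → ℝ}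
    (hg : g ∈ Submodule.span ℝ (Set.range f)) : IsTestR g := by
  induction hg using Submodule.span_induction with
  | mem x hx => obtain ⟨i, rfl⟩ := hx; exact hf i
  | zero =>
    refine ⟨contDiff_const, HasCompactSupport.zero, ?_⟩
    have : tsupport (0 : ℝ → ℝ) = ∅ := tsupport_eq_empty_iff.mpr rfl
    rw [this]; exact empty_subset _
  | add x y _ _ hx hy =>
    exact ⟨hx.1.add hy.1, hx.2.1.add hy.2.1,
      (tsupport_add x y).trans (union_subset hx.2.2 hy.2.2)⟩
  | smul c x _ hx =>
    refine ⟨hx.1.const_smul c, hx.2.1.smul_left (f := fun _ => c), ?_⟩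
    exact (tsupport_smul_subset_right (fun _ => c) x).trans hx.2.2

lemma IsTestR.zero_of_nonpos {g : ℝ → ℝ} (hg : IsTestR g) {r : ℝ} (hr : r ≤ 0) : g r = 0 := by
  by_contra h
  exact absurd (hg.2.2 (subset_tsupport g h)) (by simpa using hr)

lemma IsTestR.deriv_zero_of_nonpos {g : ℝ → ℝ} (hg : IsTestR g) {r : ℝ} (hr : r ≤ 0) :
    deriv g r = 0 := by
  by_contra h
  exact absurd (hg.2.2 (support_deriv_subset h)) (by simpa using hr)

lemma IsTestR.exists_factor {g : ℝ → ℝ} (hg : IsTestR g) :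
    ∃ q : ℝ → ℝ, IsTestR q ∧ ∀ r, g r = r * q r := by
  have hsub : tsupport (fun r => g r * r⁻¹) ⊆ tsupport g := tsupport_mul_subset_left
  refine ⟨fun r => g r * r⁻¹, ⟨?_, hg.2.1.mul_right, hsub.trans hg.2.2⟩, ?_⟩
  · rw [contDiff_iff_contDiffAt]
    intro r
    by_cases hr : r ∈ tsupport g
    · have h0 : r ≠ 0 := ne_of_gt (hg.2.2 hr)
      exact hg.1.contDiffAt.mul (contDiffAt_inv ℝ h0)
    · have : (fun r => g r * r⁻¹) =ᶠ[nhds r] fun _ => 0 := by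
        have := notMem_tsupport_iff_eventuallyEq.mp hr
        filter_upwards [this] with x hx
        simp [hx]
      exact contDiffAt_const.congr_of_eventuallyEq this
  · intro r
    rcases eq_or_ne r 0 with h | h
    · subst h; simp [hg.zero_of_nonpos le_rfl]
    · field_simp

lemma IsTestR.hardy {g : ℝ → ℝ} (hg : IsTestR g) :
    IntegrableOn (fun r => (deriv g r) ^ 2 + (-1/4) * r⁻¹ ^ 2 * (g r) ^ 2) (Ioi 0) ∧
    0 ≤ ∫ r in Ioi (0:ℝ), ((deriv g r) ^ 2 + (-1/4) * r⁻¹ ^ 2 * (g r) ^ 2) := by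
  obtain ⟨q, hq, hgq⟩ := hg.exists_factor
  have hqd : ∀ r, HasDerivAt q (deriv q r) r := fun r =>
    ((hq.1.differentiable (by simp)) r).hasDerivAt
  have hgd : ∀ r, deriv g r = q r + r * deriv q r := by
    intro r
    have : g = fun r => r * q r := funext hgq
    have h2 : HasDerivAt g (1 * q r + r * deriv q r) r := by
      rw [this]; exact (hasDerivAt_id r).mul (hqd r)
    rw [h2.deriv, one_mul]
  have hcq : Continuous q := hq.1.continuous
  have hcq' : Continuous (deriv q) := hq.1.continuous_deriv (by simp)
  -- three functions
  have hh : ∀ r, HasDerivAt (fun r => r * q r ^ 2 / 2) (q r ^ 2 / 2 + r * q r * deriv q r) r := by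
    intro r
    have := ((hasDerivAt_id r).mul ((hqd r).pow 2)).div_const 2
    refine this.congr_deriv ?_
    simp; ring
  have hcs1 : HasCompactSupport (fun r => q r ^ 2 / 2 + r * q r * deriv q r) := by
    refine hq.2.1.mono' (fun r hr => ?_)
    by_contra h
    have := image_eq_zero_of_notMem_tsupport h
    simp [this] at hr
  have hcs2 : HasCompactSupport (fun r => (r * deriv q r + q r / 2) ^ 2) := by
    refine hq.2.1.mono' (fun r hr => ?_)
    by_contra h
    have h1 := image_eq_zero_of_notMem_tsupport h
    have h2 : deriv q r = 0 := by
      by_contra h3; exact h (support_deriv_subset h3)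
    simp [h1, h2] at hr
  have hcs3 : HasCompactSupport (fun r => r * q r ^ 2 / 2) := by
    refine hq.2.1.mono' (fun r hr => ?_)
    by_contra h
    have := image_eq_zero_of_notMem_tsupport h
    simp [this] at hr
  have hi1 : Integrable (fun r => q r ^ 2 / 2 + r * q r * deriv q r) :=
    Continuous.integrable_of_hasCompactSupport (by fun_prop) hcs1
  have hi2 : Integrable (fun r => (r * deriv q r + q r / 2) ^ 2) :=
    Continuous.integrable_of_hasCompactSupport (by fun_prop) hcs2
  have hi3 : Integrable (fun r => r * q r ^ 2 / 2) :=
    Continuous.integrable_of_hasCompactSupport (by fun_prop) hcs3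
  have hz := integral_eq_zero_of_hasDerivAt_of_integrable hh hi1 hi3
  have heq : EqOn (fun r => (r * deriv q r + q r / 2) ^ 2 + (q r ^ 2 / 2 + r * q r * deriv q r))
      (fun r => (deriv g r) ^ 2 + (-1/4) * r⁻¹ ^ 2 * (g r) ^ 2) (Ioi 0) := by
    intro r hr
    have h0 : r ≠ 0 := ne_of_gt hr
    simp only [hgd, hgq]
    field_simp
    ring
  refine ⟨(hi2.add hi1).integrableOn.congr_fun heq measurableSet_Ioi, ?_⟩
  rw [← setIntegral_congr_fun measurableSet_Ioi heq,
    integral_add hi2.integrableOn hi1.integrableOn,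
    setIntegral_eq_integral_of_forall_compl_eq_zero (f := fun r => q r ^ 2 / 2 + r * q r * deriv q r), hz, add_zero]
  · exact integral_nonneg fun r => sq_nonneg _
  · intro r hr
    simp [hq.zero_of_nonpos (not_lt.mp hr)]

lemma lForm_nonneg (a : ℝ → ℝ) (m : ℤ) (p : ℝ) {g : ℝ → ℝ} (hg : IsTestR g) :
    0 ≤ lForm a m p g := by
  unfold lForm
  by_cases hi : IntegrableOn (fun r => (deriv g r) ^ 2 + ((m : ℝ) ^ 2 - 1/4) * r⁻¹ ^ 2 * (g r) ^ 2
      + (a r + p) ^ 2 * (g r) ^ 2) (Ioi 0)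
  · refine hg.hardy.2.trans (setIntegral_mono hg.hardy.1 hi fun r => ?_)
    have h1 : 0 ≤ (m:ℝ)^2 * (r⁻¹ ^ 2 * (g r) ^ 2) := by positivity
    have h2 : 0 ≤ (a r + p) ^ 2 * (g r) ^ 2 := by positivity
    simp only
    linarith
  · rw [integral_undef hi]

lemma muSet_nonneg (a : ℝ → ℝ) (m : ℤ) (n : ℕ) (p : ℝ) :
    ∀ S ∈ {S : ℝ | ∃ f : Fin n → (ℝ → ℝ), (∀ i, IsTestR (f i)) ∧ LinearIndependent ℝ f ∧
    S = sSup {R : ℝ | ∃ g : ℝ → ℝ, g ∈ Submodule.span ℝ (Set.range f) ∧ g ≠ 0 ∧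
      R = lForm a m p g / ∫ r in Set.Ioi (0:ℝ), (g r) ^ 2}}, 0 ≤ S := by
  rintro S ⟨f, hf, -, rfl⟩
  refine Real.sSup_nonneg ?_
  rintro R ⟨g, hg, -, rfl⟩
  exact div_nonneg (lForm_nonneg a m p (isTestR_of_mem_span hf hg))
    (integral_nonneg fun r => sq_nonneg _)

lemma exists_profile {ε : ℝ} (hε : 0 < ε) : ∃ (Ψ : ℝ → ℝ) (M : ℝ), 0 < M ∧
    ContDiff ℝ (⊤ : ℕ∞) Ψ ∧ HasCompactSupport Ψ ∧ tsupport Ψ ⊆ Metric.ball 0 M ∧ Ψ 0 ≠ 0 ∧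
    ∫ x, (deriv Ψ x) ^ 2 ≤ ε * ∫ x, (Ψ x) ^ 2 := by
  let φ : ContDiffBump (0:ℝ) := default
  have hφ : ContDiff ℝ (⊤ : ℕ∞) φ := φ.contDiff
  have hφ0 : φ 0 = 1 := φ.one_of_mem_closedBall (Metric.mem_closedBall_self φ.rIn_pos.le)
  set A := ∫ x, (deriv φ x) ^ 2
  set B := ∫ x, (φ x) ^ 2 with hB
  have hBpos : 0 < B := by
    have hc : Continuous fun x => (φ x)^2 := by have := hφ.continuous; fun_prop
    refine hc.integral_pos_of_hasCompactSupport_nonneg_nonzero ?_ (fun x => sq_nonneg _) (x := 0) ?_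
    · refine φ.hasCompactSupport.mono (fun r hr => ?_)
      intro h; simp [h] at hr
    · simp [hφ0]
  set L := max 1 (A / (ε * B))
  have hL1 : 1 ≤ L := le_max_left _ _
  have hL0 : 0 < L := by linarith
  have hL2 : A ≤ L * (ε * B) := (div_le_iff₀ (by positivity)).mp (le_max_right _ _)
  have hcs : HasCompactSupport (fun x => φ (x / L)) := by
    have := φ.hasCompactSupport.comp_homeomorph (Homeomorph.mulRight₀ L⁻¹ (by positivity))
    simpa [Function.comp_def, div_eq_mul_inv] using this
  obtain ⟨M, hM0, hM⟩ := hcs.isCompact.isBounded.subset_ball_lt 0 0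
  refine ⟨fun x => φ (x / L), M, hM0, hφ.comp (contDiff_id.div_const L), hcs, hM, by simp [hφ0], ?_⟩
  have hd : ∀ x, deriv (fun x => φ (x / L)) x = L⁻¹ * deriv φ (x / L) := by
    intro x
    have h1 : HasDerivAt φ (deriv φ (x/L)) (x/L) := (hφ.differentiable (by simp) _).hasDerivAt
    have := h1.comp x ((hasDerivAt_id x).div_const L)
    rw [show (fun x => φ (x / L)) = φ ∘ fun x => id x / L from rfl, this.deriv]
    simp [mul_comm]
  simp_rw [hd, mul_pow]
  rw [integral_const_mul, Measure.integral_comp_div (fun x => (deriv φ x)^2) L,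
    Measure.integral_comp_div (fun x => (φ x)^2) L, abs_of_pos hL0]
  simp only [smul_eq_mul]
  change L⁻¹ ^ 2 * (L * A) ≤ ε * (L * B)
  have : L⁻¹ ^ 2 * (L * A) = A / L := by field_simp
  rw [this, div_le_iff₀ hL0]
  have : L * (ε * B) * 1 ≤ L * (ε * B) * L := by gcongr
  nlinarith

lemma sq_sum_orth {n : ℕ} (c u : Fin n → ℝ) (hu : ∀ i j, i ≠ j → u i * u j = 0) :
    (∑ i, c i * u i) ^ 2 = ∑ i, c i ^ 2 * u i ^ 2 := by
  rw [sq, Finset.sum_mul_sum]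
  refine Finset.sum_congr rfl fun i _ => ?_
  rw [Finset.sum_eq_single i]
  · ring
  · intro j _ hj
    have := hu i j hj.symm
    linear_combination c i * c j * this
  · simp

lemma key_upper (a : ℝ → ℝ) (m : ℤ) (n : ℕ) (k : ℝ) {ε M s : ℝ} (hε : 0 < ε) (hM : 0 < M)
    (hs : 0 < s) {Ψ : ℝ → ℝ} (hΨ : ContDiff ℝ (⊤ : ℕ∞) Ψ) (hΨc : HasCompactSupport Ψ)
    (hΨM : tsupport Ψ ⊆ Metric.ball 0 M) (hΨ0 : Ψ 0 ≠ 0)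
    (hΨi : ∫ x, (deriv Ψ x) ^ 2 ≤ ε * ∫ x, (Ψ x) ^ 2)
    (hpot : ∀ r ∈ Icc s (s + 2 * M * (n + 1)),
      ((m : ℝ) ^ 2 - 1/4) * r⁻¹ ^ 2 + (a r + -k) ^ 2 ≤ ε) :
    muRadial a m n (-k) ≤ 2 * ε := by
  let z : Fin n → ℝ := fun i => s + 2 * M * ((i : ℝ) + 1)
  let f : Fin n → ℝ → ℝ := fun i r => Ψ (r - z i)
  have hΨz : ∀ x, M ≤ |x| → Ψ x = 0 := by
    intro x hx; by_contra h
    have := hΨM (subset_tsupport Ψ h)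
    simp at this; linarith
  have hΨz' : ∀ x, M ≤ |x| → deriv Ψ x = 0 := by
    intro x hx; by_contra h
    have := hΨM (support_deriv_subset h)
    simp at this; linarith
  have hsep : ∀ i j, i ≠ j → ∀ r : ℝ, M ≤ |r - z i| ∨ M ≤ |r - z j| := by
    intro i j hij r
    by_contra! h
    have h1 : |z i - z j| < 2 * M := by
      have := abs_sub_le (z i) r (z j)
      rw [abs_sub_comm (z i) r] at this
      linarith
    have h2 : z i - z j = 2 * M * ((i:ℝ) - j) := by simp only [z]; ring
    rw [h2, abs_mul, abs_of_pos (by positivity : 0 < 2 * M)] at h1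
    have h3 : (1:ℝ) ≤ |(i:ℝ) - j| := by
      have : (1:ℤ) ≤ |(i:ℤ) - j| := Int.one_le_abs (by
        intro h; apply hij; ext; omega)
      exact_mod_cast this
    nlinarith
  have hd : ∀ i r, HasDerivAt (f i) (deriv Ψ (r - z i)) r := by
    intro i r
    have h1 : HasDerivAt Ψ (deriv Ψ (r - z i)) (r - z i) :=
      (hΨ.differentiable (by simp) _).hasDerivAt
    have h2 := h1.comp r ((hasDerivAt_id r).sub_const (z i))
    rw [mul_one] at h2
    exact h2
  have hfc : ∀ i, ContDiff ℝ (⊤ : ℕ∞) (f i) := fun i => hΨ.comp (contDiff_id.sub contDiff_const)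
  have hrange : ∀ i r, |r - z i| ≤ M → r ∈ Icc s (s + 2 * M * (n + 1)) := by
    intro i r hr
    rw [abs_le] at hr
    simp only [z] at hr
    have h1 : (0:ℝ) ≤ i := by positivity
    have h2 : (i:ℝ) + 1 ≤ n := by exact_mod_cast i.2
    constructor
    · nlinarith [mul_nonneg hM.le h1]
    · nlinarith [mul_le_mul_of_nonneg_left h2 hM.le]
  have hsupp : ∀ i, Function.support (f i) ⊆ Icc s (s + 2 * M * (n + 1)) := by
    intro i r hr
    by_contra h
    apply hr
    apply hΨz
    by_contra h'
    exact h (hrange i r (by linarith))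
  have hts : ∀ i, tsupport (f i) ⊆ Icc s (s + 2 * M * (n + 1)) := fun i =>
    closure_minimal (hsupp i) isClosed_Icc
  have hf : ∀ i, IsTestR (f i) := fun i => ⟨hfc i,
    isCompact_Icc.of_isClosed_subset (isClosed_tsupport _) (hts i),
    fun r hr => lt_of_lt_of_le hs (hts i hr).1⟩
  have hli : LinearIndependent ℝ f := by
    rw [Fintype.linearIndependent_iff]
    intro c hc i
    have := congrFun hc (z i)
    simp only [Finset.sum_apply, Pi.smul_apply, smul_eq_mul, Pi.zero_apply] at this
    rw [Finset.sum_eq_single i] at this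
    · simpa [f, hΨ0] using this
    · intro j _ hj
      rcases hsep j i hj (z i) with h | h
      · simp [f, hΨz _ h]
      · simp at h; linarith
    · simp
  refine (csInf_le ⟨0, muSet_nonneg a m n (-k)⟩ ⟨f, hf, hli, rfl⟩).trans ?_
  refine Real.sSup_le ?_ (by positivity)
  rintro R ⟨g, hg, -, rfl⟩
  have hgt := isTestR_of_mem_span hf hg
  refine div_le_of_le_mul₀ (integral_nonneg fun r => sq_nonneg _) (by positivity) ?_
  obtain ⟨c, rfl⟩ := (Submodule.mem_span_range_iff_exists_fun ℝ).mp hg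
  set g : ℝ → ℝ := ∑ i, c i • f i with hgdef
  have hgr : ∀ r, g r = ∑ i, c i * Ψ (r - z i) := by
    intro r; simp [hgdef, f]
  have hgr' : ∀ r, deriv g r = ∑ i, c i * deriv Ψ (r - z i) := by
    intro r
    have : HasDerivAt g (∑ i, c i • deriv Ψ (r - z i)) r :=
      HasDerivAt.sum fun i _ => (hd i r).const_smul (c i)
    rw [this.deriv]; simp
  have hg2 : ∀ r, g r ^ 2 = ∑ i, c i ^ 2 * Ψ (r - z i) ^ 2 := by
    intro r
    rw [hgr]
    refine sq_sum_orth c (fun i => Ψ (r - z i)) fun i j hij => ?_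
    rcases hsep i j hij r with h | h <;> simp [hΨz _ h]
  have hg2' : ∀ r, deriv g r ^ 2 = ∑ i, c i ^ 2 * deriv Ψ (r - z i) ^ 2 := by
    intro r
    rw [hgr']
    refine sq_sum_orth c (fun i => deriv Ψ (r - z i)) fun i j hij => ?_
    rcases hsep i j hij r with h | h <;> simp [hΨz' _ h]
  have hΨcont : Continuous Ψ := hΨ.continuous
  have hΨcont' : Continuous (deriv Ψ) := hΨ.continuous_deriv (by simp)
  have hI : Integrable (fun x => Ψ x ^ 2) :=
    Continuous.integrable_of_hasCompactSupport (by fun_prop)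
      (hΨc.mono fun r hr h => by simp [h] at hr)
  have hI' : Integrable (fun x => deriv Ψ x ^ 2) :=
    Continuous.integrable_of_hasCompactSupport (by fun_prop)
      (hΨc.deriv.mono fun r hr h => by simp [h] at hr)
  have hgi : Integrable (fun r => g r ^ 2) := by
    simp_rw [hg2]
    exact integrable_finsetSum _ fun i _ => (hI.comp_sub_right (z i)).const_mul _
  have hgi' : Integrable (fun r => deriv g r ^ 2) := by
    simp_rw [hg2']
    exact integrable_finsetSum _ fun i _ => (hI'.comp_sub_right (z i)).const_mul _
  have e1 : ∫ r in Ioi (0:ℝ), g r ^ 2 = ∫ r, g r ^ 2 :=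
    setIntegral_eq_integral_of_forall_compl_eq_zero fun r hr => by
      simp [hgt.zero_of_nonpos (not_lt.mp hr)]
  have e1' : ∫ r in Ioi (0:ℝ), deriv g r ^ 2 = ∫ r, deriv g r ^ 2 :=
    setIntegral_eq_integral_of_forall_compl_eq_zero fun r hr => by
      simp [hgt.deriv_zero_of_nonpos (not_lt.mp hr)]
  have e2 : ∫ r, g r ^ 2 = ∑ i, c i ^ 2 * ∫ x, Ψ x ^ 2 := by
    simp_rw [hg2]
    rw [integral_finsetSum _ fun i _ => (hI.comp_sub_right (z i)).const_mul _]
    refine Finset.sum_congr rfl fun i _ => ?_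
    rw [integral_const_mul, integral_sub_right_eq_self (fun x => Ψ x ^ 2)]
  have e2' : ∫ r, deriv g r ^ 2 = ∑ i, c i ^ 2 * ∫ x, deriv Ψ x ^ 2 := by
    simp_rw [hg2']
    rw [integral_finsetSum _ fun i _ => (hI'.comp_sub_right (z i)).const_mul _]
    refine Finset.sum_congr rfl fun i _ => ?_
    rw [integral_const_mul, integral_sub_right_eq_self (fun x => deriv Ψ x ^ 2)]
  have e3 : ∫ r, deriv g r ^ 2 ≤ ε * ∫ r, g r ^ 2 := by
    rw [e2, e2', Finset.mul_sum]
    refine Finset.sum_le_sum fun i _ => ?_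
    nlinarith [mul_le_mul_of_nonneg_left hΨi (sq_nonneg (c i))]
  have hnn : 0 ≤ ∫ r, g r ^ 2 := integral_nonneg fun r => sq_nonneg _
  unfold lForm
  rw [e1]
  by_cases hi : IntegrableOn (fun r => (deriv g r) ^ 2 + ((m : ℝ) ^ 2 - 1/4) * r⁻¹ ^ 2 * (g r) ^ 2
      + (a r + -k) ^ 2 * (g r) ^ 2) (Ioi 0)
  · have hmono : ∫ r in Ioi (0:ℝ), ((deriv g r) ^ 2 + ((m : ℝ) ^ 2 - 1/4) * r⁻¹ ^ 2 * (g r) ^ 2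
      + (a r + -k) ^ 2 * (g r) ^ 2) ≤ ∫ r in Ioi (0:ℝ), (deriv g r ^ 2 + ε * g r ^ 2) := by
      refine setIntegral_mono hi (hgi'.add (hgi.const_mul ε)).integrableOn fun r => ?_
      simp only
      by_cases hr : r ∈ Icc s (s + 2 * M * (n + 1))
      · nlinarith [mul_le_mul_of_nonneg_right (hpot r hr) (sq_nonneg (g r))]
      · have : g r = 0 := by
          rw [hgr]
          refine Finset.sum_eq_zero fun i _ => ?_
          have : f i r = 0 := by
            by_contra h; exact hr (hsupp i h)
          simp only [f] at this
          simp [this]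
        simp [this]
    refine hmono.trans ?_
    rw [integral_add hgi'.integrableOn (hgi.const_mul ε).integrableOn, integral_const_mul, e1, e1']
    linarith
  · rw [integral_undef hi]; positivity

/-- Proposition 3.5 of the paper: if moreover `a` is continuously differentiable for large `r`
with `b = a' → 0` as `r → ∞`, then `μ_{n,m}(-k) → 0` as `k → +∞` for all `n ≥ 1`, `m ∈ ℤ`. -/
theorem muRadial_tendsto_zero (a b : ℝ → ℝ)
    (ha : ∀ R > (0:ℝ), IntegrableOn (fun r => (a r) ^ 2 * r) (Set.Ioc 0 R))
    (hainf : Tendsto a atTop atTop)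
    (hab : ∃ r₁ > (0:ℝ), (∀ r ≥ r₁, HasDerivAt a (b r) r) ∧ ContinuousOn b (Set.Ici r₁))
    (hb0 : Tendsto b atTop (nhds 0)) :
    ∀ n : ℕ, 1 ≤ n → ∀ m : ℤ,
      Tendsto (fun k : ℝ => muRadial a m n (-k)) atTop (nhds 0) := by
  intro n hn m
  obtain ⟨r₁, hr₁, hder, -⟩ := hab
  rw [Metric.tendsto_nhds]
  intro ε' hε'
  set ε := ε' / 4 with hεdef
  have hε : 0 < ε := by positivity
  obtain ⟨Ψ, M, hM, hΨ, hΨc, hΨM, hΨ0, hΨi⟩ := exists_profile hε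
  set T := 2 * M * ((n:ℝ) + 1) with hT
  have hTpos : 0 < T := by positivity
  set δ := Real.sqrt (ε / 2) / T with hδ
  have hδpos : 0 < δ := by positivity
  have hδT : (δ * T) ^ 2 = ε / 2 := by
    rw [hδ, div_mul_cancel₀ _ hTpos.ne', Real.sq_sqrt (by positivity)]
  have hb1 : ∀ᶠ r in atTop, |b r| < δ := by
    have := Metric.tendsto_nhds.mp hb0 δ hδpos
    simpa using this
  have hm1 : ∀ᶠ r : ℝ in atTop, ((m : ℝ) ^ 2 - 1/4) * r⁻¹ ^ 2 < ε / 2 := by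
    have : Tendsto (fun r : ℝ => ((m : ℝ) ^ 2 - 1/4) * r⁻¹ ^ 2) atTop (nhds 0) := by
      have := (tendsto_inv_atTop_zero (𝕜 := ℝ)).pow 2 |>.const_mul ((m : ℝ) ^ 2 - 1/4)
      simpa using this
    exact this.eventually (gt_mem_nhds (by positivity))
  obtain ⟨R₀, hR₀⟩ := eventually_atTop.mp (hb1.and hm1)
  set R := max R₀ r₁
  filter_upwards [eventually_ge_atTop (a R)] with k hk
  have hcont : ContinuousOn a (Ici R) := fun r hr =>
    (hder r (le_trans (le_max_right _ _) hr)).continuousAt.continuousWithinAt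
  obtain ⟨R', hR'⟩ := ((hainf.eventually_ge_atTop k).and (eventually_ge_atTop R)).exists
  obtain ⟨s, hs, hsk⟩ : k ∈ a '' Icc R R' :=
    intermediate_value_Icc hR'.2 (hcont.mono Icc_subset_Ici_self) ⟨hk, hR'.1⟩
  have hsR : R ≤ s := hs.1
  have hspos : 0 < s := lt_of_lt_of_le hr₁ ((le_max_right _ _).trans hsR)
  have hup : muRadial a m n (-k) ≤ 2 * ε := by
    refine key_upper a m n k hε hM hspos hΨ hΨc hΨM hΨ0 hΨi fun r hr => ?_
    have hrR : ∀ x ∈ Icc s (s + T), R₀ ≤ x ∧ r₁ ≤ x := fun x hx =>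
      ⟨(le_max_left _ _).trans (hsR.trans hx.1), (le_max_right _ _).trans (hsR.trans hx.1)⟩
    have hmv := (convex_Icc s (s + T)).norm_image_sub_le_of_norm_hasDerivWithin_le (f := a) (f' := b)
      (C := δ) (fun x hx => (hder x (hrR x hx).2).hasDerivWithinAt)
      (fun x hx => (hR₀ x (hrR x hx).1).1.le) (left_mem_Icc.mpr (by linarith)) hr
    rw [hsk, Real.norm_eq_abs, Real.norm_eq_abs, abs_of_nonneg (sub_nonneg.mpr hr.1)] at hmv
    have h1 : |a r - k| ≤ δ * T := hmv.trans (by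
      have := hr.2; gcongr; linarith)
    have h2 : (a r + -k) ^ 2 ≤ ε / 2 := by
      rw [← hδT, ← sub_eq_add_neg, ← sq_abs]
      gcongr
    have h3 := (hR₀ r (hrR r hr).1).2
    linarith
  have hlow : 0 ≤ muRadial a m n (-k) := Real.sInf_nonneg (muSet_nonneg a m n (-k))
  rw [Real.dist_eq, sub_zero, abs_of_nonneg hlow]
  linarith
end
end

section
/- Let m ≥ 1 be an integer, r₀ > 0, and let q : (0, r₀) → ℝ be continuous with ∫₀^{r₀} r |q(r)| dr < ∞. Then there exists a twice continuously differentiable solution y of the equation −r⁻¹(r y'(r))' + m² r⁻² y(r) + q(r) y(r) = 0 on (0, r₀) such that y(r) = r^m + o(r^m) as r → 0, and there exists C > 0 with |y'(r)| ≤ C r^{m−1} for all r in a neighbourhood of 0. -/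
open MeasureTheory Set Filter

noncomputable section

lemma volterra_aux (r₀ : ℝ) (hr₀ : 0 < r₀) (h : ℝ → ℝ) (hc : ContinuousOn h (Ioo 0 r₀))
    (hi : Integrable h) (k : ℝ → ℝ → ℝ) (hkm : ∀ r, Measurable (k r))
    (hkb : ∀ r, ∀ s ∈ Ioo 0 r₀, |k r s| ≤ 1 / 2)
    (hk0 : ∀ r, ∀ s ∈ Ioo 0 r₀, r ≤ s → k r s = 0)
    (hkc : ∀ s ∈ Ioo 0 r₀, Continuous fun r => k r s) :
    ∃ u : ℝ → ℝ, Continuous u ∧ ∀ r ∈ Icc 0 r₀,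
      u r = 1 + ∫ s in Ioo 0 r₀, k r s * (h s * u s) := by
  set Q : ℝ → ℝ := fun r => ∫ s in (0:ℝ)..r, |h s| with hQ
  set M : ℝ := ∫ s, |h s| with hM
  have hia : Integrable fun s => |h s| := hi.abs
  have hQc : Continuous Q := intervalIntegral.continuous_primitive
    (fun a b => hia.intervalIntegrable) 0
  have hQ0 : ∀ r, 0 ≤ r → 0 ≤ Q r := fun r hr =>
    intervalIntegral.integral_nonneg hr (fun _ _ => abs_nonneg _)
  have hQM : ∀ r, 0 ≤ r → Q r ≤ M := by
    intro r hr
    simp only [hQ, hM]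
    rw [intervalIntegral.integral_of_le hr]
    exact setIntegral_le_integral hia (Eventually.of_forall fun _ => abs_nonneg _)
  have hQd : ∀ r ∈ Ioo 0 r₀, HasDerivAt Q |h r| r := by
    intro r hr
    exact intervalIntegral.integral_hasDerivAt_right hia.intervalIntegrable
      (hia.aestronglyMeasurable.stronglyMeasurableAtFilter)
      ((hc.continuousAt (isOpen_Ioo.mem_nhds hr)).abs)
  have hprim : ∀ r ∈ Icc 0 r₀, ∫ s in (0:ℝ)..r, |h s| * Real.exp (Q s) = Real.exp (Q r) - 1 := by
    intro r hr
    have := intervalIntegral.integral_eq_sub_of_hasDerivAt_of_le (f := fun s => Real.exp (Q s))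
      (f' := fun s => Real.exp (Q s) * |h s|) hr.1 (by fun_prop)
      (fun x hx => (hQd x ⟨hx.1, hx.2.trans_le hr.2⟩).exp)
      (hia.intervalIntegrable.continuousOn_mul (by fun_prop))
    have e : Q 0 = 0 := by simp [hQ]
    rw [e, Real.exp_zero] at this
    rw [← this]
    congr 1; ext s; ring
  set ρ : ℝ → ℝ := fun r => max 0 (min r r₀) with hρ
  have hρc : Continuous ρ := by fun_prop
  have hρm : ∀ r, ρ r ∈ Icc 0 r₀ := fun r => ⟨le_max_left _ _, max_le hr₀.le (min_le_right _ _)⟩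
  let F : BoundedContinuousFunction ℝ ℝ → ℝ → ℝ → ℝ := fun v r s =>
    k (ρ r) s * (h s * (Real.exp (Q s) * v s))
  have hFm : ∀ v r, AEStronglyMeasurable (F v r) (volume.restrict (Ioo 0 r₀)) := by
    intro v r
    refine (hkm _).aestronglyMeasurable.mul (hi.aestronglyMeasurable.restrict.mul ?_)
    exact (Continuous.aestronglyMeasurable (by fun_prop))
  have hFb : ∀ v r, ∀ s ∈ Ioo 0 r₀, ‖F v r s‖ ≤ |h s| * (Real.exp M * ‖v‖) := by
    intro v r s hs
    simp only [F, norm_mul, Real.norm_eq_abs, Real.abs_exp]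
    have h1 := hkb (ρ r) s hs
    have h2 : Real.exp (Q s) ≤ Real.exp M := Real.exp_le_exp.2 (hQM s hs.1.le)
    have h3 : |v s| ≤ ‖v‖ := v.norm_coe_le_norm s
    calc |k (ρ r) s| * (|h s| * (Real.exp (Q s) * |v s|))
        ≤ 1 * (|h s| * (Real.exp M * ‖v‖)) := by gcongr; linarith
      _ = _ := one_mul _
  have hbi : ∀ v : BoundedContinuousFunction ℝ ℝ,
      Integrable (fun s => |h s| * (Real.exp M * ‖v‖)) (volume.restrict (Ioo 0 r₀)) :=
    fun v => (hia.mul_const _).restrict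
  have hFb' : ∀ v r, ∀ᵐ s ∂(volume.restrict (Ioo 0 r₀)), ‖F v r s‖ ≤ |h s| * (Real.exp M * ‖v‖) :=
    fun v r => (ae_restrict_iff' measurableSet_Ioo).2 (Eventually.of_forall (hFb v r))
  have hFi : ∀ v r, Integrable (F v r) (volume.restrict (Ioo 0 r₀)) :=
    fun v r => (hbi v).mono' (hFm v r) (hFb' v r)
  have hIc : ∀ v, Continuous fun r => ∫ s in Ioo 0 r₀, F v r s := by
    intro v
    refine continuous_of_dominated (hFm v) (hFb' v) (hbi v) ?_
    refine (ae_restrict_iff' measurableSet_Ioo).2 (Eventually.of_forall fun s hs => ?_)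
    exact ((hkc s hs).comp hρc).mul continuous_const
  let T : BoundedContinuousFunction ℝ ℝ → BoundedContinuousFunction ℝ ℝ := fun v =>
    BoundedContinuousFunction.ofNormedAddCommGroup
      (fun r => Real.exp (-Q (ρ r)) * (1 + ∫ s in Ioo 0 r₀, F v r s))
      (by have := hIc v; fun_prop)
      (1 + ∫ s in Ioo 0 r₀, |h s| * (Real.exp M * ‖v‖))
      (by
        intro r
        rw [norm_mul, Real.norm_eq_abs, Real.abs_exp]
        have h1 : Real.exp (-Q (ρ r)) ≤ 1 := Real.exp_le_one_iff.2 (by linarith [hQ0 _ (hρm r).1])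
        have h2 := norm_integral_le_of_norm_le (hbi v) (hFb' v r)
        have h3 : ‖1 + ∫ s in Ioo 0 r₀, F v r s‖ ≤ 1 + ∫ s in Ioo 0 r₀, |h s| * (Real.exp M * ‖v‖) :=
          (norm_add_le _ _).trans (by rw [norm_one]; gcongr)
        calc _ ≤ 1 * (1 + ∫ s in Ioo 0 r₀, |h s| * (Real.exp M * ‖v‖)) := by gcongr
          _ = _ := one_mul _)
  have hT : ∀ v r, T v r = Real.exp (-Q (ρ r)) * (1 + ∫ s in Ioo 0 r₀, F v r s) := fun _ _ => rfl
  have hcon : ContractingWith (1/2) T := by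
    refine ⟨by rw [← NNReal.coe_lt_coe]; norm_num, LipschitzWith.of_dist_le_mul fun v w => ?_⟩
    have hd : 0 ≤ dist v w := dist_nonneg
    rw [BoundedContinuousFunction.dist_le (by positivity)]
    intro r
    rw [Real.dist_eq, hT, hT, ← mul_sub, add_sub_add_left_eq_sub, ← integral_sub (hFi v r) (hFi w r),
      abs_mul, Real.abs_exp]
    obtain ⟨ha, hb⟩ := hρm r
    have e1 : ∫ s in Ioo 0 r₀, (F v r s - F w r s) = ∫ s in (0:ℝ)..(ρ r), (F v r s - F w r s) := by
      rw [intervalIntegral.integral_of_le ha, integral_Ioc_eq_integral_Ioo]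
      refine (setIntegral_eq_of_subset_of_forall_sdiff_eq_zero measurableSet_Ioo
        (Ioo_subset_Ioo le_rfl hb) ?_)
      intro s hs
      have : ρ r ≤ s := by
        by_contra hh
        exact hs.2 ⟨hs.1.1, not_le.1 hh⟩
      simp [F, hk0 _ s hs.1 this]
    have e2 : |∫ s in (0:ℝ)..(ρ r), (F v r s - F w r s)| ≤
        ∫ s in (0:ℝ)..(ρ r), (1/2 * dist v w) * (|h s| * Real.exp (Q s)) := by
      rw [← Real.norm_eq_abs, intervalIntegral.integral_of_le ha, integral_Ioc_eq_integral_Ioo,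
        intervalIntegral.integral_of_le ha, integral_Ioc_eq_integral_Ioo]
      refine norm_integral_le_of_norm_le ?_ ?_
      · have := (hia.intervalIntegrable (a := 0) (b := ρ r)).mul_continuousOn
          (g := fun s => Real.exp (Q s)) (by fun_prop)
        exact (((intervalIntegrable_iff_integrableOn_Ioo_of_le ha).1 this).const_mul _)
      · refine (ae_restrict_iff' measurableSet_Ioo).2 (Eventually.of_forall fun s hs => ?_)
        have h1 := hkb (ρ r) s ⟨hs.1, hs.2.trans_le hb⟩
        have h3 : |v s - w s| ≤ dist v w := by
          rw [← Real.dist_eq]; exact BoundedContinuousFunction.dist_coe_le_dist s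
        have : F v r s - F w r s = k (ρ r) s * (v s - w s) * (h s * Real.exp (Q s)) := by
          simp only [F]; ring
        rw [this]
        simp only [norm_mul, Real.norm_eq_abs, Real.abs_exp]
        gcongr
    rw [intervalIntegral.integral_const_mul, hprim _ ⟨ha, hb⟩] at e2
    rw [e1]
    calc _ ≤ Real.exp (-Q (ρ r)) * (1/2 * dist v w * (Real.exp (Q (ρ r)) - 1)) := by gcongr
      _ = 1/2 * dist v w * (1 - Real.exp (-Q (ρ r))) := by
        rw [Real.exp_neg]; field_simp
      _ ≤ 1/2 * dist v w * 1 := by gcongr; linarith [Real.exp_pos (-Q (ρ r))]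
      _ = _ := by simp
  obtain ⟨v, hv⟩ : ∃ v, T v = v := ⟨_, hcon.fixedPoint_isFixedPt⟩
  refine ⟨fun s => Real.exp (Q s) * v s, by fun_prop, fun r hr => ?_⟩
  have hrr : ρ r = r := by simp [hρ, hr.1, hr.2]
  have := hT v r
  rw [hv] at this
  simp only [F, hrr] at this
  simp only []
  rw [this, ← mul_assoc, ← Real.exp_add]
  simp


/-- Lemma 4.1 (case `m ≠ 0`) of the paper: if `q` is continuous on `(0, r₀)` and
`∫₀^{r₀} r |q(r)| dr < ∞`, then the Bessel-type equation
`-r⁻¹ (r y')' + m² r⁻² y + q y = 0` has a regular solution `y` with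
`y(r) = r^m + o(r^m)` as `r → 0` and `|y'(r)| ≤ C r^{m-1}` near `0`. -/
theorem bessel_regular_solution (m : ℕ) (hm : 1 ≤ m) (r₀ : ℝ) (hr₀ : 0 < r₀)
    (q : ℝ → ℝ) (hq : ContinuousOn q (Set.Ioo 0 r₀))
    (hqi : IntegrableOn (fun r => r * |q r|) (Set.Ioo 0 r₀)) :
    ∃ y : ℝ → ℝ, ContDiffOn ℝ 2 y (Set.Ioo 0 r₀) ∧
      (∀ r ∈ Set.Ioo (0:ℝ) r₀,
        -r⁻¹ * deriv (fun s => s * deriv y s) r + (m : ℝ) ^ 2 * r⁻¹ ^ 2 * y r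
          + q r * y r = 0) ∧
      Tendsto (fun r => y r / r ^ m) (nhdsWithin 0 (Set.Ioi 0)) (nhds 1) ∧
      ∃ C > (0:ℝ), ∃ δ ∈ Set.Ioc (0:ℝ) r₀, ∀ r ∈ Set.Ioo (0:ℝ) δ,
        |deriv y r| ≤ C * r ^ (m - 1) := by
  have hm0 : (0:ℝ) < m := by exact_mod_cast hm
  set h : ℝ → ℝ := (Ioo 0 r₀).indicator (fun s => s * q s) with hh
  have hhe : ∀ s ∈ Ioo 0 r₀, h s = s * q s := fun s hs => indicator_of_mem hs _
  have hcq : ContinuousOn (fun s => s * q s) (Ioo 0 r₀) := continuousOn_id.mul hq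
  have hc : ContinuousOn h (Ioo 0 r₀) := hcq.congr hhe
  have hi : Integrable h := by
    rw [hh, integrable_indicator_iff measurableSet_Ioo]
    refine Integrable.mono' hqi (hcq.aestronglyMeasurable measurableSet_Ioo) ?_
    refine (ae_restrict_iff' measurableSet_Ioo).2 (Eventually.of_forall fun s hs => ?_)
    rw [norm_mul, Real.norm_eq_abs, Real.norm_eq_abs, abs_of_pos hs.1]
  let k : ℝ → ℝ → ℝ := fun r s => (1 - (s / max r s) ^ (2 * m)) / (2 * m)
  obtain ⟨u, huc, hu⟩ := volterra_aux r₀ hr₀ h hc hi k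
    (by intro r; simp only [k]; fun_prop)
    (by
      intro r s hs
      have hp : 0 < max r s := lt_max_of_lt_right hs.1
      have h0 : 0 ≤ s / max r s := div_nonneg hs.1.le hp.le
      have h1 : s / max r s ≤ 1 := (div_le_one hp).2 (le_max_right _ _)
      have h2 : (s / max r s) ^ (2 * m) ≤ 1 := pow_le_one₀ h0 h1
      have h3 : 0 ≤ (s / max r s) ^ (2 * m) := by positivity
      have h4 : (1:ℝ) ≤ m := by exact_mod_cast hm
      simp only [k]
      rw [abs_of_nonneg (div_nonneg (by linarith) (by linarith)), div_le_div_iff₀ (by linarith) (by norm_num)]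
      linarith)
    (by
      intro r s hs hrs
      simp [k, max_eq_right hrs, div_self hs.1.ne'])
    (by
      intro s hs
      simp only [k]
      have : ∀ r, max r s ≠ 0 := fun r => (lt_max_of_lt_right hs.1).ne'
      fun_prop (disch := assumption))
  set f : ℝ → ℝ := fun s => h s * u s with hf
  have hfi : ∀ a b, IntervalIntegrable f volume a b := fun a b =>
    hi.intervalIntegrable.mul_continuousOn huc.continuousOn
  have hgi : ∀ a b, IntervalIntegrable (fun s => s ^ (2 * m) * f s) volume a b := fun a b =>
    (hfi a b).continuousOn_mul (by fun_prop)
  have hfm : AEStronglyMeasurable f volume := hi.aestronglyMeasurable.mul huc.aestronglyMeasurable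
  have hfc : ContinuousOn f (Ioo 0 r₀) := hc.mul huc.continuousOn
  set A : ℝ → ℝ := fun r => ∫ s in (0:ℝ)..r, f s with hA
  set B : ℝ → ℝ := fun r => ∫ s in (0:ℝ)..r, s ^ (2 * m) * f s with hB
  have hAd : ∀ r ∈ Ioo 0 r₀, HasDerivAt A (f r) r := fun r hr =>
    intervalIntegral.integral_hasDerivAt_right (hfi _ _) hfm.stronglyMeasurableAtFilter
      (hfc.continuousAt (isOpen_Ioo.mem_nhds hr))
  have hBd : ∀ r ∈ Ioo 0 r₀, HasDerivAt B (r ^ (2 * m) * f r) r := fun r hr =>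
    intervalIntegral.integral_hasDerivAt_right (hgi _ _)
      ((Continuous.aestronglyMeasurable (by fun_prop)).mul hfm).stronglyMeasurableAtFilter
      ((continuous_pow _).continuousAt.mul (hfc.continuousAt (isOpen_Ioo.mem_nhds hr)))
  have huAB : ∀ r ∈ Ioo 0 r₀, u r = 1 + (A r - (r ^ (2 * m))⁻¹ * B r) / (2 * m) := by
    intro r hr
    rw [hu r ⟨hr.1.le, hr.2.le⟩]
    congr 1
    have e1 : ∫ s in Ioo 0 r₀, k r s * (h s * u s) = ∫ s in Ioo 0 r, k r s * (h s * u s) := by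
      refine (setIntegral_eq_of_subset_of_forall_sdiff_eq_zero measurableSet_Ioo
        (Ioo_subset_Ioo le_rfl hr.2.le) ?_)
      intro s hs
      have : r ≤ s := by
        by_contra hh
        exact hs.2 ⟨hs.1.1, not_le.1 hh⟩
      simp [k, max_eq_right this, div_self hs.1.1.ne']
    have e2 : ∫ s in Ioo 0 r, k r s * (h s * u s) =
        ∫ s in Ioo 0 r, (f s - (r ^ (2 * m))⁻¹ * (s ^ (2 * m) * f s)) / (2 * m) := by
      refine setIntegral_congr_fun measurableSet_Ioo fun s hs => ?_
      simp only [k, hf, max_eq_left hs.2.le, div_pow]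
      ring
    rw [e1, e2, ← integral_Ioc_eq_integral_Ioo, ← intervalIntegral.integral_of_le hr.1.le,
      intervalIntegral.integral_div, intervalIntegral.integral_sub (hfi _ _) ((hgi _ _).const_mul _),
      intervalIntegral.integral_const_mul]
  have hu0 : u 0 = 1 := by
    rw [hu 0 ⟨le_rfl, hr₀.le⟩]
    simp only [add_eq_left]
    refine setIntegral_eq_zero_of_forall_eq_zero fun s hs => ?_
    simp [k, max_eq_right hs.1.le, div_self hs.1.ne']
  let Y : ℝ → ℝ := fun r => r ^ m + (r ^ m * A r - (r ^ m)⁻¹ * B r) / (2 * m)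
  let W : ℝ → ℝ := fun r => m * r ^ m + (r ^ m * A r + (r ^ m)⁻¹ * B r) / 2
  let Z : ℝ → ℝ := fun r => W r / r
  let W' : ℝ → ℝ := fun r => m ^ 2 * Y r / r + r * q r * Y r
  have hYu : ∀ r ∈ Ioo 0 r₀, Y r = r ^ m * u r := by
    intro r hr
    have := pow_pos hr.1 m
    rw [huAB r hr]
    simp only [Y, mul_comm 2 m, pow_mul]
    field_simp
  have hp : ∀ r : ℝ, 0 < r → HasDerivAt (fun s : ℝ => s ^ m) (m * r ^ m / r) r := by
    intro r hr
    have := hasDerivAt_pow m r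
    refine this.congr_deriv ?_
    obtain ⟨n, rfl⟩ : ∃ n, m = n + 1 := ⟨m - 1, by omega⟩
    simp only [Nat.add_sub_cancel, pow_succ]
    field_simp
  have hpi : ∀ r : ℝ, 0 < r → HasDerivAt (fun s : ℝ => (s ^ m)⁻¹) (-(m * r ^ m / r) / (r ^ m) ^ 2) r :=
    fun r hr => (hp r hr).inv (pow_pos hr m).ne'
  have hYd : ∀ r ∈ Ioo 0 r₀, HasDerivAt Y (Z r) r := by
    intro r hr
    have hr0 := hr.1
    have hpos := pow_pos hr.1 m
    refine ((hp r hr.1).add ((((hp r hr.1).mul (hAd r hr)).sub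
      ((hpi r hr.1).mul (hBd r hr))).div_const (2 * m))).congr_deriv ?_
    simp only [Z, W, mul_comm 2 m, pow_mul]
    field_simp
    ring
  have hWd : ∀ r ∈ Ioo 0 r₀, HasDerivAt W (W' r) r := by
    intro r hr
    have hr0 := hr.1
    have hpos := pow_pos hr.1 m
    have hfr : f r = r * q r * u r := by simp only [hf, hhe r hr]
    have hq' : r * q r * Y r = r ^ m * f r := by rw [hYu r hr, hfr]; ring
    refine (((hp r hr.1).const_mul (m:ℝ)).add ((((hp r hr.1).mul (hAd r hr)).add
      ((hpi r hr.1).mul (hBd r hr))).div_const 2)).congr_deriv ?_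
    simp only [W']
    rw [hq']
    simp only [Y, mul_comm 2 m, pow_mul]
    field_simp
    ring
  have hZd : ∀ r ∈ Ioo 0 r₀, HasDerivAt Z ((W' r * r - W r * 1) / r ^ 2) r := fun r hr =>
    (hWd r hr).div (hasDerivAt_id r) hr.1.ne'
  have hYc : ContinuousOn Y (Ioo 0 r₀) := fun r hr => (hYd r hr).continuousAt.continuousWithinAt
  have hWc : ContinuousOn W (Ioo 0 r₀) := fun r hr => (hWd r hr).continuousAt.continuousWithinAt
  have hne : ∀ r ∈ Ioo 0 r₀, r ≠ 0 := fun r hr => hr.1.ne'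
  have hW'c : ContinuousOn W' (Ioo 0 r₀) := by
    simp only [W']
    exact ((continuousOn_const.mul hYc).div continuousOn_id hne).add
      ((continuousOn_id.mul hq).mul hYc)
  have hdY : EqOn (deriv Y) Z (Ioo 0 r₀) := fun r hr => (hYd r hr).deriv
  have hdZ : EqOn (deriv Z) (fun r => (W' r * r - W r * 1) / r ^ 2) (Ioo 0 r₀) :=
    fun r hr => (hZd r hr).deriv
  refine ⟨Y, ?_, ?_, ?_, ?_⟩
  · have h2 : ContDiffOn ℝ 1 (deriv Y) (Ioo 0 r₀) := by
      refine ContDiffOn.congr ?_ hdY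
      rw [show (1 : WithTop ℕ∞) = 0 + 1 by simp, contDiffOn_succ_iff_deriv_of_isOpen isOpen_Ioo]
      refine ⟨fun r hr => (hZd r hr).differentiableAt.differentiableWithinAt, by simp, ?_⟩
      rw [contDiffOn_zero]
      refine ContinuousOn.congr ?_ hdZ
      exact ((hW'c.mul continuousOn_id).sub (hWc.mul continuousOn_const)).div
        (continuousOn_id.pow 2) (fun r hr => pow_ne_zero 2 (hne r hr))
    rw [show (2 : WithTop ℕ∞) = 1 + 1 by norm_num, contDiffOn_succ_iff_deriv_of_isOpen isOpen_Ioo]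
    exact ⟨fun r hr => (hYd r hr).differentiableAt.differentiableWithinAt, by simp, h2⟩
  · intro r hr
    have e : (fun s => s * deriv Y s) =ᶠ[nhds r] W := by
      filter_upwards [isOpen_Ioo.mem_nhds hr] with s hs
      rw [hdY hs]
      have := hs.1
      simp only [Z]
      field_simp
    rw [e.deriv_eq, (hWd r hr).deriv]
    have := hr.1
    simp only [W']
    field_simp
    ring
  · have h1 : Tendsto u (nhdsWithin 0 (Ioi 0)) (nhds 1) := by
      have := huc.tendsto 0
      rw [hu0] at this
      exact this.mono_left nhdsWithin_le_nhds
    refine h1.congr' ?_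
    filter_upwards [Ioo_mem_nhdsGT hr₀] with r hr
    have := pow_pos hr.1 m
    rw [hYu r hr]
    field_simp
  · set D : ℝ := ∫ s in (0:ℝ)..r₀, |f s| with hD
    have hD0 : 0 ≤ D := intervalIntegral.integral_nonneg hr₀.le fun _ _ => abs_nonneg _
    have hDr : ∀ r ∈ Ioo 0 r₀, ∫ s in (0:ℝ)..r, |f s| ≤ D := fun r hr =>
      intervalIntegral.integral_mono_interval le_rfl hr.1.le hr.2.le
        (Eventually.of_forall fun _ => abs_nonneg _) (hfi _ _).abs
    refine ⟨m + D, by linarith, r₀, ⟨hr₀, le_rfl⟩, fun r hr => ?_⟩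
    have hr0 := hr.1
    have hpos := pow_pos hr.1 m
    have hAb : |A r| ≤ D := (intervalIntegral.abs_integral_le_integral_abs hr.1.le).trans (hDr r hr)
    have hBb : |B r| ≤ (r ^ m) ^ 2 * D := by
      refine (intervalIntegral.abs_integral_le_integral_abs hr.1.le).trans ?_
      calc _ ≤ ∫ s in (0:ℝ)..r, (r ^ m) ^ 2 * |f s| := by
            refine intervalIntegral.integral_mono_on hr.1.le (hgi _ _).abs
              ((hfi _ _).abs.const_mul _) fun s hs => ?_
            rw [abs_mul, abs_of_nonneg (pow_nonneg hs.1 _), ← pow_mul, mul_comm m 2]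
            have := hs.1
            have := hs.2
            gcongr
        _ ≤ _ := by
            rw [intervalIntegral.integral_const_mul]
            have := hDr r hr
            gcongr
    have hWb : |W r| ≤ (m + D) * r ^ m := by
      have h1 : |(r ^ m)⁻¹ * B r| ≤ r ^ m * D := by
        rw [abs_mul, abs_of_pos (inv_pos.2 hpos), inv_mul_le_iff₀ hpos]
        linarith
      have h2 : |r ^ m * A r| ≤ r ^ m * D := by
        rw [abs_mul, abs_of_pos hpos]
        gcongr
      rw [abs_le] at h1 h2 ⊢
      have : 0 ≤ m * r ^ m := by positivity
      simp only [W]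
      constructor <;> linarith
    rw [hdY hr]
    simp only [Z]
    rw [abs_div, abs_of_pos hr0, div_le_iff₀ hr0, mul_assoc, ← pow_succ, Nat.sub_add_cancel hm]
    exact hWb
end
end

section
/- Let r₀ ∈ (0,1), and let q : (0, r₀) → ℝ be continuous with ∫₀^{r₀} r (ln r)² |q(r)| dr < ∞. Then the equation −r⁻¹(r y'(r))' + q(r) y(r) = 0 on (0, r₀) has a twice continuously differentiable solution y_sing with y_sing(r) = ln r + o(1) as r → 0, and a solution y_reg with y_reg(r) → 1 as r → 0; moreover, every bounded solution of this equation on (0, r₀) is a constant multiple of y_reg. -/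
open MeasureTheory Set Filter

noncomputable section

lemma bs_intv {r₀ r : ℝ} {g : ℝ → ℝ} (hi : IntegrableOn g (Ioo 0 r₀)) (hr : r ∈ Icc 0 r₀) :
    IntervalIntegrable g volume 0 r := by
  rw [intervalIntegrable_iff_integrableOn_Ioo_of_le hr.1]
  exact hi.mono_set (Ioo_subset_Ioo_right hr.2)

lemma bs_deriv {r₀ r : ℝ} {g : ℝ → ℝ} (hc : ContinuousOn g (Ioo 0 r₀))
    (hi : IntegrableOn g (Ioo 0 r₀)) (hr : r ∈ Ioo 0 r₀) :
    HasDerivAt (fun x => ∫ t in (0:ℝ)..x, g t) (g r) r := by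
  refine intervalIntegral.integral_hasDerivAt_right (bs_intv hi (Ioo_subset_Icc_self hr)) ?_ ?_
  · exact hc.stronglyMeasurableAtFilter isOpen_Ioo r hr
  · exact hc.continuousAt (isOpen_Ioo.mem_nhds hr)

lemma bs_cont {r₀ : ℝ} (h0 : 0 < r₀) {g : ℝ → ℝ} (hi : IntegrableOn g (Ioo 0 r₀)) :
    ContinuousOn (fun x => ∫ t in (0:ℝ)..x, g t) (Icc 0 r₀) := by
  have h : IntegrableOn g (uIcc 0 r₀) := by
    rw [uIcc_of_le h0.le, integrableOn_Icc_iff_integrableOn_Ioo]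
    exact hi
  have h2 := intervalIntegral.continuousOn_primitive_interval h
  rwa [uIcc_of_le h0.le] at h2

lemma bs_zero {r₀ : ℝ} (h0 : 0 < r₀) {g : ℝ → ℝ} (hi : IntegrableOn g (Ioo 0 r₀)) :
    Tendsto (fun x => ∫ t in (0:ℝ)..x, g t) (nhdsWithin 0 (Ioi 0)) (nhds 0) := by
  have h := (bs_cont h0 hi) 0 ⟨le_rfl, h0.le⟩
  have h2 : Tendsto (fun x => ∫ t in (0:ℝ)..x, g t) (nhdsWithin 0 (Icc 0 r₀)) (nhds 0) := by
    simpa [ContinuousWithinAt] using h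
  refine h2.mono_left ?_
  rw [← nhdsWithin_Ioo_eq_nhdsGT h0]
  exact nhdsWithin_mono _ Ioo_subset_Icc_self

/-- weight -/
def bsP (q : ℝ → ℝ) (t : ℝ) : ℝ := t * (Real.log t) ^ 2 * |q t|
def bsG (q y : ℝ → ℝ) (r : ℝ) : ℝ :=
  ∫ t in (0:ℝ)..r, t * (Real.log r - Real.log t) * q t * y t

section
variable {r₀ : ℝ} (hr₀ : r₀ ∈ Ioo (0:ℝ) 1) {q : ℝ → ℝ} (hq : ContinuousOn q (Ioo 0 r₀))
    (hqi : IntegrableOn (bsP q) (Ioo 0 r₀))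
include hr₀ 

lemma bs_L0 : 0 < |Real.log r₀| := abs_pos.2 (Real.log_neg hr₀.1 hr₀.2).ne

lemma bs_logle {t : ℝ} (ht : t ∈ Ioo 0 r₀) : |Real.log r₀| ≤ |Real.log t| := by
  have h1 := Real.log_neg hr₀.1 hr₀.2
  have h2 := Real.log_lt_log ht.1 ht.2
  rw [abs_of_neg h1, abs_of_neg (h2.trans h1)]; linarith

lemma bs_kle {r t : ℝ} (hr : r ∈ Ioo 0 r₀) (ht : t ∈ Ioo 0 r) :
    |t * (Real.log r - Real.log t) * q t| ≤ t * |Real.log t| * |q t| := by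
  have h1 := Real.log_neg hr₀.1 hr₀.2
  have h2 := Real.log_lt_log hr.1 hr.2
  have h3 := Real.log_lt_log ht.1 ht.2
  rw [abs_mul, abs_mul, abs_of_pos ht.1]
  have := ht.1
  have h4 : |Real.log r - Real.log t| ≤ |Real.log t| := by
    rw [abs_of_neg (h3.trans (h2.trans h1)), abs_of_pos (by linarith)]; linarith
  gcongr

lemma bs_Pc : ContinuousOn Real.log (Ioo 0 r₀) :=
  Real.continuousOn_log.mono fun _ hx => hx.1.ne'

include hq

lemma bs_Pcont : ContinuousOn (bsP q) (Ioo 0 r₀) := by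
  have := bs_Pc hr₀
  unfold bsP; fun_prop

include hqi

/-- integrability of t q y log t and t q y -/
lemma bs_int_log {y : ℝ → ℝ} {C : ℝ} (hy : ContinuousOn y (Ioo 0 r₀))
    (hC : ∀ t ∈ Ioo 0 r₀, |y t| ≤ C * |Real.log t|) :
    IntegrableOn (fun t => t * Real.log t * q t * y t) (Ioo 0 r₀) := by
  have hl := bs_Pc hr₀
  refine Integrable.mono' (hqi.const_mul C) ?_ ?_
  · exact ContinuousOn.aestronglyMeasurable (by fun_prop) measurableSet_Ioo
  · filter_upwards [ae_restrict_mem measurableSet_Ioo] with t ht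
    rw [Real.norm_eq_abs, abs_mul, abs_mul, abs_mul, abs_of_pos ht.1]
    have := hC t ht
    have h0 := ht.1
    calc t * |Real.log t| * |q t| * |y t| ≤ t * |Real.log t| * |q t| * (C * |Real.log t|) := by
          gcongr
      _ = C * bsP q t := by unfold bsP; rw [← sq_abs (Real.log t)]; ring

lemma bs_int {y : ℝ → ℝ} {C : ℝ} (hy : ContinuousOn y (Ioo 0 r₀))
    (hC : ∀ t ∈ Ioo 0 r₀, |y t| ≤ C * |Real.log t|) :
    IntegrableOn (fun t => t * q t * y t) (Ioo 0 r₀) := by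
  have hl := bs_Pc hr₀
  refine Integrable.mono' ((bs_int_log hr₀ hq hqi hy hC).norm.const_mul (|Real.log r₀|)⁻¹) ?_ ?_
  · exact ContinuousOn.aestronglyMeasurable (by fun_prop) measurableSet_Ioo
  · filter_upwards [ae_restrict_mem measurableSet_Ioo] with t ht
    have h1 := bs_logle hr₀ ht
    have h2 := bs_L0 hr₀
    rw [← div_eq_inv_mul, le_div_iff₀ h2]
    simp only [Real.norm_eq_abs, abs_mul]
    calc _ ≤ |t| * |q t| * |y t| * |Real.log t| := by gcongr
      _ = _ := by ring

lemma bs_G_eq {y : ℝ → ℝ} {C : ℝ} (hy : ContinuousOn y (Ioo 0 r₀))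
    (hC : ∀ t ∈ Ioo 0 r₀, |y t| ≤ C * |Real.log t|) {r : ℝ} (hr : r ∈ Ioo 0 r₀) :
    bsG q y r = Real.log r * (∫ t in (0:ℝ)..r, t * q t * y t) -
      ∫ t in (0:ℝ)..r, t * Real.log t * q t * y t := by
  have hr' := Ioo_subset_Icc_self hr
  rw [← intervalIntegral.integral_const_mul, ← intervalIntegral.integral_sub]
  · unfold bsG; congr 1; ext t; ring
  · exact (bs_intv (bs_int hr₀ hq hqi hy hC) hr').const_mul _
  · exact bs_intv (bs_int_log hr₀ hq hqi hy hC) hr'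

lemma bs_k_int {y : ℝ → ℝ} {C : ℝ} (hy : ContinuousOn y (Ioo 0 r₀))
    (hC : ∀ t ∈ Ioo 0 r₀, |y t| ≤ C * |Real.log t|) {r : ℝ} (hr : r ∈ Ioo 0 r₀) :
    IntervalIntegrable (fun t => t * (Real.log r - Real.log t) * q t * y t) volume 0 r := by
  have hr' := Ioo_subset_Icc_self hr
  refine (((bs_intv (bs_int hr₀ hq hqi hy hC) hr').const_mul (Real.log r)).sub
    (bs_intv (bs_int_log hr₀ hq hqi hy hC) hr')).congr (fun t _ => ?_)
  ring

lemma bs_G_cont {y : ℝ → ℝ} {C : ℝ} (hy : ContinuousOn y (Ioo 0 r₀))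
    (hC : ∀ t ∈ Ioo 0 r₀, |y t| ≤ C * |Real.log t|) : ContinuousOn (bsG q y) (Ioo 0 r₀) := by
  have hl := bs_Pc hr₀
  have h1 := (bs_cont hr₀.1 (bs_int hr₀ hq hqi hy hC)).mono Ioo_subset_Icc_self
  have h2 := (bs_cont hr₀.1 (bs_int_log hr₀ hq hqi hy hC)).mono Ioo_subset_Icc_self
  exact ((hl.mul h1).sub h2).congr fun r hr => bs_G_eq hr₀ hq hqi hy hC hr

omit hq in
lemma bs_Gle {y g : ℝ → ℝ} {r : ℝ} (hr : r ∈ Ioo 0 r₀) (hg : IntervalIntegrable g volume 0 r)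
    (h : ∀ t ∈ Ioo 0 r, t * |Real.log t| * |q t| * |y t| ≤ g t) :
    |bsG q y r| ≤ ∫ t in (0:ℝ)..r, g t := by
  rw [← Real.norm_eq_abs]
  refine intervalIntegral.norm_integral_le_of_norm_le hr.1.le ?_ hg
  have : ∀ᵐ t : ℝ, t ≠ r := by simp [ae_iff, measure_singleton]
  filter_upwards [this] with t htr ht
  have ht' : t ∈ Ioo 0 r := ⟨ht.1, lt_of_le_of_ne ht.2 htr⟩
  rw [Real.norm_eq_abs, abs_mul]
  refine le_trans ?_ (h t ht')
  gcongr
  exact bs_kle hr₀ hr ht'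

omit hq in
lemma bs_G_bd {y : ℝ → ℝ} {C : ℝ} 
    (hC : ∀ t ∈ Ioo 0 r₀, |y t| ≤ C * |Real.log t|) {r : ℝ} (hr : r ∈ Ioo 0 r₀) :
    |bsG q y r| ≤ C * ∫ t in (0:ℝ)..r, bsP q t := by
  rw [← intervalIntegral.integral_const_mul]
  refine bs_Gle hr₀ hqi hr ((bs_intv hqi (Ioo_subset_Icc_self hr)).const_mul _) fun t ht => ?_
  have := hC t ⟨ht.1, ht.2.trans hr.2⟩
  have h0 := ht.1
  calc t * |Real.log t| * |q t| * |y t| ≤ t * |Real.log t| * |q t| * (C * |Real.log t|) := by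
        gcongr
    _ = C * bsP q t := by unfold bsP; rw [← sq_abs (Real.log t)]; ring

def bsM (r₀ : ℝ) (q : ℝ → ℝ) (r : ℝ) : ℝ :=
  Real.exp (2 / |Real.log r₀| * ∫ t in (0:ℝ)..r, bsP q t)

omit hq in
lemma bs_M_cont : ContinuousOn (bsM r₀ q) (Icc 0 r₀) := by
  have := bs_cont hr₀.1 hqi
  unfold bsM; fun_prop

lemma bs_M_deriv {r : ℝ} (hr : r ∈ Ioo 0 r₀) :
    HasDerivAt (fun r => bsM r₀ q r / 2) (|Real.log r₀|⁻¹ * bsP q r * bsM r₀ q r) r := by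
  have := (((bs_deriv (bs_Pcont hr₀ hq) hqi hr).const_mul (2 / |Real.log r₀|)).exp).div_const 2
  refine HasDerivAt.congr_deriv this ?_
  unfold bsM; ring

lemma bs_M_int {r : ℝ} (hr : r ∈ Ioo 0 r₀) :
    IntervalIntegrable (fun r => |Real.log r₀|⁻¹ * bsP q r * bsM r₀ q r) volume 0 r := by
  apply IntervalIntegrable.mul_continuousOn
  · exact (bs_intv hqi (Ioo_subset_Icc_self hr)).const_mul _
  · rw [uIcc_of_le hr.1.le]
    exact (bs_M_cont hr₀ hqi).mono (Icc_subset_Icc_right hr.2.le)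

lemma bs_M_ftc {r : ℝ} (hr : r ∈ Ioo 0 r₀) :
    ∫ t in (0:ℝ)..r, |Real.log r₀|⁻¹ * bsP q t * bsM r₀ q t ≤ bsM r₀ q r / 2 := by
  rw [intervalIntegral.integral_eq_sub_of_hasDerivAt_of_le (f := fun r => bsM r₀ q r / 2) hr.1.le
    (((bs_M_cont hr₀ hqi).mono (Icc_subset_Icc_right hr.2.le)).div_const 2)
    (fun x hx => bs_M_deriv hr₀ hq hqi ⟨hx.1, hx.2.trans hr.2⟩) (bs_M_int hr₀ hq hqi hr)]
  have : 0 < bsM r₀ q 0 := Real.exp_pos _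
  linarith

lemma bs_G_bdM {y : ℝ → ℝ} {C : ℝ} (hC0 : 0 ≤ C)
    (hC : ∀ t ∈ Ioo 0 r₀, |y t| ≤ C * bsM r₀ q t) {r : ℝ} (hr : r ∈ Ioo 0 r₀) :
    |bsG q y r| ≤ C * (bsM r₀ q r / 2) := by
  refine le_trans ?_ (mul_le_mul_of_nonneg_left (bs_M_ftc hr₀ hq hqi hr) hC0)
  rw [← intervalIntegral.integral_const_mul]
  refine bs_Gle hr₀ hqi hr ((bs_M_int hr₀ hq hqi hr).const_mul _) fun t ht => ?_
  have ht' : t ∈ Ioo 0 r₀ := ⟨ht.1, ht.2.trans hr.2⟩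
  have h1 := hC t ht'
  have h0 := ht.1
  have h2 := bs_logle hr₀ ht'
  have h3 := bs_L0 hr₀
  have hM : 0 < bsM r₀ q t := Real.exp_pos _
  calc t * |Real.log t| * |q t| * |y t| ≤ t * |Real.log t| * |q t| * (C * bsM r₀ q t) := by
        gcongr
    _ = |Real.log r₀|⁻¹ * (t * |Real.log t| * |Real.log r₀| * |q t| * (C * bsM r₀ q t)) := by
        field_simp
    _ ≤ |Real.log r₀|⁻¹ * (t * |Real.log t| * |Real.log t| * |q t| * (C * bsM r₀ q t)) := by
        gcongr
    _ = _ := by unfold bsP; rw [← sq_abs (Real.log t)]; ring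

def bsE (r₀ : ℝ) (u : Ioo (0:ℝ) r₀ → ℝ) (t : ℝ) : ℝ :=
  open Classical in if h : t ∈ Ioo 0 r₀ then u ⟨t, h⟩ else 0

omit hq hqi hr₀ in
lemma bsE_eq (u : Ioo (0:ℝ) r₀ → ℝ) {t : ℝ} (h : t ∈ Ioo 0 r₀) : bsE r₀ u t = u ⟨t, h⟩ := by
  simp only [bsE, dif_pos h]

omit hq hqi hr₀ in
lemma bsE_cont (u : Ioo (0:ℝ) r₀ → ℝ) (hu : Continuous u) : ContinuousOn (bsE r₀ u) (Ioo 0 r₀) := by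
  rw [continuousOn_iff_continuous_domRestrict]
  convert hu using 1
  ext x
  simp only [Set.domRestrict_apply]
  exact bsE_eq u x.2

lemma bs_exists {f : ℝ → ℝ} {C : ℝ} (hf : ContinuousOn f (Ioo 0 r₀))
    (hC : ∀ t ∈ Ioo 0 r₀, |f t| ≤ C * |Real.log t|) :
    ∃ (y : ℝ → ℝ) (C' : ℝ), ContinuousOn y (Ioo 0 r₀) ∧
      (∀ t ∈ Ioo 0 r₀, |y t| ≤ C' * |Real.log t|) ∧
      ∀ r ∈ Ioo 0 r₀, y r = f r + bsG q y r := by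
  obtain ⟨K, hK⟩ := isCompact_Icc.exists_bound_of_continuousOn (bs_M_cont hr₀ hqi)
  have hMc := (bs_M_cont hr₀ hqi).mono Ioo_subset_Icc_self
  have hMpos : ∀ t, 0 < bsM r₀ q t := fun t => Real.exp_pos _
  have hK' : ∀ t ∈ Ioo 0 r₀, bsM r₀ q t ≤ K := fun t ht =>
    (le_abs_self _).trans (hK t (Ioo_subset_Icc_self ht))
  have hL := bs_L0 hr₀
  let X := BoundedContinuousFunction (Ioo (0:ℝ) r₀) ℝ
  let Y : X → ℝ → ℝ := fun u t => f t + bsM r₀ q t * bsE r₀ u t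
  have hEb : ∀ (u : X), ∀ t ∈ Ioo 0 r₀, |bsE r₀ u t| ≤ ‖u‖ := fun u t ht => by
    rw [bsE_eq _ ht]; exact u.norm_coe_le_norm _
  have hYc : ∀ u : X, ContinuousOn (Y u) (Ioo 0 r₀) := fun u =>
    hf.add (hMc.mul (bsE_cont _ u.continuous))
  have hYb : ∀ u : X, ∀ t ∈ Ioo 0 r₀,
      |Y u t| ≤ (C + K * ‖u‖ / |Real.log r₀|) * |Real.log t| := fun u t ht => by
    have h1 := hC t ht
    have h2 := hEb u t ht
    have h3 := hK' t ht
    have h4 := bs_logle hr₀ ht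
    have hK0 : 0 ≤ K := (hMpos t).le.trans h3
    calc |Y u t| ≤ |f t| + |bsM r₀ q t * bsE r₀ u t| := abs_add_le _ _
      _ ≤ C * |Real.log t| + K * ‖u‖ := by
        rw [abs_mul, abs_of_pos (hMpos t)]; gcongr
      _ = C * |Real.log t| + K * ‖u‖ / |Real.log r₀| * |Real.log r₀| := by field_simp
      _ ≤ C * |Real.log t| + K * ‖u‖ / |Real.log r₀| * |Real.log t| := by gcongr
      _ = _ := by ring
  -- M ≥ 1
  have hPhi : ∀ r ∈ Ioo 0 r₀, 0 ≤ ∫ t in (0:ℝ)..r, bsP q t := fun r hr =>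
    intervalIntegral.integral_nonneg hr.1.le fun t ht => by
      unfold bsP; have := ht.1; positivity
  have hM1 : ∀ r ∈ Ioo 0 r₀, 1 ≤ bsM r₀ q r := fun r hr =>
    Real.one_le_exp (mul_nonneg (by positivity) (hPhi r hr))
  obtain ⟨K2, hK2⟩ := isCompact_Icc.exists_bound_of_continuousOn (bs_cont hr₀.1 hqi)
  have hSc : ∀ u : X, Continuous fun r : Ioo (0:ℝ) r₀ => bsG q (Y u) r / bsM r₀ q r := fun u => by
    have h := (bs_G_cont hr₀ hq hqi (hYc u) (hYb u)).div hMc fun t _ => (hMpos t).ne'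
    exact continuousOn_iff_continuous_domRestrict.1 h
  let S : X → X := fun u => BoundedContinuousFunction.ofNormedAddCommGroup
    (fun r : Ioo (0:ℝ) r₀ => bsG q (Y u) r / bsM r₀ q r) (hSc u)
    (abs (C + K * ‖u‖ / |Real.log r₀|) * K2) (fun r => by
      rw [Real.norm_eq_abs, abs_div, abs_of_pos (hMpos r)]
      refine (div_le_self (abs_nonneg _) (hM1 r r.2)).trans ?_
      refine (bs_G_bd hr₀ hqi (hYb u) r.2).trans ?_
      have := hK2 r (Ioo_subset_Icc_self r.2)
      rw [Real.norm_eq_abs, abs_of_nonneg (hPhi r r.2)] at this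
      have h0 := hPhi r r.2
      gcongr
      exact le_abs_self _)
  have hS : ContractingWith (1/2) S := by
    refine ⟨by rw [← NNReal.coe_lt_coe]; norm_num, LipschitzWith.of_dist_le_mul fun u v => ?_⟩
    rw [BoundedContinuousFunction.dist_le (by positivity)]
    intro r
    have hsub : bsG q (Y u) r - bsG q (Y v) r = bsG q (fun t => bsM r₀ q t * bsE r₀ (u - v : X) t) r := by
      unfold bsG
      rw [← intervalIntegral.integral_sub (bs_k_int hr₀ hq hqi (hYc u) (hYb u) r.2)
        (bs_k_int hr₀ hq hqi (hYc v) (hYb v) r.2)]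
      congr 1; ext t
      simp only [Y, bsE]
      split_ifs with h
      · have e : (u - v : X) ⟨t, h⟩ = u ⟨t, h⟩ - v ⟨t, h⟩ := rfl
        rw [e]; ring
      · ring
    have hb := bs_G_bdM hr₀ hq hqi (y := fun t => bsM r₀ q t * bsE r₀ (u - v : X) t)
      (norm_nonneg (u - v)) (fun t ht => by
        have h2 := hEb (u - v) t ht
        have := hMpos t
        rw [abs_mul, abs_of_pos (hMpos t), mul_comm]; gcongr) r.2
    have : dist (S u r) (S v r) = |bsG q (Y u) r - bsG q (Y v) r| / bsM r₀ q r := by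
      have e : S u r - S v r = (bsG q (Y u) r - bsG q (Y v) r) / bsM r₀ q r := by
        rw [sub_div]; rfl
      rw [Real.dist_eq, e, abs_div, abs_of_pos (hMpos r)]
    rw [this, hsub, div_le_iff₀ (hMpos r), dist_eq_norm]
    refine hb.trans (le_of_eq ?_)
    push_cast; ring
  have : Nonempty X := ⟨0⟩
  let u := hS.fixedPoint S
  have hu : S u = u := hS.fixedPoint_isFixedPt
  refine ⟨Y u, _, hYc u, hYb u, fun r hr => ?_⟩
  have h1 : bsG q (Y u) r / bsM r₀ q r = u ⟨r, hr⟩ := congrArg (fun w : X => w ⟨r, hr⟩) hu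
  have h2 : Y u r = f r + bsM r₀ q r * u ⟨r, hr⟩ := by simp only [Y]; rw [bsE_eq _ hr]
  rw [h2, ← h1, mul_div_cancel₀ _ (hMpos r).ne']

lemma bs_sol (c d : ℝ) : ∃ y A : ℝ → ℝ, ContDiffOn ℝ 2 y (Ioo 0 r₀) ∧
    (∀ r ∈ Ioo 0 r₀, HasDerivAt y ((c + A r) / r) r) ∧
    (∀ r ∈ Ioo 0 r₀, HasDerivAt A (r * q r * y r) r) ∧
    Tendsto (fun r => y r - (d + c * Real.log r)) (nhdsWithin 0 (Ioi 0)) (nhds 0) ∧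
    Tendsto A (nhdsWithin 0 (Ioi 0)) (nhds 0) ∧
    Tendsto (fun r => Real.log r * A r) (nhdsWithin 0 (Ioi 0)) (nhds 0) := by
  have hl := bs_Pc hr₀
  have hL := bs_L0 hr₀
  obtain ⟨y, C, hy, hC, hyG⟩ := bs_exists hr₀ hq hqi (f := fun r => d + c * Real.log r)
    (C := |d| / |Real.log r₀| + |c|) (by fun_prop) (fun t ht => by
      have h4 := bs_logle hr₀ ht
      calc |d + c * Real.log t| ≤ |d| + |c * Real.log t| := abs_add_le _ _
        _ = |d| / |Real.log r₀| * |Real.log r₀| + |c| * |Real.log t| := by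
          rw [abs_mul]; field_simp
        _ ≤ |d| / |Real.log r₀| * |Real.log t| + |c| * |Real.log t| := by gcongr
        _ = _ := by ring)
  have hI : Ioo 0 r₀ ∈ nhdsWithin (0:ℝ) (Ioi 0) := Ioo_mem_nhdsGT hr₀.1
  have ha := bs_int hr₀ hq hqi hy hC
  have hb := bs_int_log hr₀ hq hqi hy hC
  set A : ℝ → ℝ := fun r => ∫ t in (0:ℝ)..r, t * q t * y t with hA
  set B : ℝ → ℝ := fun r => ∫ t in (0:ℝ)..r, t * Real.log t * q t * y t with hB
  have hG : ∀ r ∈ Ioo 0 r₀, bsG q y r = Real.log r * A r - B r :=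
    fun r hr => bs_G_eq hr₀ hq hqi hy hC hr
  have hAd : ∀ r ∈ Ioo 0 r₀, HasDerivAt A (r * q r * y r) r := fun r hr =>
    bs_deriv (by fun_prop) ha hr
  have hBd : ∀ r ∈ Ioo 0 r₀, HasDerivAt B (r * Real.log r * q r * y r) r := fun r hr =>
    bs_deriv (by fun_prop) hb hr
  have hyd : ∀ r ∈ Ioo 0 r₀, HasDerivAt y ((c + A r) / r) r := fun r hr => by
    have hlog := Real.hasDerivAt_log hr.1.ne'
    have h1 := ((hlog.const_mul c).const_add d).add ((hlog.mul (hAd r hr)).sub (hBd r hr))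
    have h2 : y =ᶠ[nhds r] fun r => d + c * Real.log r + (Real.log r * A r - B r) := by
      filter_upwards [isOpen_Ioo.mem_nhds hr] with s hs
      rw [hyG s hs, hG s hs]
    refine (HasDerivAt.congr_of_eventuallyEq ?_ h2)
    refine HasDerivAt.congr_deriv h1 ?_
    have := hr.1.ne'
    field_simp; ring
  have hAz := bs_zero hr₀.1 ha
  have hBz := bs_zero hr₀.1 hb
  have hGz : Tendsto (bsG q y) (nhdsWithin 0 (Ioi 0)) (nhds 0) := by
    have h := (bs_zero hr₀.1 hqi).const_mul C
    rw [mul_zero] at h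
    refine squeeze_zero_norm' ?_ h
    filter_upwards [hI] with r hr using bs_G_bd hr₀ hqi hC hr
  refine ⟨y, A, ?_, hyd, hAd, ?_, hAz, ?_⟩
  · have hdd : ∀ r ∈ Ioo 0 r₀, HasDerivAt (deriv y) 
        ((r * q r * y r * r - (c + A r) * 1) / r ^ 2) r := fun r hr => by
      have h2 : deriv y =ᶠ[nhds r] fun r => (c + A r) / r := by
        filter_upwards [isOpen_Ioo.mem_nhds hr] with s hs using (hyd s hs).deriv
      exact (((hAd r hr).const_add c).div (hasDerivAt_id r) hr.1.ne').congr_of_eventuallyEq h2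
    have hAc : ContinuousOn A (Ioo 0 r₀) := fun r hr => (hAd r hr).continuousAt.continuousWithinAt
    rw [show (2 : WithTop ℕ∞) = 1 + 1 from by norm_num, contDiffOn_succ_iff_deriv_of_isOpen isOpen_Ioo]
    refine ⟨fun r hr => (hyd r hr).differentiableAt.differentiableWithinAt, by simp, ?_⟩
    rw [show (1 : WithTop ℕ∞) = 0 + 1 from by norm_num, contDiffOn_succ_iff_deriv_of_isOpen isOpen_Ioo]
    refine ⟨fun r hr => (hdd r hr).differentiableAt.differentiableWithinAt, by simp, ?_⟩
    rw [contDiffOn_zero]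
    refine ContinuousOn.congr ?_ fun r hr => (hdd r hr).deriv
    refine ContinuousOn.div (by fun_prop) (by fun_prop) fun r hr => pow_ne_zero _ hr.1.ne'
  · refine hGz.congr' ?_
    filter_upwards [hI] with r hr
    rw [hyG r hr]; ring
  · have := hGz.add hBz
    rw [add_zero] at this
    refine this.congr' ?_
    filter_upwards [hI] with r hr
    rw [hG r hr]; ring

end

lemma bs_ode {r₀ : ℝ} {q y A : ℝ → ℝ} {c : ℝ} 
    (h1 : ∀ r ∈ Ioo 0 r₀, HasDerivAt y ((c + A r) / r) r)
    (h2 : ∀ r ∈ Ioo 0 r₀, HasDerivAt A (r * q r * y r) r) :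
    ∀ r ∈ Set.Ioo (0:ℝ) r₀, -r⁻¹ * deriv (fun s => s * deriv y s) r + q r * y r = 0 := by
  intro r hr
  have h : (fun s => s * deriv y s) =ᶠ[nhds r] fun s => c + A s := by
    filter_upwards [isOpen_Ioo.mem_nhds hr] with s hs
    rw [(h1 s hs).deriv, mul_div_cancel₀ _ hs.1.ne']
  rw [h.deriv_eq, ((h2 r hr).const_add c).deriv]
  have := hr.1.ne'
  field_simp; ring

/-- constancy of the Wronskian -/
lemma bs_wr {r₀ : ℝ} {q y z U V : ℝ → ℝ} 
    (h1 : ∀ r ∈ Ioo 0 r₀, HasDerivAt y (U r / r) r)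
    (h2 : ∀ r ∈ Ioo 0 r₀, HasDerivAt U (r * q r * y r) r)
    (h3 : ∀ r ∈ Ioo 0 r₀, HasDerivAt z (V r / r) r)
    (h4 : ∀ r ∈ Ioo 0 r₀, HasDerivAt V (r * q r * z r) r) :
    ∃ a, ∀ r ∈ Ioo 0 r₀, U r * z r - y r * V r = a := by
  have h : ∀ r ∈ Ioo 0 r₀, HasDerivAt (fun r => U r * z r - y r * V r) 0 r := fun r hr => by
    refine HasDerivAt.congr_deriv (((h2 r hr).mul (h3 r hr)).sub ((h1 r hr).mul (h4 r hr))) ?_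
    ring
  exact isOpen_Ioo.exists_is_const_of_deriv_eq_zero isPreconnected_Ioo
    (fun r hr => (h r hr).differentiableAt.differentiableWithinAt) fun r hr => (h r hr).deriv

theorem bessel_singular_solution_m_zero (r₀ : ℝ) (hr₀ : r₀ ∈ Set.Ioo (0:ℝ) 1)
    (q : ℝ → ℝ) (hq : ContinuousOn q (Set.Ioo 0 r₀))
    (hqi : IntegrableOn (fun r => r * (Real.log r) ^ 2 * |q r|) (Set.Ioo 0 r₀)) :
    ∃ ysing yreg : ℝ → ℝ,
      ContDiffOn ℝ 2 ysing (Set.Ioo 0 r₀) ∧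
      (∀ r ∈ Set.Ioo (0:ℝ) r₀,
        -r⁻¹ * deriv (fun s => s * deriv ysing s) r + q r * ysing r = 0) ∧
      Tendsto (fun r => ysing r - Real.log r) (nhdsWithin 0 (Set.Ioi 0)) (nhds 0) ∧
      ContDiffOn ℝ 2 yreg (Set.Ioo 0 r₀) ∧
      (∀ r ∈ Set.Ioo (0:ℝ) r₀,
        -r⁻¹ * deriv (fun s => s * deriv yreg s) r + q r * yreg r = 0) ∧
      Tendsto yreg (nhdsWithin 0 (Set.Ioi 0)) (nhds 1) ∧
      (∀ z : ℝ → ℝ, ContDiffOn ℝ 2 z (Set.Ioo 0 r₀) →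
        (∀ r ∈ Set.Ioo (0:ℝ) r₀,
          -r⁻¹ * deriv (fun s => s * deriv z s) r + q r * z r = 0) →
        (∃ M : ℝ, ∀ r ∈ Set.Ioo (0:ℝ) r₀, |z r| ≤ M) →
        ∃ c : ℝ, ∀ r ∈ Set.Ioo (0:ℝ) r₀, z r = c * yreg r) := by
  obtain ⟨s, A, s1, s2, s3, s4, s5, s6⟩ := bs_sol hr₀ hq hqi 1 0
  obtain ⟨g, B, g1, g2, g3, g4, g5, g6⟩ := bs_sol hr₀ hq hqi 0 1
  simp only [zero_add, one_mul, zero_mul, add_zero] at s4 g4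
  have g7 : Tendsto g (nhdsWithin 0 (Set.Ioi 0)) (nhds 1) := by
    simpa using g4.add_const 1
  refine ⟨s, g, s1, bs_ode s2 s3, s4, g1, bs_ode g2 g3, g7, ?_⟩
  intro z hz hode ⟨M, hM⟩
  have hI : Ioo 0 r₀ ∈ nhdsWithin (0:ℝ) (Ioi 0) := Ioo_mem_nhdsGT hr₀.1
  simp only [zero_add] at g2
  have s3' : ∀ r ∈ Ioo 0 r₀, HasDerivAt (fun r => 1 + A r) (r * q r * s r) r :=
    fun r hr => (s3 r hr).const_add 1
  set Z : ℝ → ℝ := fun r => r * deriv z r with hZ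
  have z2 : ∀ r ∈ Ioo 0 r₀, HasDerivAt z (Z r / r) r := fun r hr => by
    have h := ((hz.differentiableOn (by norm_num)) r hr).differentiableAt (isOpen_Ioo.mem_nhds hr)
    refine h.hasDerivAt.congr_deriv ?_
    exact (mul_div_cancel_left₀ _ hr.1.ne').symm
  have z3 : ∀ r ∈ Ioo 0 r₀, HasDerivAt Z (r * q r * z r) r := fun r hr => by
    have hz' := hz
    rw [show (2 : WithTop ℕ∞) = 1 + 1 from by norm_num,
      contDiffOn_succ_iff_deriv_of_isOpen isOpen_Ioo] at hz'
    have h := ((hz'.2.2.differentiableOn (by norm_num)) r hr).differentiableAt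
      (isOpen_Ioo.mem_nhds hr)
    have h2 : DifferentiableAt ℝ Z r := differentiableAt_id.mul h
    refine h2.hasDerivAt.congr_deriv ?_
    have h3 := hode r hr
    have := hr.1.ne'
    field_simp at h3
    rw [mul_zero] at h3
    linarith
  obtain ⟨w, hw⟩ := bs_wr s2 s3' g2 g3
  obtain ⟨a, ha⟩ := bs_wr z2 z3 g2 g3
  obtain ⟨b, hb⟩ := bs_wr z2 z3 s2 s3'
  have hw1 : w = 1 := by
    have h1 : Tendsto (fun r => (1 + A r) * g r - s r * B r) (nhdsWithin 0 (Ioi 0))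
        (nhds ((1 + 0) * 1 - (0 * 0 + 0))) := by
      refine ((s5.const_add 1).mul g7).sub (((s4.mul g5).add g6).congr fun r => ?_)
      ring
    have h2 : Tendsto (fun r => (1 + A r) * g r - s r * B r) (nhdsWithin 0 (Ioi 0)) (nhds w) := by
      refine tendsto_const_nhds.congr' ?_
      filter_upwards [hI] with r hr using (hw r hr).symm
    have := tendsto_nhds_unique h2 h1
    simpa using this
  have hzz : ∀ r ∈ Ioo 0 r₀, z r = a * s r - b * g r := fun r hr => by
    have h1 := hw r hr
    rw [← ha r hr, ← hb r hr]
    rw [hw1] at h1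
    linear_combination (-z r) * h1
  have ha0 : a = 0 := by
    by_contra hne
    -- log would be bounded
    have h1 : Tendsto (fun r => |a * (s r - Real.log r)| + |b * g r| + M) (nhdsWithin 0 (Ioi 0))
        (nhds (|a * 0| + |b * 1| + M)) :=
      (((s4.const_mul a).abs).add ((g7.const_mul b).abs)).add_const M
    have h2 : Tendsto (fun r => |a| * |Real.log r|) (nhdsWithin 0 (Ioi 0)) atTop :=
      (tendsto_abs_atBot_atTop.comp Real.tendsto_log_nhdsGT_zero).const_mul_atTop (abs_pos.2 hne)
    refine not_tendsto_nhds_of_tendsto_atTop (tendsto_atTop_mono' _ ?_ h2) _ h1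
    filter_upwards [hI] with r hr
    rw [← abs_mul]
    have h3 := hM r hr
    have h4 : a * Real.log r = z r + b * g r - a * (s r - Real.log r) := by
      rw [hzz r hr]; ring
    rw [h4]
    have h5 := abs_sub (z r + b * g r) (a * (s r - Real.log r))
    have h6 := abs_add_le (z r) (b * g r)
    linarith
  refine ⟨-b, fun r hr => ?_⟩
  rw [hzz r hr, ha0]; ring
end
end

section
/- Let m ≥ 1 be an integer, r₀ > 0, and let q : (0, r₀) → ℝ be continuous with ∫₀^{r₀} r q(r)² dr < ∞. If ψ₁ and ψ₂ are twice continuously differentiable solutions of the equation −r⁻¹(r y'(r))' + m² r⁻² y(r) + q(r) y(r) = 0 on (0, r₀) with ∫₀^{r₀} |ψ_i(r)|² r dr < ∞ for i = 1, 2, then ψ₁ and ψ₂ are linearly dependent. Moreover, every such square-integrable solution ψ satisfies ψ(r) = O(r^m) and ψ'(r) = O(r^{m−1}) as r → 0. -/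
open MeasureTheory Set Filter Asymptotics

noncomputable section

lemma aux_L1 {f f' h : ℝ → ℝ} {r₀ r₁ x y B : ℝ} (hx : 0 < x) (hxy : x ≤ y) (hy : y ≤ r₁)
    (hr : r₁ < r₀) (hf : ∀ s ∈ Ioo 0 r₀, HasDerivAt f (f' s) s)
    (hc : ContinuousOn f' (Ioo 0 r₀)) (hi : IntegrableOn h (Ioc 0 r₁))
    (h0 : ∀ s ∈ Ioc 0 r₁, 0 ≤ h s) (hB : 0 ≤ B)
    (hb : ∀ s ∈ Icc x y, |f' s| ≤ B * h s) :
    |f y - f x| ≤ B * ∫ s in Ioc 0 r₁, h s := by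
  have hsub : Icc x y ⊆ Ioo 0 r₀ := fun s hs => ⟨hx.trans_le hs.1, (hs.2.trans hy).trans_lt hr⟩
  have hsub2 : Ioc x y ⊆ Ioc 0 r₁ := fun s hs => ⟨hx.trans hs.1, hs.2.trans hy⟩
  have e : ∫ s in x..y, f' s = f y - f x := by
    apply intervalIntegral.integral_eq_sub_of_hasDerivAt
    · intro s hs
      rw [uIcc_of_le hxy] at hs
      exact hf s (hsub hs)
    · apply ContinuousOn.intervalIntegrable
      rw [uIcc_of_le hxy]
      exact hc.mono hsub
  rw [← e, ← Real.norm_eq_abs]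
  have hi2 : IntegrableOn h (Ioc x y) := hi.mono_set hsub2
  calc ‖∫ s in x..y, f' s‖ ≤ ∫ s in x..y, B * h s := by
        apply intervalIntegral.norm_integral_le_of_norm_le hxy
        · exact Eventually.of_forall fun s hs => hb s ⟨hs.1.le, hs.2⟩
        · rw [intervalIntegrable_iff_integrableOn_Ioc_of_le hxy]
          exact hi2.const_mul B
    _ = B * ∫ s in Ioc x y, h s := by
        rw [intervalIntegral.integral_const_mul, intervalIntegral.integral_of_le hxy]
    _ ≤ B * ∫ s in Ioc 0 r₁, h s := by
        apply mul_le_mul_of_nonneg_left _ hB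
        apply setIntegral_mono_set hi
        · exact (ae_restrict_iff' measurableSet_Ioc).2 (Eventually.of_forall h0)
        · exact hsub2.eventuallyLE

def BSol (m : ℕ) (r₀ : ℝ) (q ψ v : ℝ → ℝ) : Prop :=
  (∀ r ∈ Ioo 0 r₀, HasDerivAt ψ (v r / r) r) ∧
  (∀ r ∈ Ioo 0 r₀, HasDerivAt v ((m:ℝ)^2 * ψ r / r + r * q r * ψ r) r)

lemma aux_alpha {m : ℕ} {r₀ : ℝ} {q ψ v : ℝ → ℝ} (hm : 1 ≤ m) (S : BSol m r₀ q ψ v) :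
    ∀ r ∈ Ioo 0 r₀, HasDerivAt (fun r => (v r + m * ψ r) / r ^ m)
      ((r * q r * ψ r) / r ^ m) r := by
  intro r hr
  have h0 : r ≠ 0 := hr.1.ne'
  obtain ⟨k, rfl⟩ : ∃ k, m = k + 1 := ⟨m - 1, by omega⟩
  refine (((S.2 r hr).add ((S.1 r hr).const_mul ((k + 1 : ℕ) : ℝ))).div
    (hasDerivAt_pow (k+1) r) (pow_ne_zero _ h0)).congr_deriv ?_
  simp only [Pi.add_apply, Nat.add_sub_cancel]
  field_simp
  push_cast
  ring

lemma aux_beta {m : ℕ} {r₀ : ℝ} {q ψ v : ℝ → ℝ} (hm : 1 ≤ m) (S : BSol m r₀ q ψ v) :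
    ∀ r ∈ Ioo 0 r₀, HasDerivAt (fun r => (v r - m * ψ r) * r ^ m)
      ((r * q r * ψ r) * r ^ m) r := by
  intro r hr
  have h0 : r ≠ 0 := hr.1.ne'
  obtain ⟨k, rfl⟩ : ∃ k, m = k + 1 := ⟨m - 1, by omega⟩
  refine (((S.2 r hr).sub ((S.1 r hr).const_mul ((k + 1 : ℕ) : ℝ))).mul
    (hasDerivAt_pow (k+1) r)).congr_deriv ?_
  simp only [Pi.sub_apply, Nat.add_sub_cancel]
  field_simp
  push_cast
  ring

/-- non integrability -/
lemma aux_nonint {m : ℕ} (hm : 1 ≤ m) {r₀ c y : ℝ} (hc : 0 < c) (hy : 0 < y) (hyr : y ≤ r₀)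
    {ψ : ℝ → ℝ} (hL : IntegrableOn (fun r => (ψ r) ^ 2 * r) (Ioo 0 r₀))
    (hb : ∀ x ∈ Ioo 0 y, c ≤ |ψ x| * x ^ m) : False := by
  set z := min y 1 with hz
  have hz0 : 0 < z := lt_min hy one_pos
  have h1 : IntegrableOn (fun r => (c^2)⁻¹ * ((ψ r) ^ 2 * r)) (Ioo 0 z) :=
    (hL.mono_set (Ioo_subset_Ioo le_rfl ((min_le_left _ _).trans hyr))).const_mul _
  have h2 : IntegrableOn (fun r : ℝ => r ^ (-1:ℝ)) (Ioo 0 z) := by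
    refine Integrable.mono' h1 ?_ ?_
    · exact (measurable_id.pow_const _).aestronglyMeasurable
    · refine (ae_restrict_iff' measurableSet_Ioo).2 (Eventually.of_forall fun x hx => ?_)
      have hx0 := hx.1
      have hxy : x < y := hx.2.trans_le (min_le_left _ _)
      have hx1 : x ≤ 1 := hx.2.le.trans (min_le_right _ _)
      have h := hb x ⟨hx0, hxy⟩
      have hp : x ^ m ≤ x := by
        calc x ^ m ≤ x ^ 1 := pow_le_pow_of_le_one hx0.le hx1 hm
          _ = x := pow_one x
      have h' : c ≤ |ψ x| * x := h.trans (mul_le_mul_of_nonneg_left hp (abs_nonneg _))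
      have h'' : c ^ 2 ≤ ψ x ^ 2 * x ^ 2 := by
        rw [← sq_abs (ψ x), ← mul_pow]
        exact pow_le_pow_left₀ hc.le h' 2
      rw [Real.rpow_neg_one, Real.norm_eq_abs, abs_of_pos (inv_pos.2 hx0)]
      rw [inv_mul_eq_div, le_div_iff₀ (by positivity), inv_mul_le_iff₀ hx0]
      nlinarith
  rw [intervalIntegral.integrableOn_Ioo_rpow_iff hz0] at h2
  exact lt_irrefl _ h2

lemma aux_cont {m : ℕ} {r₀ : ℝ} {q ψ v : ℝ → ℝ} (hq : ContinuousOn q (Ioo 0 r₀))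
    (S : BSol m r₀ q ψ v) : ContinuousOn (fun r => r * q r * ψ r) (Ioo 0 r₀) :=
  (continuousOn_id.mul hq).mul fun r hr => (S.1 r hr).continuousAt.continuousWithinAt

/-- Step 1 -/
lemma aux_step1 {m : ℕ} {r₀ r₁ : ℝ} {q ψ v : ℝ → ℝ} (hm : 1 ≤ m) (h1 : 0 < r₁) (hr : r₁ < r₀)
    (hq : ContinuousOn q (Ioo 0 r₀))
    (hqi : IntegrableOn (fun r => r * (q r) ^ 2) (Ioo 0 r₀))
    (S : BSol m r₀ q ψ v)
    (hL : IntegrableOn (fun r => (ψ r) ^ 2 * r) (Ioo 0 r₀)) :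
    ∃ A G : ℝ, 0 ≤ A ∧ 0 ≤ G ∧ ∀ x ∈ Ioc 0 r₁, |v x + m * ψ x| ≤ A ∧ |v x - m * ψ x| ≤ G := by
  have hc := aux_cont hq S
  have hm0 : (1:ℝ) ≤ m := by exact_mod_cast hm
  have hgi : IntegrableOn (fun r => |r * q r * ψ r|) (Ioc 0 r₁) := by
    have : IntegrableOn (fun r => |r * q r * ψ r|) (Ioo 0 r₀) := by
      refine Integrable.mono' (hqi.add hL) ?_ ?_
      · exact hc.abs.aestronglyMeasurable measurableSet_Ioo
      · refine (ae_restrict_iff' measurableSet_Ioo).2 (Eventually.of_forall fun x hx => ?_)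
        have hx0 := hx.1
        simp only [Real.norm_eq_abs, abs_abs, Pi.add_apply]
        rw [mul_assoc, abs_mul, abs_of_pos hx0]
        have : |q x * ψ x| ≤ q x ^ 2 + ψ x ^ 2 := by
          rw [abs_le]; constructor <;> nlinarith [sq_nonneg (q x + ψ x), sq_nonneg (q x - ψ x)]
        nlinarith
    exact this.mono_set fun s hs => ⟨hs.1, hs.2.trans_lt hr⟩
  set G := ∫ s in Ioc 0 r₁, |s * q s * ψ s| with hG
  have hG0 : 0 ≤ G := setIntegral_nonneg measurableSet_Ioc fun s _ => abs_nonneg _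
  set α₁ := |(v r₁ + m * ψ r₁) / r₁ ^ m| with hα
  set A := r₁ ^ m * α₁ + G with hA
  have hA0 : 0 ≤ A := by positivity
  have hcd : ContinuousOn (fun r => (r * q r * ψ r) / r ^ m) (Ioo 0 r₀) :=
    hc.div (continuousOn_id.pow m) fun s hs => pow_ne_zero _ hs.1.ne'
  have hcm : ContinuousOn (fun r => (r * q r * ψ r) * r ^ m) (Ioo 0 r₀) :=
    hc.mul (continuousOn_id.pow m)
  have ha : ∀ x ∈ Ioc 0 r₁, |v x + m * ψ x| ≤ A := by
    intro x hx
    have hx0 := hx.1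
    have hxm : 0 < x ^ m := pow_pos hx0 m
    have key := aux_L1 (B := (x^m)⁻¹) (h := fun s => |s * q s * ψ s|) hx0 hx.2 le_rfl hr
      (aux_alpha hm S) hcd hgi (fun s _ => abs_nonneg _) (by positivity) (by
        intro s hs
        have hs0 := hx0.trans_le hs.1
        rw [abs_div, abs_of_pos (pow_pos hs0 m), div_eq_inv_mul]
        gcongr
        exact hs.1)
    have h2 : |(v x + m * ψ x) / x ^ m| ≤ α₁ + (x^m)⁻¹ * G := by
      have := abs_sub_abs_le_abs_sub ((v x + m * ψ x) / x ^ m) ((v r₁ + m * ψ r₁) / r₁ ^ m)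
      rw [abs_sub_comm] at this
      linarith
    rw [abs_div, abs_of_pos hxm, div_le_iff₀ hxm] at h2
    have : x ^ m * α₁ ≤ r₁ ^ m * α₁ := by gcongr; exact hx.2
    have e : (α₁ + (x^m)⁻¹ * G) * x ^ m = x ^ m * α₁ + G := by field_simp
    rw [e] at h2
    linarith
  refine ⟨A, G, hA0, hG0, fun x hx => ⟨ha x hx, ?_⟩⟩
  by_contra hcon
  push Not at hcon
  have hx0 := hx.1
  have hxm : 0 < x ^ m := pow_pos hx0 m
  set c := |v x - m * ψ x| * x ^ m - x ^ m * G with hcdef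
  have hcpos : 0 < c := by rw [hcdef]; nlinarith
  have hβ : ∀ y ∈ Ioc 0 x, c ≤ |v y - m * ψ y| * y ^ m := by
    intro y hy
    have hy0 := hy.1
    have key := aux_L1 (B := x^m) (h := fun s => |s * q s * ψ s|) hy0 hy.2 hx.2 hr
      (aux_beta hm S) hcm hgi (fun s _ => abs_nonneg _) (by positivity) (by
        intro s hs
        have hs0 := hy0.trans_le hs.1
        rw [abs_mul, abs_of_pos (pow_pos hs0 m), mul_comm]
        gcongr
        exact hs.2)
    have := abs_sub_abs_le_abs_sub ((v x - m * ψ x) * x ^ m) ((v y - m * ψ y) * y ^ m)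
    rw [abs_mul, abs_mul, abs_of_pos hxm, abs_of_pos (pow_pos hy0 m)] at this
    linarith
  -- near zero
  set w := min (min x 1) (c / (2 * (A + 1))) with hw
  have hw0 : 0 < w := by positivity
  refine aux_nonint hm (c := c / (4 * m)) (y := w) (by positivity) hw0
    (((min_le_left _ _).trans (min_le_left _ _)).trans (hx.2.trans hr.le)) hL ?_
  intro y hy
  have hy0 := hy.1
  have hyx : y ≤ x := hy.2.le.trans ((min_le_left _ _).trans (min_le_left _ _))
  have hy1 : y ≤ 1 := hy.2.le.trans ((min_le_left _ _).trans (min_le_right _ _))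
  have hyc : y ≤ c / (2 * (A + 1)) := hy.2.le.trans (min_le_right _ _)
  have hym : y ^ m ≤ c / (2 * (A + 1)) :=
    ((pow_le_pow_of_le_one hy0.le hy1 hm).trans_eq (pow_one y)).trans hyc
  have hymp : 0 < y ^ m := pow_pos hy0 m
  rw [le_div_iff₀ (by positivity)] at hym
  have h3 := hβ y ⟨hy0, hyx⟩
  have h4 := ha y ⟨hy0, hyx.trans hx.2⟩
  have h5 : |v y - m * ψ y| ≤ |v y + m * ψ y| + 2 * m * |ψ y| := by
    have e : v y - m * ψ y = (v y + m * ψ y) - (2 * m * ψ y) := by ring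
    rw [e]
    refine (abs_sub _ _).trans_eq ?_
    rw [abs_mul, abs_of_nonneg (by positivity : (0:ℝ) ≤ 2 * m)]
  rw [div_le_iff₀ (by positivity)]
  have h6 : |v y - m * ψ y| * y ^ m ≤ (A + 2 * m * |ψ y|) * y ^ m := by gcongr; linarith
  nlinarith

/-- Step 2 -/
lemma aux_step2 {m : ℕ} {r₀ r₁ δ M : ℝ} {q ψ v : ℝ → ℝ} (hm : 1 ≤ m) (hr : r₁ < r₀)
    (hq : ContinuousOn q (Ioo 0 r₀))
    (hκ : IntegrableOn (fun r => r * |q r|) (Ioc 0 r₁))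
    (hK : ∫ r in Ioc 0 r₁, r * |q r| ≤ 1/2)
    (S : BSol m r₀ q ψ v) {G : ℝ} (hG0 : 0 ≤ G)
    (hG : ∀ x ∈ Ioc 0 r₁, |v x - m * ψ x| ≤ G) (hδ : 0 ≤ δ) (hM : 0 ≤ M)
    (hb : ∀ x ∈ Ioc 0 r₁, |ψ x| ≤ M * (x ^ m + δ)) :
    ∀ x ∈ Ioc 0 r₁, |v x + m * ψ x| ≤ x ^ m * |(v r₁ + m * ψ r₁) / r₁ ^ m| + M / 2 * (x ^ m + δ)
      ∧ |v x - m * ψ x| ≤ M / 2 * (x ^ m + δ) := by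
  have hc := aux_cont hq S
  have hcd : ContinuousOn (fun r => (r * q r * ψ r) / r ^ m) (Ioo 0 r₀) :=
    hc.div (continuousOn_id.pow m) fun s hs => pow_ne_zero _ hs.1.ne'
  have hcm : ContinuousOn (fun r => (r * q r * ψ r) * r ^ m) (Ioo 0 r₀) :=
    hc.mul (continuousOn_id.pow m)
  have hn : ∀ s ∈ Ioc 0 r₁, 0 ≤ s * |q s| := fun s hs => mul_nonneg hs.1.le (abs_nonneg _)
  intro x hx
  have hx0 := hx.1
  have hxm : 0 < x ^ m := pow_pos hx0 m
  constructor
  · have key := aux_L1 (B := M * (1 + δ / x ^ m)) (h := fun s => s * |q s|) hx0 hx.2 le_rfl hr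
      (aux_alpha hm S) hcd hκ hn (by positivity) (by
        intro s hs
        have hs0 := hx0.trans_le hs.1
        have hsm := pow_pos hs0 m
        have := hb s ⟨hs0, hs.2⟩
        rw [abs_div, abs_of_pos hsm, abs_mul, abs_mul, abs_of_pos hs0]
        have h2 : |ψ s| / s ^ m ≤ M * (1 + δ / x ^ m) := by
          calc |ψ s| / s ^ m ≤ (M * (s ^ m + δ)) / s ^ m := by gcongr
            _ = M * (1 + δ / s ^ m) := by field_simp
            _ ≤ _ := by gcongr; exact hs.1
        calc s * |q s| * |ψ s| / s ^ m = (|ψ s| / s ^ m) * (s * |q s|) := by ring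
          _ ≤ _ := mul_le_mul_of_nonneg_right h2 (hn s ⟨hs0, hs.2⟩))
    set α₁ := |(v r₁ + m * ψ r₁) / r₁ ^ m| with hα
    have hle : M * (1 + δ / x ^ m) * ∫ r in Ioc 0 r₁, r * |q r| ≤ M * (1 + δ / x ^ m) * (1/2) :=
      mul_le_mul_of_nonneg_left hK (by positivity)
    have h2 : |(v x + m * ψ x) / x ^ m| ≤ α₁ + M * (1 + δ / x ^ m) * (1/2) := by
      have := abs_sub_abs_le_abs_sub ((v x + m * ψ x) / x ^ m) ((v r₁ + m * ψ r₁) / r₁ ^ m)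
      rw [abs_sub_comm] at this
      linarith
    rw [abs_div, abs_of_pos hxm, div_le_iff₀ hxm] at h2
    refine h2.trans_eq ?_
    field_simp
  · have key : ∀ y ∈ Ioc 0 x, |v x - m * ψ x| * x ^ m ≤ G * y ^ m
        + M * (x ^ m + δ) * x ^ m * (1/2) := by
      intro y hy
      have hy0 := hy.1
      have key := aux_L1 (B := M * (x ^ m + δ) * x^m) (h := fun s => s * |q s|) hy0 hy.2 hx.2 hr
        (aux_beta hm S) hcm hκ hn (by positivity) (by
          intro s hs
          have hs0 := hy0.trans_le hs.1
          have hsm := pow_pos hs0 m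
          have hsr : s ≤ r₁ := hs.2.trans hx.2
          have hp : s ^ m ≤ x ^ m := by gcongr; exact hs.2
          have := hb s ⟨hs0, hsr⟩
          rw [abs_mul, abs_of_pos hsm, abs_mul, abs_mul, abs_of_pos hs0]
          have h2 : |ψ s| * s ^ m ≤ M * (x ^ m + δ) * x ^ m := by
            calc |ψ s| * s ^ m ≤ (M * (s ^ m + δ)) * s ^ m := by gcongr
              _ ≤ _ := by gcongr
          calc s * |q s| * |ψ s| * s ^ m = (|ψ s| * s ^ m) * (s * |q s|) := by ring
            _ ≤ _ := mul_le_mul_of_nonneg_right h2 (hn s ⟨hs0, hsr⟩))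
      have hle : M * (x ^ m + δ) * x^m * ∫ r in Ioc 0 r₁, r * |q r|
          ≤ M * (x ^ m + δ) * x^m * (1/2) :=
        mul_le_mul_of_nonneg_left hK (by positivity)
      have := abs_sub_abs_le_abs_sub ((v x - m * ψ x) * x ^ m) ((v y - m * ψ y) * y ^ m)
      rw [abs_mul, abs_mul, abs_of_pos hxm, abs_of_pos (pow_pos hy0 m)] at this
      have h7 : |v y - m * ψ y| * y ^ m ≤ G * y ^ m :=
        mul_le_mul_of_nonneg_right (hG y ⟨hy0, hy.2.trans hx.2⟩) (pow_pos hy0 m).le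
      linarith
    have lim : Tendsto (fun y : ℝ => G * y ^ m + M * (x ^ m + δ) * x ^ m * (1/2))
        (nhdsWithin 0 (Ioi 0)) (nhds (G * 0 ^ m + M * (x ^ m + δ) * x ^ m * (1/2))) := by
      have : Continuous (fun y : ℝ => G * y ^ m + M * (x ^ m + δ) * x ^ m * (1/2)) := by fun_prop
      exact (this.tendsto 0).mono_left nhdsWithin_le_nhds
    have h8 := ge_of_tendsto lim (by
      filter_upwards [Ioc_mem_nhdsGT hx0] with y hy using key y hy)
    rw [zero_pow (by omega), mul_zero, zero_add] at h8
    refine le_of_mul_le_mul_right (h8.trans_eq ?_) hxm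
    ring

lemma aux_core {m : ℕ} {r₀ r₁ : ℝ} {q ψ v : ℝ → ℝ} (hm : 1 ≤ m) (h1 : 0 < r₁) (hr : r₁ < r₀)
    (hq : ContinuousOn q (Ioo 0 r₀))
    (hqi : IntegrableOn (fun r => r * (q r) ^ 2) (Ioo 0 r₀))
    (hκ : IntegrableOn (fun r => r * |q r|) (Ioc 0 r₁))
    (hK : ∫ r in Ioc 0 r₁, r * |q r| ≤ 1/2)
    (S : BSol m r₀ q ψ v)
    (hL : IntegrableOn (fun r => (ψ r) ^ 2 * r) (Ioo 0 r₀)) :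
    ∀ x ∈ Ioc 0 r₁, |ψ x| ≤ |(v r₁ + m * ψ r₁) / r₁ ^ m| * x ^ m ∧
      |v x| ≤ |(v r₁ + m * ψ r₁) / r₁ ^ m| * x ^ m := by
  have hm0 : (1:ℝ) ≤ m := by exact_mod_cast hm
  obtain ⟨A, G, hA0, hG0, hAG⟩ := aux_step1 hm h1 hr hq hqi S hL
  have hG : ∀ x ∈ Ioc 0 r₁, |v x - m * ψ x| ≤ G := fun x hx => (hAG x hx).2
  have hpsi : ∀ x, 2 * |ψ x| ≤ |v x + m * ψ x| + |v x - m * ψ x| := by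
    intro x
    have h := abs_sub (v x + m * ψ x) (v x - m * ψ x)
    have e : (v x + m * ψ x) - (v x - m * ψ x) = 2 * m * ψ x := by ring
    rw [e, abs_mul, abs_of_nonneg (by positivity : (0:ℝ) ≤ 2 * m)] at h
    nlinarith [abs_nonneg (ψ x)]
  have hv : ∀ x, 2 * |v x| ≤ |v x + m * ψ x| + |v x - m * ψ x| := by
    intro x
    have h := abs_add_le (v x + m * ψ x) (v x - m * ψ x)
    have e : (v x + m * ψ x) + (v x - m * ψ x) = 2 * v x := by ring
    rw [e, abs_mul, abs_two] at h
    exact h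
  have st2 := fun (δ M : ℝ) => aux_step2 (δ := δ) (M := M) hm hr hq hκ hK S hG0 hG
  set α₁ := |(v r₁ + m * ψ r₁) / r₁ ^ m| with hα
  have hα0 : 0 ≤ α₁ := abs_nonneg _
  have hd : ∀ δ > 0, ∀ x ∈ Ioc 0 r₁, |ψ x| ≤ α₁ * (x ^ m + δ) := by
    intro δ hδ
    set F : ℝ → ℝ := fun x => |ψ x| / (x ^ m + δ) with hF
    have hbdd : BddAbove (F '' Ioc 0 r₁) := by
      refine ⟨(A + G) / δ, ?_⟩
      rintro _ ⟨x, hx, rfl⟩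
      have hxm := pow_pos hx.1 m
      have := hpsi x
      have := hAG x hx
      apply div_le_div₀ (by positivity) _ hδ (by linarith)
      linarith [abs_nonneg (ψ x)]
    set M := sSup (F '' Ioc 0 r₁) with hM
    have hFM : ∀ x ∈ Ioc 0 r₁, F x ≤ M := fun x hx => le_csSup hbdd (mem_image_of_mem _ hx)
    have hM0 : 0 ≤ M := by
      refine le_trans ?_ (hFM r₁ ⟨h1, le_rfl⟩)
      positivity
    have hMb : ∀ x ∈ Ioc 0 r₁, |ψ x| ≤ M * (x ^ m + δ) := by
      intro x hx
      have hxm := pow_pos hx.1 m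
      have := hFM x hx
      rwa [hF, div_le_iff₀ (by positivity)] at this
    have hle : M ≤ α₁ / 2 + M / 2 := by
      refine csSup_le (Set.Nonempty.image F ⟨r₁, h1, le_rfl⟩) ?_
      rintro _ ⟨x, hx, rfl⟩
      have hxm := pow_pos hx.1 m
      have h2 := st2 δ M hδ.le hM0 hMb x hx
      have := hpsi x
      rw [hF, div_le_iff₀ (by positivity)]
      nlinarith
    intro x hx
    have hxm := pow_pos hx.1 m
    refine (hMb x hx).trans ?_
    gcongr
    linarith
  have h0 : ∀ x ∈ Ioc 0 r₁, |ψ x| ≤ α₁ * (x ^ m + 0) := by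
    intro x hx
    have lim : Tendsto (fun δ : ℝ => α₁ * (x ^ m + δ))
        (nhdsWithin 0 (Ioi 0)) (nhds (α₁ * (x ^ m + 0))) := by
      have : Continuous (fun δ : ℝ => α₁ * (x ^ m + δ)) := by fun_prop
      exact (this.tendsto 0).mono_left nhdsWithin_le_nhds
    exact ge_of_tendsto lim (by
      filter_upwards [self_mem_nhdsWithin] with δ hδ using hd δ hδ x hx)
  intro x hx
  have h2 := st2 0 α₁ le_rfl hα0 h0 x hx
  have h3 := h0 x hx
  rw [add_zero] at h3 h2
  refine ⟨h3, ?_⟩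
  have := hv x
  nlinarith

lemma aux_kappa {r₀ : ℝ} {q : ℝ → ℝ} (hr₀ : 0 < r₀) (hq : ContinuousOn q (Ioo 0 r₀))
    (hqi : IntegrableOn (fun r => r * (q r) ^ 2) (Ioo 0 r₀)) :
    ∃ r₁, 0 < r₁ ∧ r₁ < r₀ ∧ IntegrableOn (fun r => r * |q r|) (Ioc 0 r₁) ∧
      ∫ r in Ioc 0 r₁, r * |q r| ≤ 1/2 := by
  have hi : IntegrableOn (fun r => r * |q r|) (Ioo 0 r₀) := by
    have hid : IntegrableOn (fun r : ℝ => r) (Ioo 0 r₀) :=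
      (continuous_id.integrableOn_Icc (a := 0) (b := r₀)).mono_set Ioo_subset_Icc_self
    refine Integrable.mono' (hqi.add hid) ?_ ?_
    · exact (continuousOn_id.mul hq.abs).aestronglyMeasurable measurableSet_Ioo
    · refine (ae_restrict_iff' measurableSet_Ioo).2 (Eventually.of_forall fun x hx => ?_)
      have hx0 := hx.1
      simp only [Pi.add_apply]
      rw [Real.norm_eq_abs, abs_of_nonneg (by positivity), ← sq_abs (q x)]
      have : |q x| ≤ |q x| ^ 2 + 1 := by nlinarith [sq_nonneg (|q x| - 1), abs_nonneg (q x)]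
      nlinarith
  have hi2 : IntegrableOn (fun r => r * |q r|) (uIcc 0 r₀) := by
    rw [uIcc_of_le hr₀.le]; exact (integrableOn_Icc_iff_integrableOn_Ioo).2 hi
  have hcont := intervalIntegral.continuousOn_primitive_interval hi2
  have h0 := (hcont 0 (by simp)).tendsto
  rw [intervalIntegral.integral_same] at h0
  have h1 : ∀ᶠ r in nhdsWithin (0:ℝ) (Ioi 0), ∫ t in (0:ℝ)..r, t * |q t| < 1/2 := by
    have hle : nhdsWithin (0:ℝ) (Ioi 0) ≤ nhdsWithin 0 (uIcc 0 r₀) := by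
      rw [← nhdsWithin_Ioo_eq_nhdsGT hr₀, uIcc_of_le hr₀.le]
      exact nhdsWithin_mono _ Ioo_subset_Icc_self
    exact hle (h0.eventually (gt_mem_nhds (by norm_num)))
  obtain ⟨r, hr, hr2⟩ := (h1.and (Ioo_mem_nhdsGT hr₀)).exists
  refine ⟨r, hr2.1, hr2.2, hi.mono_set fun s hs => ⟨hs.1, hs.2.trans_lt hr2.2⟩, ?_⟩
  rw [intervalIntegral.integral_of_le hr2.1.le] at hr
  exact hr.le

lemma aux_uniq {m : ℕ} {r₀ r₁ : ℝ} {q ψ v : ℝ → ℝ} (h1 : 0 < r₁)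
    (hq : ContinuousOn q (Ioo 0 r₀)) (S : BSol m r₀ q ψ v) (hψ : ψ r₁ = 0) (hv : v r₁ = 0) :
    ∀ x ∈ Ico r₁ r₀, ψ x = 0 := by
  intro x hx
  have hsub : Icc r₁ x ⊆ Ioo 0 r₀ := fun s hs => ⟨h1.trans_le hs.1, hs.2.trans_lt hx.2⟩
  have hne : ∀ s ∈ Icc r₁ x, s ≠ 0 := fun s hs => (hsub hs).1.ne'
  have hc1 : ContinuousOn (fun s : ℝ => 1 / s) (Icc r₁ x) :=
    continuousOn_const.div continuousOn_id hne
  have hc2 : ContinuousOn (fun s : ℝ => (m:ℝ)^2 / s + s * q s) (Icc r₁ x) :=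
    (continuousOn_const.div continuousOn_id hne).add (continuousOn_id.mul (hq.mono hsub))
  obtain ⟨C1, hC1⟩ := isCompact_Icc.exists_bound_of_continuousOn hc1
  obtain ⟨C2, hC2⟩ := isCompact_Icc.exists_bound_of_continuousOn hc2
  have hd : ∀ s ∈ Icc r₁ x, HasDerivAt (fun s => (ψ s, v s))
      (v s / s, (m:ℝ)^2 * ψ s / s + s * q s * ψ s) s := fun s hs =>
    (S.1 s (hsub hs)).prodMk (S.2 s (hsub hs))
  have key := norm_le_gronwallBound_of_norm_deriv_right_le (f := fun s => (ψ s, v s))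
    (f' := fun s => (v s / s, (m:ℝ)^2 * ψ s / s + s * q s * ψ s)) (δ := 0) (K := max C1 C2)
    (ε := 0) (a := r₁) (b := x)
    (fun s hs => (hd s hs).continuousAt.continuousWithinAt)
    (fun s hs => (hd s ⟨hs.1, hs.2.le⟩).hasDerivWithinAt) (by simp [hψ, hv])
    (by
      intro s hs
      have hs' : s ∈ Icc r₁ x := ⟨hs.1, hs.2.le⟩
      have b1 := hC1 s hs'
      have b2 := hC2 s hs'
      have n1 : |ψ s| ≤ ‖(ψ s, v s)‖ := norm_fst_le (ψ s, v s)
      have n2 : |v s| ≤ ‖(ψ s, v s)‖ := norm_snd_le (ψ s, v s)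
      rw [add_zero]
      apply norm_prod_le_iff.2
      constructor
      · have e : v s / s = (1 / s) * v s := by ring
        show ‖v s / s‖ ≤ _
        rw [e, norm_mul]
        exact mul_le_mul (b1.trans (le_max_left _ _)) n2 (norm_nonneg _)
          ((norm_nonneg _).trans (b1.trans (le_max_left _ _)))
      · have e : (m:ℝ)^2 * ψ s / s + s * q s * ψ s = ((m:ℝ)^2 / s + s * q s) * ψ s := by ring
        show ‖(m:ℝ)^2 * ψ s / s + s * q s * ψ s‖ ≤ _
        rw [e, norm_mul]
        exact mul_le_mul (b2.trans (le_max_right _ _)) n1 (norm_nonneg _)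
          ((norm_nonneg _).trans (b2.trans (le_max_right _ _)))) x ⟨hx.1, le_rfl⟩
  rw [gronwallBound_ε0_δ0] at key
  have := (norm_fst_le (ψ x, v x)).trans key
  simpa using this

lemma aux_sol {m : ℕ} {r₀ : ℝ} {q ψ : ℝ → ℝ} (hC : ContDiffOn ℝ 2 ψ (Ioo 0 r₀))
    (heq : ∀ r ∈ Ioo (0:ℝ) r₀,
      -r⁻¹ * deriv (fun s => s * deriv ψ s) r + (m : ℝ) ^ 2 * r⁻¹ ^ 2 * ψ r
        + q r * ψ r = 0) : BSol m r₀ q ψ (fun s => s * deriv ψ s) := by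
  have hd : DifferentiableOn ℝ (deriv ψ) (Ioo 0 r₀) :=
    ((contDiffOn_succ_iff_deriv_of_isOpen (n := 1) isOpen_Ioo).1 hC).2.2.differentiableOn
      (by norm_num)
  constructor
  · intro r hr
    have h0 := hr.1.ne'
    have := ((hC.differentiableOn (by norm_num)).differentiableAt
      (isOpen_Ioo.mem_nhds hr)).hasDerivAt
    refine this.congr_deriv ?_
    show deriv ψ r = r * deriv ψ r / r
    field_simp
  · intro r hr
    have h0 := hr.1.ne'
    have h := (differentiableAt_id.mul (hd.differentiableAt (isOpen_Ioo.mem_nhds hr))).hasDerivAt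
    have e := heq r hr
    have h' : HasDerivAt (fun s => s * deriv ψ s) (deriv (fun s => s * deriv ψ s) r) r := h
    convert h' using 1
    have e2 : r * (-r⁻¹ * deriv (fun s => s * deriv ψ s) r + (m : ℝ) ^ 2 * r⁻¹ ^ 2 * ψ r
        + q r * ψ r) = 0 := by rw [e, mul_zero]
    generalize deriv (fun s => s * deriv ψ s) r = D at e2 ⊢
    field_simp at e2 ⊢
    linarith

/-- Lemma 4.2 of the paper: if `m ≥ 1`, `q` is continuous with `∫₀^{r₀} r q(r)² dr < ∞`, then
any two solutions of `-r⁻¹ (r y')' + m² r⁻² y + q y = 0` belonging to `L²((0,r₀); r dr)` are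
linearly dependent, and every such square-integrable solution `ψ` satisfies `ψ(r) = O(r^m)`
and `ψ'(r) = O(r^{m-1})` as `r → 0`. -/
theorem bessel_L2_solution_unique (m : ℕ) (hm : 1 ≤ m) (r₀ : ℝ) (hr₀ : 0 < r₀)
    (q : ℝ → ℝ) (hq : ContinuousOn q (Set.Ioo 0 r₀))
    (hqi : IntegrableOn (fun r => r * (q r) ^ 2) (Set.Ioo 0 r₀))
    (ψ₁ ψ₂ : ℝ → ℝ)
    (hψ₁C : ContDiffOn ℝ 2 ψ₁ (Set.Ioo 0 r₀))
    (hψ₁eq : ∀ r ∈ Set.Ioo (0:ℝ) r₀,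
      -r⁻¹ * deriv (fun s => s * deriv ψ₁ s) r + (m : ℝ) ^ 2 * r⁻¹ ^ 2 * ψ₁ r
        + q r * ψ₁ r = 0)
    (hψ₁L2 : IntegrableOn (fun r => (ψ₁ r) ^ 2 * r) (Set.Ioo 0 r₀))
    (hψ₂C : ContDiffOn ℝ 2 ψ₂ (Set.Ioo 0 r₀))
    (hψ₂eq : ∀ r ∈ Set.Ioo (0:ℝ) r₀,
      -r⁻¹ * deriv (fun s => s * deriv ψ₂ s) r + (m : ℝ) ^ 2 * r⁻¹ ^ 2 * ψ₂ r
        + q r * ψ₂ r = 0)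
    (hψ₂L2 : IntegrableOn (fun r => (ψ₂ r) ^ 2 * r) (Set.Ioo 0 r₀)) :
    (∃ c₁ c₂ : ℝ, (c₁ ≠ 0 ∨ c₂ ≠ 0) ∧
      ∀ r ∈ Set.Ioo (0:ℝ) r₀, c₁ * ψ₁ r + c₂ * ψ₂ r = 0) ∧
    (∀ ψ : ℝ → ℝ, ContDiffOn ℝ 2 ψ (Set.Ioo 0 r₀) →
      (∀ r ∈ Set.Ioo (0:ℝ) r₀,
        -r⁻¹ * deriv (fun s => s * deriv ψ s) r + (m : ℝ) ^ 2 * r⁻¹ ^ 2 * ψ r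
          + q r * ψ r = 0) →
      IntegrableOn (fun r => (ψ r) ^ 2 * r) (Set.Ioo 0 r₀) →
      (ψ =O[nhdsWithin 0 (Set.Ioi 0)] fun r : ℝ => r ^ m) ∧
      (deriv ψ =O[nhdsWithin 0 (Set.Ioi 0)] fun r : ℝ => r ^ (m - 1))) := by
  obtain ⟨r₁, h1, hr, hκ, hK⟩ := aux_kappa hr₀ hq hqi
  constructor
  · have S₁ := aux_sol hψ₁C hψ₁eq
    have S₂ := aux_sol hψ₂C hψ₂eq
    set v₁ : ℝ → ℝ := fun s => s * deriv ψ₁ s with hv₁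
    set v₂ : ℝ → ℝ := fun s => s * deriv ψ₂ s with hv₂
    have hex : ∃ c₁ c₂ : ℝ, (c₁ ≠ 0 ∨ c₂ ≠ 0) ∧
        c₁ * (v₁ r₁ + m * ψ₁ r₁) + c₂ * (v₂ r₁ + m * ψ₂ r₁) = 0 := by
      by_cases h : v₁ r₁ + m * ψ₁ r₁ = 0
      · exact ⟨1, 0, Or.inl one_ne_zero, by rw [h]; ring⟩
      · exact ⟨-(v₂ r₁ + m * ψ₂ r₁), v₁ r₁ + m * ψ₁ r₁, Or.inr h, by ring⟩
    obtain ⟨c₁, c₂, hc, h0⟩ := hex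
    refine ⟨c₁, c₂, hc, ?_⟩
    have S : BSol m r₀ q (fun r => c₁ * ψ₁ r + c₂ * ψ₂ r) (fun r => c₁ * v₁ r + c₂ * v₂ r) := by
      constructor
      · intro r hr
        refine (((S₁.1 r hr).const_mul c₁).add ((S₂.1 r hr).const_mul c₂)).congr_deriv ?_
        ring
      · intro r hr
        refine (((S₁.2 r hr).const_mul c₁).add ((S₂.2 r hr).const_mul c₂)).congr_deriv ?_
        ring
    have hL : IntegrableOn (fun r => (c₁ * ψ₁ r + c₂ * ψ₂ r) ^ 2 * r) (Ioo 0 r₀) := by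
      refine Integrable.mono' ((hψ₁L2.const_mul (2 * c₁ ^ 2)).add
        (hψ₂L2.const_mul (2 * c₂ ^ 2))) ?_ ?_
      · refine ContinuousOn.aestronglyMeasurable ?_ measurableSet_Ioo
        exact (((continuousOn_const.mul hψ₁C.continuousOn).add
          (continuousOn_const.mul hψ₂C.continuousOn)).pow 2).mul continuousOn_id
      · refine (ae_restrict_iff' measurableSet_Ioo).2 (Eventually.of_forall fun x hx => ?_)
        have hx0 := hx.1
        rw [Real.norm_eq_abs, abs_of_nonneg (by positivity)]
        simp only [Pi.add_apply]
        have : (c₁ * ψ₁ x + c₂ * ψ₂ x) ^ 2 ≤ 2 * c₁ ^ 2 * ψ₁ x ^ 2 + 2 * c₂ ^ 2 * ψ₂ x ^ 2 := by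
          nlinarith [sq_nonneg (c₁ * ψ₁ x - c₂ * ψ₂ x)]
        nlinarith
    have core := aux_core hm h1 hr hq hqi hκ hK S hL
    have e0 : (c₁ * v₁ r₁ + c₂ * v₂ r₁ + m * (c₁ * ψ₁ r₁ + c₂ * ψ₂ r₁)) = 0 := by
      rw [← h0]; ring
    simp only [e0, zero_div, abs_zero, zero_mul, abs_nonpos_iff] at core
    have hu := aux_uniq h1 hq S (core r₁ ⟨h1, le_rfl⟩).1 (core r₁ ⟨h1, le_rfl⟩).2
    intro r hr'
    rcases le_total r r₁ with h | h
    · exact (core r ⟨hr'.1, h⟩).1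
    · exact hu r ⟨h, hr'.2⟩
  · intro ψ hC heq hL
    have core := aux_core hm h1 hr hq hqi hκ hK (aux_sol hC heq) hL
    constructor
    · refine IsBigO.of_bound |(r₁ * deriv ψ r₁ + m * ψ r₁) / r₁ ^ m| ?_
      filter_upwards [Ioc_mem_nhdsGT h1] with x hx
      rw [norm_pow, Real.norm_eq_abs, Real.norm_eq_abs, abs_of_pos hx.1]
      exact (core x hx).1
    · refine IsBigO.of_bound |(r₁ * deriv ψ r₁ + m * ψ r₁) / r₁ ^ m| ?_
      filter_upwards [Ioc_mem_nhdsGT h1] with x hx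
      rw [norm_pow, Real.norm_eq_abs, Real.norm_eq_abs, abs_of_pos hx.1]
      have h := (core x hx).2
      rw [abs_mul, abs_of_pos hx.1] at h
      refine le_of_mul_le_mul_left (h.trans_eq ?_) hx.1
      have e : x ^ m = x * x ^ (m - 1) := by
        rw [← pow_succ']; congr 1; omega
      rw [e]; ring
end
end

section
/- Under the hypotheses of the group-velocity identity (m a nonzero integer; b ∈ C³((0,∞)), b > 0; a' = b with a(r) → ∞; b(r) = O(e^{cr}) at infinity; b(r) = O(r^{−γ}) with γ < 3/2 at 0; |(d/dr)^k(1/b)| ≤ C r^{−β−k}, k = 0,…,3, with β < 2|m|−1 at 0; τ(r) = r/b(r), v(r) = r(r⁻¹τ'(r))'; ψ a real normalized twice continuously differentiable solution of −r⁻¹(rψ')' + m²r⁻²ψ + (a+p)²ψ = λψ with ψ = O(r^{|m|}), ψ' = O(r^{|m|−1}) at 0 and super-exponential decay of ψ, ψ' at infinity), assume in addition that b'(r) ≤ 0 and r² b(r) v'(r) ≤ 4m² for all r > 0. Then 2 ∫₀^∞ (a(r)+p) ψ(r)² r dr ≥ 0. -/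
open MeasureTheory Set Filter Asymptotics

noncomputable section

theorem aux_growth (g g1 g2 g3 : ℝ → ℝ) (M : ℝ) (hM : 0 < M)
    (h0 : ∀ r > (0:ℝ), HasDerivAt g (g1 r) r)
    (h1 : ∀ r > (0:ℝ), HasDerivAt g1 (g2 r) r)
    (h2 : ∀ r > (0:ℝ), HasDerivAt g2 (g3 r) r)
    (hg : ∀ r > (0:ℝ), 0 ≤ g r) (hg1 : ∀ r > (0:ℝ), 0 ≤ g1 r)
    (hc : ∀ r > (0:ℝ), r * g3 r + 2 * g2 r - g1 r / r + g r / r^2 ≤ M * (g r / r^2)) :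
    (∃ K > 0, ∃ N > 0, ∀ r ≥ (1:ℝ), r * g r ≤ K * Real.exp (N * r) ∧
      g r + r * g1 r ≤ K * Real.exp (N * r)) ∧
    ∃ᶠ r in atTop, -1 ≤ g1 r - g r / r + r * g2 r := by
  have dT : ∀ r > (0:ℝ), HasDerivAt (fun r => g r / r + g1 r)
      ((g1 r - g r / r + r * g2 r) / r) r := by
    intro r hr
    have := ((h0 r hr).div (hasDerivAt_id r) hr.ne').add (h1 r hr)
    refine this.congr_deriv ?_
    simp only [id]
    field_simp
  have dv : ∀ r > (0:ℝ), HasDerivAt (fun r => g1 r - g r / r + r * g2 r)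
      (r * g3 r + 2 * g2 r - g1 r / r + g r / r^2) r := by
    intro r hr
    have := ((h1 r hr).sub ((h0 r hr).div (hasDerivAt_id r) hr.ne')).add
      ((hasDerivAt_id r).mul (h2 r hr))
    refine this.congr_deriv ?_
    simp only [id]
    field_simp
    ring
  have vle : ∀ r ≥ (1:ℝ), g1 r - g r / r + r * g2 r ≤ (g1 1 - g 1 / 1 + 1 * g2 1) + M * g r := by
    intro r hr
    have anti : AntitoneOn (fun r => (g1 r - g r / r + r * g2 r) - M * (g r * (1 - r⁻¹))) (Ici 1) := by
      have dd : ∀ r > (0:ℝ), HasDerivAt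
        (fun r => (g1 r - g r / r + r * g2 r) - M * (g r * (1 - r⁻¹)))
        ((r * g3 r + 2 * g2 r - g1 r / r + g r / r^2) -
          M * (g1 r * (1 - r⁻¹) + g r * (1 / r^2))) r := by
        intro r hr
        have := (dv r hr).sub (((h0 r hr).mul
          ((hasDerivAt_const r (1:ℝ)).sub (hasDerivAt_inv hr.ne'))).const_mul M)
        refine this.congr_deriv ?_
        simp only [Pi.sub_apply]
        ring
      apply antitoneOn_of_hasDerivWithinAt_nonpos (convex_Ici 1)
        (f' := fun r => ((r * g3 r + 2 * g2 r - g1 r / r + g r / r^2) -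
          M * (g1 r * (1 - r⁻¹) + g r * (1 / r^2))))
      · intro x hx
        exact (dd x (lt_of_lt_of_le one_pos hx)).continuousAt.continuousWithinAt
      · intro x hx
        rw [interior_Ici] at hx
        exact (dd x (lt_trans one_pos hx)).hasDerivWithinAt
      · intro x hx
        rw [interior_Ici] at hx
        have hx0 : 0 < x := lt_trans one_pos hx
        have e1 := hc x hx0
        have e2 : 0 ≤ g1 x * (1 - x⁻¹) :=
          mul_nonneg (hg1 x hx0) (by have := inv_le_one_of_one_le₀ (le_of_lt (mem_Ioi.mp hx)); linarith)
        have e3 : 0 ≤ M * (g1 x * (1 - x⁻¹)) := mul_nonneg hM.le e2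
        have e4 : g x * (1/x^2) = g x / x^2 := by ring
        rw [e4, mul_add]
        linarith
    have h := anti (show (1:ℝ) ∈ Ici 1 by simp) hr hr
    simp only at h
    have hr0 : 0 < r := lt_of_lt_of_le one_pos hr
    have : g r * (1 - r⁻¹) ≤ g r := by
      have := inv_pos.mpr hr0
      nlinarith [hg r hr0, mul_nonneg (hg r hr0) this.le]
    have := mul_le_mul_of_nonneg_left this hM.le
    simp only [inv_one, sub_self, mul_zero, sub_zero] at h
    linarith
  set v1 := (g1 1 - g 1 / 1 + 1 * g2 1) with hv1
  have Tnn : ∀ r > (0:ℝ), 0 ≤ g r / r + g1 r := fun r hr =>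
    add_nonneg (div_nonneg (hg r hr) hr.le) (hg1 r hr)
  constructor
  · -- exponential bound
    set q := |v1| / M with hq
    have hq0 : 0 ≤ q := by positivity
    have hqM : M * q = |v1| := by rw [hq]; field_simp
    have dd : ∀ r > (0:ℝ), HasDerivAt
        (fun r => (g r / r + g1 r + q) * Real.exp (-M * r))
        (((g1 r - g r / r + r * g2 r) / r) * Real.exp (-M * r) +
          (g r / r + g1 r + q) * (Real.exp (-M * r) * (-M * 1))) r := by
      intro r hr
      exact ((dT r hr).add_const q).mul (((hasDerivAt_id r).const_mul (-M)).exp)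
    have anti : AntitoneOn (fun r => (g r / r + g1 r + q) * Real.exp (-M * r)) (Ici 1) := by
      apply antitoneOn_of_hasDerivWithinAt_nonpos (convex_Ici 1)
        (f' := fun r => (((g1 r - g r / r + r * g2 r) / r) * Real.exp (-M * r) +
          (g r / r + g1 r + q) * (Real.exp (-M * r) * (-M * 1))))
      · intro x hx
        exact (dd x (lt_of_lt_of_le one_pos hx)).continuousAt.continuousWithinAt
      · intro x hx
        rw [interior_Ici] at hx
        exact (dd x (lt_trans one_pos hx)).hasDerivWithinAt
      · intro x hx
        rw [interior_Ici] at hx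
        have hx0 : 0 < x := lt_trans one_pos hx
        have e1 := vle x (le_of_lt hx)
        have e2 : (g1 x - g x / x + x * g2 x) / x ≤ M * (g x / x + g1 x + q) := by
          have : (v1 + M * g x) / x ≤ M * (g x / x + g1 x + q) := by
            have h1 : v1 / x ≤ |v1| := by
              rw [div_le_iff₀ hx0]
              have := le_abs_self v1
              have : |v1| * 1 ≤ |v1| * x := mul_le_mul_of_nonneg_left (le_of_lt hx) (abs_nonneg _)
              linarith
            have h2 := mul_nonneg hM.le (hg1 x hx0)
            rw [add_div, mul_add, mul_add, hqM, mul_div_assoc]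
            linarith
          exact (div_le_div_of_nonneg_right e1 hx0.le).trans this
        have := mul_le_mul_of_nonneg_right e2 (Real.exp_pos (-M * x)).le
        nlinarith
    set K0 := (g 1 / 1 + g1 1 + q) * Real.exp (-M * 1) with hK0
    have hK0n : 0 ≤ K0 := mul_nonneg (add_nonneg (Tnn 1 one_pos) hq0) (Real.exp_pos _).le
    refine ⟨K0 + 1, by linarith, M + 2, by linarith, ?_⟩
    intro r hr
    have hr0 : 0 < r := lt_of_lt_of_le one_pos hr
    have h := anti (show (1:ℝ) ∈ Ici 1 by simp) hr hr
    simp only at h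
    rw [← hK0] at h
    have hT : g r / r + g1 r ≤ K0 * Real.exp (M * r) := by
      have : (g r / r + g1 r + q) = (g r / r + g1 r + q) * Real.exp (-M * r) * Real.exp (M * r) := by
        rw [mul_assoc, ← Real.exp_add]; simp
      have := mul_le_mul_of_nonneg_right h (Real.exp_pos (M * r)).le
      linarith
    have hre : r ≤ Real.exp r := by have := Real.add_one_le_exp r; linarith
    have hE : Real.exp ((M+2) * r) = Real.exp (M * r) * Real.exp r * Real.exp r := by
      rw [← Real.exp_add, ← Real.exp_add]; ring_nf
    have hE1 : 1 ≤ Real.exp r := hr.trans hre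
    have hEM := Real.exp_pos (M * r)
    have t1 : g r + r * g1 r = r * (g r / r + g1 r) := by field_simp
    have t2 : g r + r * g1 r ≤ K0 * Real.exp (M * r) * Real.exp r := by
      rw [t1, mul_comm r]
      exact mul_le_mul hT hre hr0.le (by positivity)
    have t3 : r * g r ≤ K0 * Real.exp (M * r) * Real.exp r * Real.exp r := by
      rw [mul_comm r]
      refine mul_le_mul ?_ hre hr0.le (by positivity)
      have := mul_nonneg hr0.le (hg1 r hr0)
      linarith
    have t4 : K0 * Real.exp (M * r) * Real.exp r * Real.exp r ≤ (K0+1) * Real.exp ((M+2)*r) := by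
      rw [hE]
      have : 0 < Real.exp (M * r) * Real.exp r * Real.exp r := by positivity
      nlinarith
    have t5 : K0 * Real.exp (M * r) * Real.exp r ≤ K0 * Real.exp (M * r) * Real.exp r * Real.exp r :=
      le_mul_of_one_le_right (by positivity) hE1
    exact ⟨t3.trans t4, t2.trans (t5.trans t4)⟩
  · intro hev
    simp only [not_le] at hev
    obtain ⟨R, hR⟩ := eventually_atTop.mp hev
    set R1 := max R 1 with hR1
    have hR10 : 1 ≤ R1 := le_max_right _ _
    have dd : ∀ r > (0:ℝ), HasDerivAt (fun r => g r / r + g1 r + Real.log r)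
        ((g1 r - g r / r + r * g2 r) / r + r⁻¹) r := fun r hr =>
      (dT r hr).add (Real.hasDerivAt_log hr.ne')
    have anti : AntitoneOn (fun r => g r / r + g1 r + Real.log r) (Ici R1) := by
      apply antitoneOn_of_hasDerivWithinAt_nonpos (convex_Ici R1)
        (f' := fun r => (g1 r - g r / r + r * g2 r) / r + r⁻¹)
      · intro x hx
        have hx : R1 ≤ x := hx
        exact (dd x (by linarith)).continuousAt.continuousWithinAt
      · intro x hx
        rw [interior_Ici] at hx
        have hx : R1 < x := hx
        exact (dd x (by linarith)).hasDerivWithinAt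
      · intro x hx
        rw [interior_Ici] at hx
        have hx : R1 < x := hx
        have hx0 : 0 < x := by linarith
        have := hR x ((le_max_left R 1).trans hx.le)
        have h3 : (g1 x - g x / x + x * g2 x) / x ≤ (-1) / x :=
          div_le_div_of_nonneg_right this.le hx0.le
        have : (-1) / x = - x⁻¹ := by ring
        linarith
    have ht := Real.tendsto_log_atTop.eventually_gt_atTop (g R1 / R1 + g1 R1 + Real.log R1)
    obtain ⟨x, hx1, hx2⟩ := (ht.and (eventually_ge_atTop R1)).exists
    have h := anti (show R1 ∈ Ici R1 by simp) hx2 hx2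
    simp only at h
    have := Tnn x (by linarith)
    linarith

theorem aux_deriv (m2 p lam : ℝ) (a b g g1 g2 g3 ψ ψ1 ψ2 : ℝ → ℝ) (r : ℝ) (hr : 0 < r)
    (ha : HasDerivAt a (b r) r) (hbg : b r * g r = 1)
    (h0 : HasDerivAt g (g1 r) r)
    (h1 : HasDerivAt g1 (g2 r) r)
    (h2 : HasDerivAt g2 (g3 r) r)
    (hp0 : HasDerivAt ψ (ψ1 r) r)
    (hp1 : HasDerivAt ψ1 (ψ2 r) r)
    (heq : ψ2 r = (m2 * r⁻¹^2 + (a r + p)^2 - lam) * ψ r - ψ1 r * r⁻¹) :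
    HasDerivAt (fun r => (m2 * r⁻¹^2 + (a r + p)^2 - lam) * (r * g r) * ψ r ^ 2
        - (r * g r) * ψ1 r ^ 2 - (g r + r * g1 r) * (ψ r * ψ1 r)
        + (1/2) * (g1 r - g r / r + r * g2 r) * ψ r ^ 2)
      (2 * ((a r + p) * ψ r ^ 2 * r) - ((2 * m2 * (g r / r^2)
        - (1/2) * (r * g3 r + 2 * g2 r - g1 r / r + g r / r^2)) * ψ r ^ 2
        + 2 * r * g1 r * ψ1 r ^ 2)) r := by
  have hid := hasDerivAt_id r
  have dV := ((((hasDerivAt_inv hr.ne').pow 2).const_mul m2).add ((ha.add_const p).pow 2)).sub_const lam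
  have dτ := hid.mul h0
  have dv := (h1.sub (h0.div hid hr.ne')).add (hid.mul h2)
  have := (((dV.mul dτ).mul (hp0.pow 2)).sub (dτ.mul (hp1.pow 2))).sub
    ((h0.add (hid.mul h1)).mul (hp0.mul hp1)) |>.add ((dv.const_mul (1/2)).mul (hp0.pow 2))
  refine this.congr_deriv ?_
  simp only [id, Pi.mul_apply, Pi.add_apply, Pi.sub_apply, Pi.pow_apply, Pi.div_apply, Nat.reduceSub, pow_one, Nat.cast_ofNat]
  rw [heq]
  have hb : b r = (g r)⁻¹ := eq_inv_of_mul_eq_one_left hbg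
  have hgn : g r ≠ 0 := right_ne_zero_of_mul_eq_one hbg
  rw [hb]
  field_simp
  ring

theorem aux_a (a b : ℝ → ℝ) (p : ℝ) (hbpos : ∀ r > (0:ℝ), 0 < b r)
    (hab : ∀ r > (0:ℝ), HasDerivAt a (b r) r)
    (hbzero : ∃ γ < (3/2 : ℝ), b =O[nhdsWithin 0 (Set.Ioi 0)] fun r : ℝ => r ^ (-γ)) :
    (fun r => a r + p) =O[nhdsWithin 0 (Set.Ioi 0)] fun r : ℝ => r⁻¹ := by
  obtain ⟨γ, hγ, hO⟩ := hbzero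
  obtain ⟨C, hC, hO⟩ := hO.exists_pos
  have h1 := hO.bound
  rw [eventually_nhdsWithin_iff, Metric.eventually_nhds_iff] at h1
  obtain ⟨δ, hδ, h1⟩ := h1
  set d := min (δ/2) 1 with hd
  have hd0 : 0 < d := by positivity
  have hd1 : d ≤ 1 := min_le_right _ _
  have hdδ : d < δ := lt_of_le_of_lt (min_le_left _ _) (by linarith)
  have hb : ∀ r ∈ Ioc 0 d, b r ≤ C * (r^2)⁻¹ := by
    intro r hr
    have hr0 : 0 < r := hr.1
    have := h1 (y := r) (by rw [Real.dist_eq, sub_zero, abs_of_pos hr0]; linarith [hr.2]) hr0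
    rw [Real.norm_of_nonneg (hbpos r hr0).le, Real.norm_of_nonneg (Real.rpow_nonneg hr0.le _)] at this
    refine this.trans (mul_le_mul_of_nonneg_left ?_ hC.le)
    have : (r^2)⁻¹ = r ^ (-2:ℝ) := by rw [Real.rpow_neg hr0.le]; norm_cast
    rw [this]
    exact Real.rpow_le_rpow_of_exponent_ge hr0 (hr.2.trans hd1) (by linarith)
  have mono : MonotoneOn a (Ioi 0) := by
    apply monotoneOn_of_hasDerivWithinAt_nonneg (convex_Ioi 0) (f' := b)
    · intro x hx
      exact (hab x hx).continuousAt.continuousWithinAt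
    · intro x hx
      rw [interior_Ioi] at hx
      exact (hab x hx).hasDerivWithinAt
    · intro x hx
      rw [interior_Ioi] at hx
      exact (hbpos x hx).le
  have anti : AntitoneOn (fun r => a r + C * r⁻¹) (Ioc 0 d) := by
    apply antitoneOn_of_hasDerivWithinAt_nonpos (convex_Ioc 0 d)
      (f' := fun r => b r + C * (-(r^2)⁻¹))
    · intro x hx
      exact ((hab x hx.1).add ((hasDerivAt_inv hx.1.ne').const_mul C)).continuousAt.continuousWithinAt
    · intro x hx
      rw [interior_Ioc] at hx
      exact ((hab x hx.1).add ((hasDerivAt_inv hx.1.ne').const_mul C)).hasDerivWithinAt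
    · intro x hx
      rw [interior_Ioc] at hx
      have := hb x ⟨hx.1, hx.2.le⟩
      linarith
  apply IsBigO.of_bound (|a d| + |p| + C)
  filter_upwards [Ioo_mem_nhdsGT hd0] with r hr
  have hr0 := hr.1
  have m1 := mono (mem_Ioi.mpr hr.1) (mem_Ioi.mpr hd0) hr.2.le
  have m2 := anti ⟨hr.1, hr.2.le⟩ ⟨hd0, le_rfl⟩ hr.2.le
  simp only at m2
  have hi : 1 ≤ r⁻¹ := (one_le_inv₀ hr0).mpr (hr.2.le.trans hd1)
  have hdi : 0 < C * d⁻¹ := by positivity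
  rw [Real.norm_eq_abs, Real.norm_of_nonneg (by linarith)]
  have e1 : |a d| ≤ |a d| * r⁻¹ := le_mul_of_one_le_right (abs_nonneg _) hi
  have e2 : |p| ≤ |p| * r⁻¹ := le_mul_of_one_le_right (abs_nonneg _) hi
  have e3 : 0 ≤ C * r⁻¹ := by positivity
  rw [abs_le]
  constructor
  · linarith [neg_abs_le (a d), neg_abs_le p]
  · linarith [le_abs_self (a d), le_abs_self p]

theorem aux_zero (m2 p lam μ β : ℝ) (hβ : β < 2 * μ - 1) (a g g1 g2 ψ ψ1 : ℝ → ℝ)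
    (ha : (fun r => a r + p) =O[nhdsWithin 0 (Set.Ioi 0)] fun r : ℝ => r⁻¹)
    (h0 : g =O[nhdsWithin 0 (Set.Ioi 0)] fun r : ℝ => r ^ (-β))
    (h1 : g1 =O[nhdsWithin 0 (Set.Ioi 0)] fun r : ℝ => r ^ (-β - 1))
    (h2 : g2 =O[nhdsWithin 0 (Set.Ioi 0)] fun r : ℝ => r ^ (-β - 2))
    (hp0 : ψ =O[nhdsWithin 0 (Set.Ioi 0)] fun r : ℝ => r ^ μ)
    (hp1 : ψ1 =O[nhdsWithin 0 (Set.Ioi 0)] fun r : ℝ => r ^ (μ - 1)) :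
    Tendsto (fun r => (m2 * r⁻¹^2 + (a r + p)^2 - lam) * (r * g r) * ψ r ^ 2
        - (r * g r) * ψ1 r ^ 2 - (g r + r * g1 r) * (ψ r * ψ1 r)
        + (1/2) * (g1 r - g r / r + r * g2 r) * ψ r ^ 2)
      (nhdsWithin 0 (Set.Ioi 0)) (nhds 0) := by
  have hpos : ∀ᶠ r : ℝ in nhdsWithin 0 (Set.Ioi 0), 0 < r := eventually_mem_nhdsWithin
  have hlt : ∀ᶠ r : ℝ in nhdsWithin 0 (Set.Ioi 0), r < 1 :=
    mem_nhdsWithin_of_mem_nhds (Iio_mem_nhds one_pos)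
  have id : (fun r : ℝ => r) =O[nhdsWithin 0 (Set.Ioi 0)] fun r : ℝ => r := isBigO_refl _ _
  have inv : (fun r : ℝ => r⁻¹) =O[nhdsWithin 0 (Set.Ioi 0)] fun r : ℝ => r⁻¹ := isBigO_refl _ _
  have cst : (fun _ : ℝ => lam) =O[nhdsWithin 0 (Set.Ioi 0)] fun r : ℝ => r⁻¹^2 := by
    apply IsBigO.of_bound |lam|
    filter_upwards [hpos, hlt] with r hr hr1
    have : 1 ≤ r⁻¹ := (one_le_inv₀ hr).mpr hr1.le
    rw [Real.norm_eq_abs, Real.norm_of_nonneg (by positivity)]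
    exact le_mul_of_one_le_right (abs_nonneg _) (one_le_pow₀ this)
  have hV : (fun r => m2 * r⁻¹^2 + (a r + p)^2 - lam) =O[nhdsWithin 0 (Set.Ioi 0)]
      fun r : ℝ => r⁻¹^2 :=
    (((inv.pow 2).const_mul_left m2).add (ha.pow 2)).sub cst
  have h1' : g1 =O[nhdsWithin 0 (Set.Ioi 0)] fun r : ℝ => r ^ (-β) * r⁻¹ := by
    refine h1.congr' EventuallyEq.rfl ?_
    filter_upwards [hpos] with r hr
    rw [Real.rpow_sub hr, Real.rpow_one]; rfl
  have h2' : g2 =O[nhdsWithin 0 (Set.Ioi 0)] fun r : ℝ => r ^ (-β) * r⁻¹ ^ 2 := by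
    refine h2.congr' EventuallyEq.rfl ?_
    filter_upwards [hpos] with r hr
    rw [Real.rpow_sub hr, Real.rpow_two, inv_pow]; rfl
  have hp1' : ψ1 =O[nhdsWithin 0 (Set.Ioi 0)] fun r : ℝ => r ^ μ * r⁻¹ := by
    refine hp1.congr' EventuallyEq.rfl ?_
    filter_upwards [hpos] with r hr
    rw [Real.rpow_sub hr, Real.rpow_one]; rfl
  have key : ∀ f h : ℝ → ℝ, f =O[nhdsWithin 0 (Set.Ioi 0)] h →
      (∀ r > 0, h r = (r ^ μ)^2 * r ^ (-β) * r⁻¹) →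
      f =O[nhdsWithin 0 (Set.Ioi 0)] fun r : ℝ => (r ^ μ)^2 * r ^ (-β) * r⁻¹ := by
    intro f h hf hh
    refine hf.congr' EventuallyEq.rfl ?_
    filter_upwards [hpos] with r hr
    exact hh r hr
  have t1 := key _ _ ((hV.mul (id.mul h0)).mul (hp0.pow 2)) (by intro r hr; field_simp)
  have t2 := key _ _ ((id.mul h0).mul (hp1'.pow 2)) (by intro r hr; field_simp)
  have s1 : (fun r => g r + r * g1 r) =O[nhdsWithin 0 (Set.Ioi 0)] fun r : ℝ => r ^ (-β) := by
    refine h0.add ((id.mul h1').congr' EventuallyEq.rfl ?_)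
    filter_upwards [hpos] with r hr
    field_simp
  have t3 := key _ _ (s1.mul (hp0.mul hp1')) (by intro r hr; ring)
  have s2 : (fun r => g1 r - g r / r + r * g2 r) =O[nhdsWithin 0 (Set.Ioi 0)]
      fun r : ℝ => r ^ (-β) * r⁻¹ := by
    refine (h1'.sub (h0.mul inv)).add ((id.mul h2').congr' EventuallyEq.rfl ?_)
    filter_upwards [hpos] with r hr
    field_simp
  have t4 := key _ _ ((s2.const_mul_left (1/2)).mul (hp0.pow 2)) (by intro r hr; ring)
  have tot := ((t1.sub t2).sub t3).add t4
  refine tot.trans_tendsto ?_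
  have hlim : Tendsto (fun r : ℝ => r ^ (2 * μ - 1 - β)) (nhdsWithin 0 (Set.Ioi 0)) (nhds 0) := by
    have hc : ContinuousAt (fun r : ℝ => r ^ (2 * μ - 1 - β)) 0 :=
      Real.continuousAt_rpow_const _ _ (Or.inr (by linarith))
    have := hc.tendsto
    rw [Real.zero_rpow (by linarith)] at this
    exact this.mono_left nhdsWithin_le_nhds
  refine hlim.congr' ?_
  filter_upwards [hpos] with r hr
  rw [show 2 * μ - 1 - β = μ + μ + (-β) + (-1) by ring, Real.rpow_add hr, Real.rpow_add hr,
    Real.rpow_add hr, Real.rpow_neg_one]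
  ring

theorem aux_inf (m2 p lam K N : ℝ) (hm2 : 0 ≤ m2) (hN : 0 < N) (a g g1 g2 ψ ψ1 : ℝ → ℝ)
    (hg : ∀ r > (0:ℝ), 0 ≤ g r) (hg1 : ∀ r > (0:ℝ), 0 ≤ g1 r)
    (hK : ∀ r ≥ (1:ℝ), r * g r ≤ K * Real.exp (N * r) ∧
      g r + r * g1 r ≤ K * Real.exp (N * r))
    (hf : ∃ᶠ r in atTop, -1 ≤ g1 r - g r / r + r * g2 r)
    (hψ : Tendsto (fun r => Real.exp (N * r) * ψ r) atTop (nhds 0))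
    (hψ1 : Tendsto (fun r => Real.exp (N * r) * ψ1 r) atTop (nhds 0))
    (η : ℝ) (hη : 0 < η) :
    ∃ᶠ r in atTop, -η ≤ (m2 * r⁻¹^2 + (a r + p)^2 - lam) * (r * g r) * ψ r ^ 2
        - (r * g r) * ψ1 r ^ 2 - (g r + r * g1 r) * (ψ r * ψ1 r)
        + (1/2) * (g1 r - g r / r + r * g2 r) * ψ r ^ 2 := by
  have hlim : Tendsto (fun r => |lam| * |K| * (Real.exp (N * r) * ψ r)^2
      + |K| * (Real.exp (N * r) * ψ1 r)^2
      + |K| * |(Real.exp (N * r) * ψ r) * (Real.exp (N * r) * ψ1 r)|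
      + (Real.exp (N * r) * ψ r)^2) atTop (nhds 0) := by
    have := (((hψ.pow 2).const_mul (|lam| * |K|)).add ((hψ1.pow 2).const_mul |K|)).add
      ((hψ.mul hψ1).abs.const_mul |K|) |>.add (hψ.pow 2)
    simpa using this
  have hev := hlim.eventually_lt_const hη
  refine (hf.and_eventually (hev.and (eventually_ge_atTop 1))).mono ?_
  rintro r ⟨hv, hs, hr⟩
  have hr0 : 0 < r := lt_of_lt_of_le one_pos hr
  obtain ⟨k1, k2⟩ := hK r hr
  set E := Real.exp (N * r) with hE
  have hE1 : 1 ≤ E := Real.one_le_exp (by positivity)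
  set τ := r * g r with hτ
  set τ' := g r + r * g1 r with hτ'
  set w := g1 r - g r / r + r * g2 r with hw
  have hτ0 : 0 ≤ τ := mul_nonneg hr0.le (hg r hr0)
  have hτ'0 : 0 ≤ τ' := add_nonneg (hg r hr0) (mul_nonneg hr0.le (hg1 r hr0))
  have hKE : K * E ≤ |K| * E^2 := by
    have : K * E ≤ |K| * E := mul_le_mul_of_nonneg_right (le_abs_self K) (by linarith)
    have h2 : |K| * E ≤ |K| * E^2 := mul_le_mul_of_nonneg_left (by nlinarith) (abs_nonneg _)
    linarith
  have b1 : τ ≤ |K| * E^2 := k1.trans hKE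
  have b2 : τ' ≤ |K| * E^2 := k2.trans hKE
  have i1 : -(|lam| * (|K| * E^2) * ψ r ^ 2) ≤
      (m2 * r⁻¹^2 + (a r + p)^2 - lam) * τ * ψ r ^ 2 := by
    have hV : -|lam| ≤ m2 * r⁻¹^2 + (a r + p)^2 - lam := by
      have : 0 ≤ m2 * r⁻¹^2 := by positivity
      have := sq_nonneg (a r + p)
      linarith [le_abs_self lam]
    have q1 : |lam| * τ * ψ r ^ 2 ≤ |lam| * (|K| * E^2) * ψ r ^ 2 := by gcongr
    have q2 := mul_le_mul_of_nonneg_right (mul_le_mul_of_nonneg_right hV hτ0) (sq_nonneg (ψ r))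
    linarith
  have i2 : τ * ψ1 r ^ 2 ≤ |K| * E^2 * ψ1 r ^ 2 := by gcongr
  have i3 : τ' * (ψ r * ψ1 r) ≤ |K| * E^2 * |ψ r * ψ1 r| :=
    (mul_le_mul_of_nonneg_left (le_abs_self _) hτ'0).trans
      (mul_le_mul_of_nonneg_right b2 (abs_nonneg _))
  have i4 : -(E^2 * ψ r ^ 2) ≤ (1/2) * w * ψ r ^ 2 := by
    have : -E^2 ≤ (1/2) * w := by nlinarith
    nlinarith [mul_le_mul_of_nonneg_right this (sq_nonneg (ψ r))]
  have e1 : |(E * ψ r) * (E * ψ1 r)| = E^2 * |ψ r * ψ1 r| := by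
    rw [show (E * ψ r) * (E * ψ1 r) = E^2 * (ψ r * ψ1 r) by ring, abs_mul, abs_of_nonneg (by positivity)]
  rw [e1, mul_pow, mul_pow] at hs
  linarith

theorem aux_final (f F F' : ℝ → ℝ)
    (hF : ∀ r > (0:ℝ), HasDerivAt F (F' r) r) (hle : ∀ r > (0:ℝ), F' r ≤ 2 * f r)
    (hz : Tendsto F (nhdsWithin 0 (Set.Ioi 0)) (nhds 0))
    (hi : ∀ η > 0, ∃ᶠ r in atTop, -η ≤ F r) :
    0 ≤ 2 * ∫ r in Set.Ioi (0:ℝ), f r := by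
  by_cases hint : IntegrableOn f (Ioi 0)
  swap
  · rw [integral_undef hint]; simp
  have step1 : ∀ ε > (0:ℝ), -F ε ≤ 2 * ∫ r in Ioi ε, f r := by
    intro ε hε
    have hint' : IntegrableOn f (Ioi ε) := hint.mono_set (Ioi_subset_Ioi hε.le)
    have ht := (intervalIntegral_tendsto_integral_Ioi ε hint' tendsto_id).const_mul 2
    apply le_of_forall_pos_le_add
    intro η hη
    by_contra! hcon
    have hev := ht.eventually_lt_const (show _ < -F ε - η by linarith)
    obtain ⟨R, hR, hR1, hR2⟩ := ((hi η hη).and_eventually (hev.and (eventually_gt_atTop ε))).exists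
    have := intervalIntegral.sub_le_integral_of_hasDeriv_right_of_le (g := F) (g' := F')
      (φ := fun r => 2 * f r) hR2.le
      (fun x hx => (hF x (lt_of_lt_of_le hε hx.1)).continuousAt.continuousWithinAt)
      (fun x hx => (hF x (hε.trans hx.1)).hasDerivWithinAt)
      ((hint.mono_set (fun x hx => lt_of_lt_of_le hε hx.1)).const_mul 2)
      (fun x hx => hle x (hε.trans hx.1))
    rw [intervalIntegral.integral_const_mul] at this
    simp only [id] at hR1
    linarith
  have hii : IntervalIntegrable f volume 0 1 := by
    rw [intervalIntegrable_iff_integrableOn_Ioc_of_le zero_le_one]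
    exact hint.mono_set Ioc_subset_Ioi_self
  have hcont := intervalIntegral.continuousOn_primitive_interval' hii (a := 0) (by simp)
  have hc0 := (hcont 0 (by simp)).tendsto
  rw [intervalIntegral.integral_same, uIcc_of_le zero_le_one] at hc0
  have hc1 : Tendsto (fun b => ∫ x in (0:ℝ)..b, f x) (nhdsWithin 0 (Ioi 0)) (nhds 0) := by
    refine hc0.mono_left ?_
    rw [← nhdsWithin_Ioc_eq_nhdsGT (zero_lt_one (α := ℝ))]
    exact nhdsWithin_mono _ Ioc_subset_Icc_self
  have hlim : Tendsto (fun ε => -F ε + 2 * ∫ x in (0:ℝ)..ε, f x) (nhdsWithin 0 (Ioi 0)) (nhds 0) := by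
    simpa using hz.neg.add (hc1.const_mul 2)
  refine le_of_tendsto hlim ?_
  filter_upwards [self_mem_nhdsWithin] with ε hε
  have hε : 0 < ε := hε
  have := intervalIntegral.integral_interval_add_Ioi hint (hint.mono_set (Ioi_subset_Ioi hε.le))
  have := step1 ε hε
  linarith

/-- Corollary 4.4 of the paper: under the hypotheses of the group-velocity formula, if in
addition `b′(r) ≤ 0` and `r² b(r) v′(r) ≤ 4m²` for all `r > 0`, then the group velocity
`2∫₀^∞ (a+p) ψ² r dr` is nonnegative. -/
theorem group_velocity_nonneg
    (m : ℤ) (hm : m ≠ 0)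
    (b b' : ℝ → ℝ) (hbC3 : ContDiffOn ℝ 3 b (Set.Ioi 0))
    (hbpos : ∀ r > (0:ℝ), 0 < b r)
    (hb' : ∀ r > (0:ℝ), HasDerivAt b (b' r) r)
    (a : ℝ → ℝ) (hab : ∀ r > (0:ℝ), HasDerivAt a (b r) r)
    (hainf : Tendsto a atTop atTop)
    (hbexp : ∃ c > (0:ℝ), b =O[atTop] fun r => Real.exp (c * r))
    (hbzero : ∃ γ < (3/2 : ℝ), b =O[nhdsWithin 0 (Set.Ioi 0)] fun r : ℝ => r ^ (-γ))
    (hbinv : ∃ β < 2 * |(m : ℝ)| - 1, ∃ C > (0:ℝ), ∃ δ > (0:ℝ), ∀ k ≤ 3,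
      ∀ r ∈ Set.Ioo (0:ℝ) δ,
        |deriv^[k] (fun s => (b s)⁻¹) r| ≤ C * r ^ (-β - (k : ℝ)))
    (τ v : ℝ → ℝ)
    (hτ : ∀ r : ℝ, τ r = r / b r)
    (hv : ∀ r > (0:ℝ), v r = r * deriv (fun s => s⁻¹ * deriv τ s) r)
    (p lam : ℝ) (ψ : ℝ → ℝ)
    (hψC2 : ContDiffOn ℝ 2 ψ (Set.Ioi 0))
    (hψeq : ∀ r > (0:ℝ), -r⁻¹ * deriv (fun s => s * deriv ψ s) r
        + (m : ℝ) ^ 2 * r⁻¹ ^ 2 * ψ r + (a r + p) ^ 2 * ψ r = lam * ψ r)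
    (hψnorm : (∫ r in Set.Ioi (0:ℝ), (ψ r) ^ 2 * r) = 1)
    (hψzero : ψ =O[nhdsWithin 0 (Set.Ioi 0)] fun r : ℝ => r ^ (|(m : ℝ)|))
    (hψ'zero : deriv ψ =O[nhdsWithin 0 (Set.Ioi 0)] fun r : ℝ => r ^ (|(m : ℝ)| - 1))
    (hψdec : ∀ N > (0:ℝ), Tendsto (fun r => Real.exp (N * r) * ψ r) atTop (nhds 0))
    (hψ'dec : ∀ N > (0:ℝ), Tendsto (fun r => Real.exp (N * r) * deriv ψ r) atTop (nhds 0))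
    (hb'neg : ∀ r > (0:ℝ), b' r ≤ 0)
    (hvcond : ∀ r > (0:ℝ), r ^ 2 * b r * deriv v r ≤ 4 * (m : ℝ) ^ 2)
    :
    0 ≤ 2 * ∫ r in Set.Ioi (0:ℝ), (a r + p) * (ψ r) ^ 2 * r := by
  set g : ℝ → ℝ := fun s => (b s)⁻¹ with hgdef
  have hop : IsOpen (Ioi (0:ℝ)) := isOpen_Ioi
  have c0 : ContDiffOn ℝ 3 g (Ioi 0) := hbC3.inv (fun r hr => (hbpos r hr).ne')
  have c1 : ContDiffOn ℝ 2 (deriv g) (Ioi 0) := c0.deriv_of_isOpen hop (by norm_num)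
  have c2 : ContDiffOn ℝ 1 (deriv (deriv g)) (Ioi 0) := c1.deriv_of_isOpen hop (by norm_num)
  have d0 : ∀ r > (0:ℝ), HasDerivAt g (deriv g r) r := fun r hr =>
    ((c0.differentiableOn (by norm_num)).differentiableAt (hop.mem_nhds hr)).hasDerivAt
  have d1 : ∀ r > (0:ℝ), HasDerivAt (deriv g) (deriv (deriv g) r) r := fun r hr =>
    ((c1.differentiableOn (by norm_num)).differentiableAt (hop.mem_nhds hr)).hasDerivAt
  have d2 : ∀ r > (0:ℝ), HasDerivAt (deriv (deriv g)) (deriv (deriv (deriv g)) r) r := fun r hr =>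
    ((c2.differentiableOn (by norm_num)).differentiableAt (hop.mem_nhds hr)).hasDerivAt
  have cp1 : ContDiffOn ℝ 1 (deriv ψ) (Ioi 0) := hψC2.deriv_of_isOpen hop (by norm_num)
  have p0 : ∀ r > (0:ℝ), HasDerivAt ψ (deriv ψ r) r := fun r hr =>
    ((hψC2.differentiableOn (by norm_num)).differentiableAt (hop.mem_nhds hr)).hasDerivAt
  have p1 : ∀ r > (0:ℝ), HasDerivAt (deriv ψ) (deriv (deriv ψ) r) r := fun r hr =>
    ((cp1.differentiableOn (by norm_num)).differentiableAt (hop.mem_nhds hr)).hasDerivAt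
  have hgpos : ∀ r > (0:ℝ), 0 < g r := fun r hr => inv_pos.mpr (hbpos r hr)
  have hg1 : ∀ r > (0:ℝ), 0 ≤ deriv g r := by
    intro r hr
    have : HasDerivAt g (-(b' r) / (b r)^2) r := (hb' r hr).inv (hbpos r hr).ne'
    rw [this.deriv]
    exact div_nonneg (by linarith [hb'neg r hr]) (sq_nonneg _)
  have hbg : ∀ r > (0:ℝ), b r * g r = 1 := fun r hr => mul_inv_cancel₀ (hbpos r hr).ne'
  -- formula for the derivative of v
  have dτ : ∀ r > (0:ℝ), deriv τ r = g r + r * deriv g r := by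
    intro r hr
    have e : τ = fun s => s * g s := by
      funext s; rw [hτ s, div_eq_mul_inv]
    rw [e]
    have h2 : deriv (fun s => s * g s) r = _ := ((hasDerivAt_id r).mul (d0 r hr)).deriv
    rw [h2, one_mul]; rfl
  have vform : ∀ r > (0:ℝ), v r = deriv g r - g r / r + r * deriv (deriv g) r := by
    intro r hr
    rw [hv r hr]
    have e : (fun s => s⁻¹ * deriv τ s) =ᶠ[nhds r] fun s => s⁻¹ * (g s + s * deriv g s) := by
      filter_upwards [hop.mem_nhds hr] with s hs
      rw [dτ s hs]
    rw [e.deriv_eq]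
    have := (hasDerivAt_inv hr.ne').mul ((d0 r hr).add ((hasDerivAt_id r).mul (d1 r hr)))
    have h2 : deriv (fun s => s⁻¹ * (g s + s * deriv g s)) r = _ := this.deriv
    rw [h2]
    simp only [id, Pi.add_apply, Pi.mul_apply]
    field_simp
    ring
  have dv : ∀ r > (0:ℝ), deriv v r = r * deriv (deriv (deriv g)) r + 2 * deriv (deriv g) r
      - deriv g r / r + g r / r^2 := by
    intro r hr
    have e : v =ᶠ[nhds r] fun r => deriv g r - g r / r + r * deriv (deriv g) r := by
      filter_upwards [hop.mem_nhds hr] with s hs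
      exact vform s hs
    rw [e.deriv_eq]
    have := ((d1 r hr).sub ((d0 r hr).div (hasDerivAt_id r) hr.ne')).add
      ((hasDerivAt_id r).mul (d2 r hr))
    have h2 : deriv (fun r => deriv g r - g r / r + r * deriv (deriv g) r) r = _ := this.deriv
    rw [h2]
    simp only [id]
    field_simp
    ring
  have hc : ∀ r > (0:ℝ), r * deriv (deriv (deriv g)) r + 2 * deriv (deriv g) r
      - deriv g r / r + g r / r^2 ≤ (4 * (m:ℝ)^2) * (g r / r^2) := by
    intro r hr
    have h := hvcond r hr
    rw [dv r hr] at h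
    have hq : 0 ≤ g r / r^2 := div_nonneg (hgpos r hr).le (sq_nonneg r)
    have h3 := mul_le_mul_of_nonneg_right h hq
    have h4 : ∀ X : ℝ, r^2 * b r * X * (g r / r^2) = X := by
      intro X
      have : r^2 * b r * X * (g r / r^2) = (b r * g r) * X * (r^2 / r^2) := by ring
      rw [this, hbg r hr, div_self (by positivity)]; ring
    rwa [h4] at h3
  have hm2 : 0 < (m:ℝ)^2 := by positivity
  obtain ⟨⟨K, hK0, N, hN, hK⟩, hfreq⟩ := aux_growth g (deriv g) (deriv (deriv g))
    (deriv (deriv (deriv g))) (4 * (m:ℝ)^2) (by positivity) d0 d1 d2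
    (fun r hr => (hgpos r hr).le) hg1 hc
  obtain ⟨β, hβ, C, hC, δ, hδ, hbd⟩ := hbinv
  have hO : ∀ k ≤ 3, deriv^[k] g =O[nhdsWithin 0 (Set.Ioi 0)] fun r : ℝ => r ^ (-β - (k:ℝ)) := by
    intro k hk
    apply IsBigO.of_bound C
    filter_upwards [Ioo_mem_nhdsGT hδ] with r hr
    rw [Real.norm_eq_abs, Real.norm_of_nonneg (Real.rpow_nonneg hr.1.le _)]
    exact hbd k hk r hr
  have o0 := hO 0 (by norm_num)
  have o1 := hO 1 (by norm_num)
  have o2 := hO 2 (by norm_num)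
  simp only [Function.iterate_succ, Function.iterate_zero, Function.comp, id, Nat.cast_zero, sub_zero,
    Nat.cast_one, Nat.cast_ofNat] at o0 o1 o2
  have hz := aux_zero ((m:ℝ)^2) p lam |(m:ℝ)| β hβ a g (deriv g) (deriv (deriv g)) ψ (deriv ψ)
    (aux_a a b p hbpos hab hbzero) o0 o1 o2 hψzero hψ'zero
  have hi := aux_inf ((m:ℝ)^2) p lam K N hm2.le hN a g (deriv g) (deriv (deriv g)) ψ (deriv ψ)
    (fun r hr => (hgpos r hr).le) hg1 hK hfreq (hψdec N hN) (hψ'dec N hN)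
  have hψ2 : ∀ r > (0:ℝ), deriv (deriv ψ) r =
      ((m:ℝ)^2 * r⁻¹^2 + (a r + p)^2 - lam) * ψ r - deriv ψ r * r⁻¹ := by
    intro r hr
    have h := hψeq r hr
    have h2 : deriv (fun s => s * deriv ψ s) r = _ :=
      ((hasDerivAt_id r).mul (p1 r hr)).deriv
    rw [h2] at h
    simp only [id] at h
    have h3 : r⁻¹ * (1 * deriv ψ r + r * deriv (deriv ψ) r) =
        deriv ψ r * r⁻¹ + deriv (deriv ψ) r := by field_simp
    linarith
  refine aux_final (fun r => (a r + p) * (ψ r) ^ 2 * r) _ _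
    (fun r hr => aux_deriv ((m:ℝ)^2) p lam a b g (deriv g) (deriv (deriv g))
      (deriv (deriv (deriv g))) ψ (deriv ψ) (deriv (deriv ψ)) r hr (hab r hr) (hbg r hr)
      (d0 r hr) (d1 r hr) (d2 r hr) (p0 r hr) (p1 r hr) (hψ2 r hr)) ?_ hz hi
  intro r hr
  have hcr := hc r hr
  have e1 : 0 ≤ (2 * (m:ℝ)^2 * (g r / r^2)
        - (1/2) * (r * deriv (deriv (deriv g)) r + 2 * deriv (deriv g) r
          - deriv g r / r + g r / r^2)) * ψ r ^ 2 :=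
    mul_nonneg (by linarith) (sq_nonneg _)
  have e2 : 0 ≤ 2 * r * deriv g r * deriv ψ r ^ 2 :=
    mul_nonneg (mul_nonneg (by linarith) (hg1 r hr)) (sq_nonneg _)
  linarith
end
end

section
/- Let b₀ > 0 and δ ∈ [0,1], set b(r) = b₀ r^{−δ}, and let a be an antiderivative of b (a(r) = b₀ r^{1−δ}/(1−δ) for δ < 1, a(r) = b₀ ln r for δ = 1). Let p, λ ∈ ℝ and let ψ : (0,∞) → ℝ be a twice continuously differentiable solution of −r⁻¹(r ψ'(r))' + (a(r)+p)² ψ(r) = λ ψ(r) with ∫₀^∞ ψ(r)² r dr = 1, such that ψ(r) has a finite limit ψ(0) as r → 0, ψ'(r) = O(r^{1−ε}) as r → 0 for every ε > 0, and e^{Nr} ψ(r) → 0, e^{Nr} ψ'(r) → 0 as r → ∞ for every N > 0. Then 2 ∫₀^∞ (a(r)+p) ψ(r)² r dr = 2 b₀⁻¹ δ ∫₀^∞ r^δ ψ'(r)² dr − (1/2) b₀⁻¹ (1−δ)²(1+δ) ∫₀^∞ r^{δ−2} ( ψ(r)² − ψ(0)² ) dr. In particular, if δ = 1 then 2 ∫₀^∞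 (a(r)+p) ψ(r)² r dr > 0. -/
open MeasureTheory Set Filter Asymptotics

noncomputable section

open Topology

lemma gv_ftc {F f : ℝ → ℝ} (hd : ∀ r > (0:ℝ), HasDerivAt F (f r) r)
    (hi : IntegrableOn f (Ioi 0)) (h0 : Tendsto F (𝓝[>] 0) (𝓝 0))
    (h1 : Tendsto F atTop (𝓝 0)) : ∫ r in Ioi (0:ℝ), f r = 0 := by
  have key := integral_Ioi_of_hasDerivAt_of_tendsto (f := Function.update F 0 0) (f' := f)
    (a := 0) (m := 0) ?_ ?_ hi ?_
  · simpa using key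
  · rw [continuousWithinAt_update_same]
    simpa using h0
  · intro x hx
    refine (hd x hx).congr_of_eventuallyEq ?_
    filter_upwards [isOpen_ne.mem_nhds (ne_of_gt hx : x ≠ 0)] with y hy
    exact Function.update_of_ne hy _ _
  · refine h1.congr' ?_
    filter_upwards [eventually_gt_atTop 0] with y hy
    exact (Function.update_of_ne hy.ne' _ _).symm

lemma gv_int {f : ℝ → ℝ} {α : ℝ} (hc : ContinuousOn f (Ioi 0)) (hα : 1 < α)
    (h1 : f =O[atTop] fun r : ℝ => r ^ (-α)) (h0 : f =O[𝓝[>] 0] fun r : ℝ => r ^ (-(1/2) : ℝ)) :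
    IntegrableOn f (Ioi 0) := by
  have := mellin_convergent_of_isBigO_scalar (s := 1)
    (hc.locallyIntegrableOn measurableSet_Ioi) h1 hα h0 (by norm_num)
  simpa using this

lemma gv_pow {f : ℝ → ℝ} (h : ∀ N > (0:ℝ), Tendsto (fun r => Real.exp (N * r) * f r) atTop (𝓝 0))
    (n : ℕ) : Tendsto (fun r => r ^ n * f r) atTop (𝓝 0) := by
  have h1 := (tendsto_rpow_mul_exp_neg_mul_atTop_nhds_zero n 1 one_pos).mul (h 1 one_pos)
  rw [mul_zero] at h1
  refine h1.congr fun r => ?_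
  rw [Real.rpow_natCast, mul_assoc, ← mul_assoc (Real.exp _), ← Real.exp_add]
  simp

lemma gv_O {f : ℝ → ℝ} (h : Tendsto (fun r => r ^ 2 * f r) atTop (𝓝 0)) :
    f =O[atTop] fun r : ℝ => r ^ (-2 : ℝ) := by
  have h1 := (h.isBigO_one ℝ).mul (isBigO_refl (fun r : ℝ => r ^ (-2 : ℝ)) atTop)
  refine (h1.congr' ?_ ?_)
  · filter_upwards [eventually_gt_atTop 0] with r hr
    rw [Real.rpow_neg hr.le, Real.rpow_two]; field_simp
  · filter_upwards with r; simp

lemma gv_rpow0 {x : ℝ} (hx : 0 < x) : Tendsto (fun r : ℝ => r ^ x) (𝓝[>] 0) (𝓝 0) := by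
  have := (Real.continuousAt_rpow_const 0 x (Or.inr hx.le)).tendsto
  rw [Real.zero_rpow hx.ne'] at this
  exact this.mono_left nhdsWithin_le_nhds

lemma gv_hold {ψ : ℝ → ℝ} {ψ₀ : ℝ} (hd : ∀ r > (0:ℝ), DifferentiableAt ℝ ψ r)
    (h0 : Tendsto ψ (𝓝[>] 0) (𝓝 ψ₀))
    (h1 : deriv ψ =O[𝓝[>] 0] fun r : ℝ => r ^ (1/2 : ℝ)) :
    (fun r => ψ r - ψ₀) =O[𝓝[>] 0] fun r : ℝ => r ^ (3/2 : ℝ) := by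
  obtain ⟨C, hC⟩ := h1.bound
  obtain ⟨η, hη, hb⟩ := (mem_nhdsGT_iff_exists_Ioo_subset (a := (0:ℝ))).1 hC
  refine IsBigO.of_bound C ?_
  filter_upwards [Ioo_mem_nhdsGT hη] with r hr
  have hr0 := hr.1
  have hlim : Tendsto (fun s => ‖ψ r - ψ s‖) (𝓝[>] 0) (𝓝 ‖ψ r - ψ₀‖) :=
    (tendsto_const_nhds.sub h0).norm
  refine le_of_tendsto hlim ?_
  have hCn : 0 ≤ C := by
    have h := hb hr
    simp only [mem_ofPred_eq] at h
    by_contra hneg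
    have h2 : 0 < ‖r ^ (1/2 : ℝ)‖ := norm_pos_iff.2 (by positivity)
    nlinarith [norm_nonneg (deriv ψ r)]
  filter_upwards [Ioo_mem_nhdsGT hr0] with s hs
  have hs0 := hs.1
  have := (convex_Icc s r).norm_image_sub_le_of_norm_deriv_le (f := ψ) (C := C * r ^ (1/2 : ℝ))
    (x := s) (y := r) (fun x hx => hd x (hs0.trans_le hx.1)) (fun x hx => ?_)
    (left_mem_Icc.2 hs.2.le) (right_mem_Icc.2 hs.2.le)
  · refine this.trans ?_
    have e : r ^ (3/2 : ℝ) = r ^ (1/2 : ℝ) * r := by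
      rw [show (3/2 : ℝ) = 1/2 + 1 by norm_num, Real.rpow_add hr0, Real.rpow_one]
    rw [e, Real.norm_of_nonneg (by positivity : 0 ≤ r ^ (1/2 : ℝ) * r), ← mul_assoc]
    have : ‖r - s‖ ≤ r := by rw [Real.norm_of_nonneg (by linarith [hs.2])]; linarith
    gcongr
  · have h : ‖deriv ψ x‖ ≤ C * ‖x ^ (1/2 : ℝ)‖ := hb ⟨hs0.trans_le hx.1, hx.2.trans_lt hr.2⟩
    have hx0 : 0 < x := hs0.trans_le hx.1
    rw [Real.norm_of_nonneg (by positivity : 0 ≤ x ^ (1/2 : ℝ))] at h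
    refine h.trans ?_
    gcongr
    exact hx.2

lemma gv_a {b₀ δ : ℝ} (hδ : δ ∈ Set.Icc (0:ℝ) 1) {a : ℝ → ℝ}
    (ha : (δ = 1 ∧ ∀ r > (0:ℝ), a r = b₀ * Real.log r) ∨
          (δ < 1 ∧ ∀ r > (0:ℝ), a r = b₀ * r ^ (1 - δ) / (1 - δ))) :
    (∀ r > (0:ℝ), HasDerivAt a (b₀ / r ^ δ) r) ∧
    Tendsto (fun r => r ^ (1/2 : ℝ) * a r) (𝓝[>] 0) (𝓝 0) ∧
    Tendsto (fun r => a r / r ^ 2) atTop (𝓝 0) := by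
  rcases ha with ⟨h1, ha⟩ | ⟨h1, ha⟩
  · subst h1
    refine ⟨fun r hr => ?_, ?_, ?_⟩
    · have : HasDerivAt (fun r => b₀ * Real.log r) (b₀ / r ^ (1:ℝ)) r := by
        rw [Real.rpow_one]; exact (Real.hasDerivAt_log hr.ne').const_mul b₀
      refine this.congr_of_eventuallyEq ?_
      filter_upwards [lt_mem_nhds hr] with y hy using ha y hy
    · have := (tendsto_log_mul_rpow_nhdsGT_zero (r := 1/2) (by norm_num)).const_mul b₀
      rw [mul_zero] at this
      refine this.congr' ?_
      filter_upwards [self_mem_nhdsWithin] with y hy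
      rw [ha y hy]; ring
    · have := ((isLittleO_log_rpow_atTop (r := 2) (by norm_num)).tendsto_div_nhds_zero).const_mul b₀
      rw [mul_zero] at this
      refine this.congr' ?_
      filter_upwards [eventually_gt_atTop 0] with y hy
      rw [ha y hy, Real.rpow_two]; ring
  · have h1' : 1 - δ ≠ 0 := by linarith
    refine ⟨fun r hr => ?_, ?_, ?_⟩
    · have : HasDerivAt (fun r : ℝ => b₀ * r ^ (1 - δ) / (1 - δ)) (b₀ / r ^ δ) r := by
        have h := ((Real.hasDerivAt_rpow_const (x := r) (p := 1 - δ) (Or.inl hr.ne')).const_mul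
          b₀).div_const (1 - δ)
        refine h.congr_deriv ?_
        rw [show 1 - δ - 1 = -δ by ring, Real.rpow_neg hr.le]
        field_simp
      refine this.congr_of_eventuallyEq ?_
      filter_upwards [lt_mem_nhds hr] with y hy using ha y hy
    · have := (gv_rpow0 (x := 1/2 + (1 - δ)) (by linarith)).const_mul (b₀ / (1 - δ))
      rw [mul_zero] at this
      refine this.congr' ?_
      filter_upwards [self_mem_nhdsWithin] with y hy
      rw [ha y hy, Real.rpow_add hy]; ring
    · have := (tendsto_rpow_neg_atTop (y := 1 + δ) (by linarith [hδ.1])).const_mul (b₀ / (1 - δ))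
      rw [mul_zero] at this
      refine this.congr' ?_
      filter_upwards [eventually_gt_atTop 0] with y hy
      rw [ha y hy, show -(1 + δ) = (1 - δ) - 2 by ring, Real.rpow_sub hy, Real.rpow_two]; ring

/-- Proposition 4.5 of the paper: for the field `b(r) = b₀ r^{-δ}` with `b₀ > 0`,
`δ ∈ [0,1]`, and its antiderivative `a` (`a(r) = b₀ r^{1-δ}/(1-δ)` for `δ < 1`,
`a(r) = b₀ ln r` for `δ = 1`), a normalized eigenfunction `ψ` of the fiber operator `H_0(p)`
with the stated behaviour at `0` and at `∞` satisfies the group-velocity formula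
`2∫₀^∞ (a+p) ψ² r dr
  = 2 b₀⁻¹ δ ∫ r^δ (ψ′)² dr - (1/2) b₀⁻¹ (1-δ)²(1+δ) ∫ r^{δ-2} (ψ² - ψ(0)²) dr`;
in particular the left-hand side is strictly positive when `δ = 1`. -/
theorem group_velocity_formula_m_zero
    (b₀ : ℝ) (hb₀ : 0 < b₀) (δ : ℝ) (hδ : δ ∈ Set.Icc (0:ℝ) 1)
    (a : ℝ → ℝ)
    (ha : (δ = 1 ∧ ∀ r > (0:ℝ), a r = b₀ * Real.log r) ∨
          (δ < 1 ∧ ∀ r > (0:ℝ), a r = b₀ * r ^ (1 - δ) / (1 - δ)))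
    (p lam : ℝ) (ψ : ℝ → ℝ) (ψ₀ : ℝ)
    (hψC2 : ContDiffOn ℝ 2 ψ (Set.Ioi 0))
    (hψeq : ∀ r > (0:ℝ), -r⁻¹ * deriv (fun s => s * deriv ψ s) r
        + (a r + p) ^ 2 * ψ r = lam * ψ r)
    (hψnorm : (∫ r in Set.Ioi (0:ℝ), (ψ r) ^ 2 * r) = 1)
    (hψzero : Tendsto ψ (nhdsWithin 0 (Set.Ioi 0)) (nhds ψ₀))
    (hψ'zero : ∀ ε > (0:ℝ),
      deriv ψ =O[nhdsWithin 0 (Set.Ioi 0)] fun r : ℝ => r ^ (1 - ε))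
    (hψdec : ∀ N > (0:ℝ), Tendsto (fun r => Real.exp (N * r) * ψ r) atTop (nhds 0))
    (hψ'dec : ∀ N > (0:ℝ),
      Tendsto (fun r => Real.exp (N * r) * deriv ψ r) atTop (nhds 0)) :
    (2 * (∫ r in Set.Ioi (0:ℝ), (a r + p) * (ψ r) ^ 2 * r) =
        2 * b₀⁻¹ * δ * (∫ r in Set.Ioi (0:ℝ), r ^ δ * (deriv ψ r) ^ 2)
        - (1/2) * b₀⁻¹ * (1 - δ) ^ 2 * (1 + δ) *
            ∫ r in Set.Ioi (0:ℝ), r ^ (δ - 2) * ((ψ r) ^ 2 - ψ₀ ^ 2)) ∧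
    (δ = 1 → 0 < 2 * ∫ r in Set.Ioi (0:ℝ), (a r + p) * (ψ r) ^ 2 * r) := by
  have hδ0 := hδ.1
  have hδ1 := hδ.2
  obtain ⟨ha', ha0, hai⟩ := gv_a hδ ha
  -- regularity
  have hC1 : ContDiffOn ℝ 1 (deriv ψ) (Ioi 0) :=
    hψC2.deriv_of_isOpen isOpen_Ioi (by norm_num)
  have hdψ : ∀ r > (0:ℝ), HasDerivAt ψ (deriv ψ r) r := fun r hr =>
    ((hψC2.differentiableOn (by norm_num)).differentiableAt (Ioi_mem_nhds hr)).hasDerivAt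
  have hdd : ∀ r > (0:ℝ), HasDerivAt (deriv ψ)
      (((a r + p) ^ 2 - lam) * ψ r - deriv ψ r / r) r := by
    intro r hr
    have h1 : HasDerivAt (deriv ψ) (deriv (deriv ψ) r) r :=
      ((hC1.differentiableOn (by norm_num)).differentiableAt (Ioi_mem_nhds hr)).hasDerivAt
    have h2 := ((hasDerivAt_id' r).mul h1).deriv
    have h3 := hψeq r hr
    have h4 : deriv (fun s => s * deriv ψ s) r = 1 * deriv ψ r + r * deriv (deriv ψ) r := h2
    rw [h4] at h3
    convert h1 using 1
    have h5 : deriv (deriv ψ) r = r⁻¹ * (r * deriv (deriv ψ) r) := by field_simp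
    have h6 : deriv ψ r / r = r⁻¹ * deriv ψ r := by field_simp
    rw [h6]
    linarith
  have hcψ : ContinuousOn ψ (Ioi 0) := hψC2.continuousOn
  have hcd : ContinuousOn (deriv ψ) (Ioi 0) := hC1.continuousOn
  have hca : ContinuousOn a (Ioi 0) := fun r hr => (ha' r hr).continuousAt.continuousWithinAt
  have hcr : ∀ x : ℝ, ContinuousOn (fun r : ℝ => r ^ x) (Ioi 0) := fun x r hr =>
    (Real.continuousAt_rpow_const r x (Or.inl (ne_of_gt hr))).continuousWithinAt
  -- behaviour at zero
  have hid0 : Tendsto (fun r : ℝ => r) (𝓝[>] 0) (𝓝 0) := nhdsWithin_le_nhds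
  have hdO : deriv ψ =O[𝓝[>] 0] fun r : ℝ => r ^ (1/2 : ℝ) := by
    have := hψ'zero (1/2) (by norm_num)
    norm_num at this ⊢
    exact this
  have hd0 : Tendsto (deriv ψ) (𝓝[>] 0) (𝓝 0) := hdO.trans_tendsto (gv_rpow0 (by norm_num))
  have hψO : ψ =O[𝓝[>] 0] fun _ : ℝ => (1:ℝ) := hψzero.isBigO_one ℝ
  have hsq : (fun r => ψ r ^ 2 - ψ₀ ^ 2) =O[𝓝[>] 0] fun r : ℝ => r ^ (3/2 : ℝ) := by
    have h1 := gv_hold (fun r hr => (hdψ r hr).differentiableAt) hψzero hdO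
    have h2 : (fun r => ψ r + ψ₀) =O[𝓝[>] 0] fun _ : ℝ => (1:ℝ) :=
      (hψzero.add_const ψ₀).isBigO_one ℝ
    refine (h1.mul h2).congr (fun r => by ring) (fun r => by ring)
  have hsq1 : Tendsto (fun r => (ψ r ^ 2 - ψ₀ ^ 2) / r) (𝓝[>] 0) (𝓝 0) := by
    have h1 := hsq.mul (isBigO_refl (fun r : ℝ => r⁻¹) (𝓝[>] 0))
    refine (h1.trans_tendsto ((gv_rpow0 (x := 1/2) (by norm_num)).congr' ?_)).congr
      fun r => by rw [div_eq_mul_inv]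
    filter_upwards [self_mem_nhdsWithin] with r hr
    have hr' : (0:ℝ) < r := hr
    rw [show (3/2 : ℝ) = 1/2 + 1 by norm_num, Real.rpow_add hr', Real.rpow_one]
    field_simp
  have hap0 : Tendsto (fun r => r ^ (1/2 : ℝ) * (a r + p)) (𝓝[>] 0) (𝓝 0) := by
    have := ha0.add ((gv_rpow0 (x := 1/2) (by norm_num)).mul_const p)
    simp only [zero_mul, add_zero] at this
    exact this.congr fun r => by ring
  have hhalf : ∀ r > (0:ℝ), r ^ (1/2 : ℝ) * r ^ (1/2 : ℝ) = r := fun r hr => by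
    rw [← Real.rpow_add hr]; norm_num
  have hRO : (fun r : ℝ => r ^ δ) =O[𝓝[>] 0] fun _ : ℝ => (1:ℝ) := by
    refine IsBigO.of_bound 1 ?_
    filter_upwards [Ioo_mem_nhdsGT (zero_lt_one (α := ℝ))] with r hr
    rw [Real.norm_of_nonneg (Real.rpow_nonneg hr.1.le _)]
    simpa using Real.rpow_le_one hr.1.le hr.2.le hδ0
  have hO12 : ∀ f : ℝ → ℝ, f =O[𝓝[>] 0] (fun _ : ℝ => (1:ℝ)) →
      f =O[𝓝[>] 0] fun r : ℝ => r ^ (-(1/2) : ℝ) := by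
    intro f hf
    refine hf.trans (IsBigO.of_bound 1 ?_)
    filter_upwards [Ioo_mem_nhdsGT (zero_lt_one (α := ℝ))] with r hr
    rw [Real.norm_of_nonneg (Real.rpow_nonneg hr.1.le _)]
    simpa using Real.one_le_rpow_of_pos_of_le_one_of_nonpos hr.1 hr.2.le (by norm_num)
  -- behaviour at infinity
  have hpi : ∀ n : ℕ, Tendsto (fun r => r ^ n * ψ r) atTop (𝓝 0) := gv_pow hψdec
  have hqi : ∀ n : ℕ, Tendsto (fun r => r ^ n * deriv ψ r) atTop (𝓝 0) := gv_pow hψ'dec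
  have hinf0 : Tendsto ψ atTop (𝓝 0) := by simpa using hpi 0
  have hapi : Tendsto (fun r => (a r + p) / r ^ 2) atTop (𝓝 0) := by
    have h2 : Tendsto (fun r : ℝ => p / r ^ 2) atTop (𝓝 0) :=
      tendsto_const_nhds.div_atTop (tendsto_pow_atTop (by norm_num))
    have := hai.add h2
    rw [add_zero] at this
    exact this.congr fun r => by rw [add_div]
  have hRi : (fun r : ℝ => r ^ δ / r) =O[atTop] fun _ : ℝ => (1:ℝ) := by
    refine IsBigO.of_bound 1 ?_
    filter_upwards [eventually_ge_atTop 1] with r hr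
    have hr0 : 0 < r := by linarith
    rw [Real.norm_of_nonneg (by positivity)]
    have : r ^ δ ≤ r := by simpa using Real.rpow_le_rpow_of_exponent_le hr hδ1
    simpa using (div_le_one hr0).2 this
  -- integrability
  have I1 : IntegrableOn (fun r => (a r + p) * ψ r ^ 2 * r) (Ioi 0) := by
    refine gv_int (α := 2) (by fun_prop) (by norm_num) (gv_O ?_) (hO12 _ ?_)
    · have := (hapi.mul (hpi 3)).mul (hpi 2)
      simp only [zero_mul] at this
      refine this.congr' ?_
      filter_upwards [eventually_gt_atTop 0] with r hr
      field_simp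
    · have h1 := (hap0.mul (gv_rpow0 (x := 1/2) (by norm_num))).mul (hψzero.pow 2)
      refine (h1.isBigO_one ℝ).congr' ?_ EventuallyEq.rfl
      filter_upwards [self_mem_nhdsWithin] with r hr
      have := hhalf r hr
      linear_combination (a r + p) * ψ r ^ 2 * this
  have I2 : IntegrableOn (fun r => r ^ δ * deriv ψ r ^ 2) (Ioi 0) := by
    refine gv_int (α := 2) ((hcr δ).mul (hcd.pow 2)) (by norm_num) (gv_O ?_) (hO12 _ ?_)
    · have h1 := (hqi 2).mul (hqi 1)
      rw [zero_mul] at h1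
      have h2 := hRi.mul (isBigO_refl (fun r => r ^ 2 * deriv ψ r * (r ^ 1 * deriv ψ r)) atTop)
      refine (h2.trans_tendsto (by simpa using h1)).congr' ?_
      filter_upwards [eventually_gt_atTop 0] with r hr
      field_simp
    · have h1 := hRO.mul ((hd0.pow 2).isBigO_one ℝ)
      simpa using h1
  have I3 : δ < 1 → IntegrableOn (fun r => r ^ (δ - 2) * (ψ r ^ 2 - ψ₀ ^ 2)) (Ioi 0) := by
    intro hlt
    refine gv_int (α := 2 - δ) ((hcr _).mul ((hcψ.pow 2).sub continuousOn_const)) (by linarith)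
      ?_ ?_
    · have h1 := (isBigO_refl (fun r : ℝ => r ^ (δ - 2)) atTop).mul
        (((hinf0.pow 2).sub_const (ψ₀ ^ 2)).isBigO_one ℝ)
      simpa using h1
    · have h1 := hRO.mul ((isBigO_refl (fun r : ℝ => r ^ (-2 : ℝ)) (𝓝[>] 0)).mul hsq)
      refine h1.congr' ?_ ?_
      · filter_upwards [self_mem_nhdsWithin] with r hr
        rw [← mul_assoc, ← Real.rpow_add hr]; rfl
      · filter_upwards [self_mem_nhdsWithin] with r hr
        rw [one_mul, ← Real.rpow_add hr]; norm_num
  have I3' : IntegrableOn (fun r => (1/2) * b₀⁻¹ * (1 - δ) ^ 2 * (1 + δ) *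
      (r ^ (δ - 2) * (ψ r ^ 2 - ψ₀ ^ 2))) (Ioi 0) := by
    rcases hδ1.lt_or_eq with hlt | heq
    · exact (I3 hlt).const_mul _
    · simp [heq]
  have I12 : IntegrableOn (fun r => 2 * ((a r + p) * ψ r ^ 2 * r)
      - 2 * b₀⁻¹ * δ * (r ^ δ * deriv ψ r ^ 2)) (Ioi 0) :=
    (I1.const_mul 2).sub (I2.const_mul _)
  have I123 : IntegrableOn (fun r => 2 * ((a r + p) * ψ r ^ 2 * r)
      - 2 * b₀⁻¹ * δ * (r ^ δ * deriv ψ r ^ 2)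
      + (1/2) * b₀⁻¹ * (1 - δ) ^ 2 * (1 + δ) * (r ^ (δ - 2) * (ψ r ^ 2 - ψ₀ ^ 2))) (Ioi 0) :=
    I12.add I3'
  -- the primitive
  have hF := gv_ftc (F := fun r => b₀⁻¹ * (r ^ δ * (r * ((a r + p) ^ 2 - lam) * ψ r ^ 2
        - r * deriv ψ r ^ 2 - (1 + δ) * (deriv ψ r * ψ r))
        - (1 + δ) * (1 - δ) / 2 * (r ^ δ / r * (ψ r ^ 2 - ψ₀ ^ 2))))
    (f := fun r => 2 * ((a r + p) * ψ r ^ 2 * r) - 2 * b₀⁻¹ * δ * (r ^ δ * deriv ψ r ^ 2)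
      + (1/2) * b₀⁻¹ * (1 - δ) ^ 2 * (1 + δ) * (r ^ (δ - 2) * (ψ r ^ 2 - ψ₀ ^ 2)))
    ?_ I123 ?_ ?_
  · have hmain : 2 * (∫ r in Set.Ioi (0:ℝ), (a r + p) * (ψ r) ^ 2 * r) =
        2 * b₀⁻¹ * δ * (∫ r in Set.Ioi (0:ℝ), r ^ δ * (deriv ψ r) ^ 2)
        - (1/2) * b₀⁻¹ * (1 - δ) ^ 2 * (1 + δ) *
            ∫ r in Set.Ioi (0:ℝ), r ^ (δ - 2) * ((ψ r) ^ 2 - ψ₀ ^ 2) := by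
      rw [integral_add I12 I3',
        integral_sub (I1.const_mul 2) (I2.const_mul _), integral_const_mul, integral_const_mul,
        integral_const_mul] at hF
      linarith
    refine ⟨hmain, fun h1 => ?_⟩
    rw [hmain]
    subst h1
    have hnn : 0 ≤ᵐ[volume.restrict (Ioi (0:ℝ))] fun r : ℝ => r ^ (1:ℝ) * deriv ψ r ^ 2 := by
      filter_upwards [ae_restrict_mem measurableSet_Ioi] with r hr
      have : (0:ℝ) < r := hr
      positivity
    have hge := integral_nonneg_of_ae hnn
    have hne : (∫ r in Ioi (0:ℝ), r ^ (1:ℝ) * deriv ψ r ^ 2) ≠ 0 := by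
      intro h0
      rw [integral_eq_zero_iff_of_nonneg_ae hnn I2] at h0
      have h2 : EqOn (fun r : ℝ => r ^ (1:ℝ) * deriv ψ r ^ 2) (fun _ => 0) (Ioi 0) :=
        Measure.eqOn_open_of_ae_eq h0 isOpen_Ioi ((hcr 1).mul (hcd.pow 2)) continuousOn_const
      have h3 : ∀ r > (0:ℝ), deriv ψ r = 0 := by
        intro r hr
        have := h2 hr
        simpa [hr.ne'] using this
      have h4 : ∀ r > (0:ℝ), ψ r = 0 := by
        intro r hr
        have hconst : ∀ s > (0:ℝ), ψ s = ψ r := fun s hs =>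
          (convex_Ioi (0:ℝ)).is_const_of_fderivWithin_eq_zero (𝕜 := ℝ)
            (fun x hx => (hdψ x hx).differentiableAt.differentiableWithinAt)
            (fun x hx => by
              have h := (hdψ x hx)
              rw [h3 x hx] at h
              have h' := h.hasFDerivAt.hasFDerivWithinAt (s := Ioi 0)
              rw [h'.fderivWithin (isOpen_Ioi.uniqueDiffWithinAt hx)]
              ext; simp) hs hr
        refine tendsto_nhds_unique (tendsto_const_nhds.congr' ?_) hinf0
        filter_upwards [eventually_gt_atTop 0] with s hs using (hconst s hs).symm
      rw [setIntegral_congr_fun (g := fun _ => (0:ℝ)) measurableSet_Ioi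
        (fun r hr => by simp [h4 r hr])] at hψnorm
      simp at hψnorm
    have hpos := lt_of_le_of_ne hge hne.symm
    have : 0 < 2 * b₀⁻¹ * 1 * ∫ r in Ioi (0:ℝ), r ^ (1:ℝ) * deriv ψ r ^ 2 := by positivity
    simpa using this
  · intro r hr
    have hR : HasDerivAt (fun r : ℝ => r ^ δ) (δ * (r ^ δ / r)) r := by
      have := Real.hasDerivAt_rpow_const (x := r) (p := δ) (Or.inl hr.ne')
      rwa [Real.rpow_sub_one hr.ne'] at this
    have hid := hasDerivAt_id' r
    have hψr := hdψ r hr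
    have hdr := hdd r hr
    have har := ha' r hr
    have h := (((hR.mul ((((hid.mul (((har.add_const p).pow 2).sub_const lam)).mul
      (hψr.pow 2)).sub (hid.mul (hdr.pow 2))).sub ((hdr.mul hψr).const_mul (1 + δ)))).sub
      (((hR.div hid hr.ne').mul ((hψr.pow 2).sub_const (ψ₀ ^ 2))).const_mul
        ((1 + δ) * (1 - δ) / 2))).const_mul b₀⁻¹)
    refine h.congr_deriv ?_
    have hRpos : 0 < r ^ δ := Real.rpow_pos_of_pos hr δ
    rw [Real.rpow_sub hr, Real.rpow_two]
    simp only [Pi.mul_apply, Pi.pow_apply, Pi.sub_apply, Pi.div_apply]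
    push_cast
    generalize r ^ δ = R at *
    field_simp
    ring
  · have g1 : Tendsto (fun r => r * ((a r + p) ^ 2 - lam) * ψ r ^ 2
        - r * deriv ψ r ^ 2 - (1 + δ) * (deriv ψ r * ψ r)
        - (1 + δ) * (1 - δ) / 2 * ((ψ r ^ 2 - ψ₀ ^ 2) / r)) (𝓝[>] 0) (𝓝 0) := by
      have h := (((((hap0.pow 2).sub (hid0.mul_const lam)).mul (hψzero.pow 2)).sub
        (hid0.mul (hd0.pow 2))).sub ((hd0.mul hψzero).const_mul (1 + δ))).sub
        (hsq1.const_mul ((1 + δ) * (1 - δ) / 2))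
      simp only [ne_eq, OfNat.ofNat_ne_zero, not_false_eq_true, zero_pow, zero_mul, mul_zero,
        sub_zero] at h
      refine h.congr' ?_
      filter_upwards [self_mem_nhdsWithin] with r hr
      have := hhalf r hr
      linear_combination (a r + p) ^ 2 * ψ r ^ 2 * this
    have g2 := hRO.mul (isBigO_refl (fun r => r * ((a r + p) ^ 2 - lam) * ψ r ^ 2
        - r * deriv ψ r ^ 2 - (1 + δ) * (deriv ψ r * ψ r)
        - (1 + δ) * (1 - δ) / 2 * ((ψ r ^ 2 - ψ₀ ^ 2) / r)) (𝓝[>] 0))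
    have g3 := (g2.trans_tendsto (by simpa using g1)).const_mul b₀⁻¹
    rw [mul_zero] at g3
    refine g3.congr fun r => ?_
    ring
  · have g1 : Tendsto (fun r => r * (r * ((a r + p) ^ 2 - lam) * ψ r ^ 2
        - r * deriv ψ r ^ 2 - (1 + δ) * (deriv ψ r * ψ r))) atTop (𝓝 0) := by
      have h := ((((hapi.mul (hpi 3)).pow 2).sub (((hpi 1).pow 2).const_mul lam)).sub
        ((hqi 1).pow 2)).sub (((hqi 1).mul hinf0).const_mul (1 + δ))
      simp only [ne_eq, OfNat.ofNat_ne_zero, not_false_eq_true, zero_pow, zero_mul, mul_zero,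
        sub_zero] at h
      refine h.congr' ?_
      filter_upwards [eventually_gt_atTop 0] with r hr
      field_simp
      try ring
    have g2 := hRi.mul (isBigO_refl (fun r => r * (r * ((a r + p) ^ 2 - lam) * ψ r ^ 2
        - r * deriv ψ r ^ 2 - (1 + δ) * (deriv ψ r * ψ r))) atTop)
    have g3 := g2.trans_tendsto (by simpa using g1)
    have g4 : Tendsto (fun r => (1 + δ) * (1 - δ) / 2 * (r ^ δ / r * (ψ r ^ 2 - ψ₀ ^ 2)))
        atTop (𝓝 0) := by
      rcases hδ1.lt_or_eq with hlt | heq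
      · have h1 := tendsto_rpow_neg_atTop (y := 1 - δ) (by linarith)
        have h2 := (h1.mul ((hinf0.pow 2).sub_const (ψ₀ ^ 2))).const_mul ((1 + δ) * (1 - δ) / 2)
        rw [zero_mul, mul_zero] at h2
        refine h2.congr' ?_
        filter_upwards [eventually_gt_atTop 0] with r hr
        rw [neg_sub, Real.rpow_sub_one hr.ne']
      · simp [heq]
    have g5 := (g3.sub g4).const_mul b₀⁻¹
    rw [sub_zero, mul_zero] at g5
    refine g5.congr' ?_
    filter_upwards [eventually_gt_atTop 0] with r hr
    field_simp
end
end
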